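/- The function (t,ρ) ↦ (1/N)·log E_N(t,ρ) is C^∞ on [0,1] × ℝ, and for every pair of nonnegative integers (a,b) with a + b ≤ 2, sup_{(t,ρ)∈[0,1]×ℝ} |∂_t^a ∂_ρ^b ((1/N)·log E_N(t,ρ))| → 0 as N → ∞; that is, (1/N)·log E_N → 0 uniformly in the C² topology on [0,1] × ℝ. (This is the toric reduction of the statement that on CP^1 the Bergman geodesic potentials φ_N(t,·) converge to the Monge–Ampère geodesic potential φ_t uniformly in the C² topology on [0,1] × CP^1.) -/

import Mathlib

open Set Filter

noncomputable def GP : ℝ → ℝ := fun x => x * Real.log x + (1 - x) * Real.log (1 - x)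

noncomputable def Gt (f0 f1 : ℝ → ℝ) (t : ℝ) : ℝ → ℝ :=
  fun x => GP x + ((1 - t) * f0 x + t * f1 x)

noncomputable def Phase (G : ℝ → ℝ) (α : ℝ) : ℝ → ℝ :=
  fun x => (x - α) * deriv G x - (G x - G α)

noncomputable def Qnorm (G : ℝ → ℝ) (N : ℕ) (α : ℝ) : ℝ :=
  2 * Real.pi * ∫ x in (0:ℝ)..1, Real.exp (-(N : ℝ) * Phase G α x)

noncomputable def RPhase (G : ℝ → ℝ) (α : ℝ) : ℝ → ℝ :=
  fun y => (1 / α) * Phase G α (α * (1 + y))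

noncomputable def Leg (G : ℝ → ℝ) (S : Set ℝ) : ℝ → ℝ :=
  fun ρ => sSup ((fun x => x * ρ - G x) '' S)

noncomputable def QQ (G : ℝ → ℝ) (N : ℕ) (α : ℝ) : ℝ :=
  Qnorm G N α * Real.exp ((N : ℝ) * G α)

noncomputable def Ecal (f0 f1 : ℝ → ℝ) (N : ℕ) (t ρ : ℝ) : ℝ :=
  ∑ k ∈ Finset.range (N + 1),
    Real.exp ((N:ℝ) * (((k:ℝ)/(N:ℝ)) * ρ - Leg (Gt f0 f1 t) (Set.Icc 0 1) ρ)) /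
      ((QQ (Gt f0 f1 0) N ((k:ℝ)/(N:ℝ))) ^ ((1:ℝ) - t) *
        (QQ (Gt f0 f1 1) N ((k:ℝ)/(N:ℝ))) ^ t)

/-! The norming constants `𝒬^N(k / N)` are, up to `2π`, the masses `M_k` of explicit measures on
`[0, 1]`, so `E_N` is, up to the factor `exp (-N U_t) / 2π`, the partition function of the Gibbs
weights `exp (k ρ - (1 - t) log M_k(f₀) - t log M_k(f₁))`. The derivatives of `(1 / N) log E_N` are
therefore means and `N` times covariances of `k / N` and of the discrete velocity
`(log M_k(f₁) - log M_k(f₀)) / N`, minus the corresponding derivatives of `U_t`, and they have to be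
estimated in the moment coordinate `x`, where `ρ = G_t'(x)`, uniformly up to the ends of `(0, 1)`.
In the interior the Gibbs weights concentrate at `x`; integration by parts against the norming
measures gives the growth of `M_{k+1} / M_k`, and summation by parts against the Gibbs weights turns
it into the variance `1 / (N G_t''(x))`. Near the ends the Cramér–Rao bound makes `M_{k+1} / M_k`
grow at a definite rate, and Chebyshev's inequality then bounds `N` times the variance of `k / N` by
a multiple of `min (e^ρ) (e^{-ρ})`, which like `1 / G_t''` is small there. -/

open MeasureTheory
open scoped ContDiff Topology

section Calculus

theorem abs_log_sub_log_le {a b m : ℝ} (hm : 0 < m) (ha : m ≤ a) (hb : m ≤ b) :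
    |Real.log a - Real.log b| ≤ |a - b| / m := by
  have one_sided : ∀ u v : ℝ, m ≤ u → m ≤ v → Real.log u - Real.log v ≤ |u - v| / m := by
    intro u v hu hv
    have hu0 : 0 < u := hm.trans_le hu
    have hv0 : 0 < v := hm.trans_le hv
    calc Real.log u - Real.log v = Real.log (u / v) := (Real.log_div hu0.ne' hv0.ne').symm
      _ ≤ u / v - 1 := Real.log_le_sub_one_of_pos (div_pos hu0 hv0)
      _ = (u - v) / v := by rw [div_sub_one hv0.ne']
      _ ≤ |u - v| / v := by gcongr; exact le_abs_self _
      _ ≤ |u - v| / m := by gcongr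
  refine abs_le'.2 ⟨one_sided a b ha hb, ?_⟩
  rw [neg_sub, abs_sub_comm]
  exact one_sided b a hb ha

theorem abs_sub_sub_deriv_mul_le {φ φ' φ'' : ℝ → ℝ} {s : Set ℝ} {B : ℝ} (hs : s.OrdConnected)
    (h1 : ∀ x ∈ s, HasDerivAt φ (φ' x) x) (h2 : ∀ x ∈ s, HasDerivAt φ' (φ'' x) x)
    (hB : ∀ x ∈ s, |φ'' x| ≤ B) {x y : ℝ} (hx : x ∈ s) (hy : y ∈ s) :
    |φ y - φ x - φ' x * (y - x)| ≤ B * (y - x) ^ 2 := by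
  have hsub : uIcc x y ⊆ s := hs.uIcc_subset hx hy
  have hB0 : 0 ≤ B := (abs_nonneg _).trans (hB x hx)
  have slope_le : ∀ z ∈ uIcc x y, ‖φ' z - φ' x‖ ≤ B * |y - x| := fun z hz ↦
    calc ‖φ' z - φ' x‖ ≤ B * ‖z - x‖ :=
          Convex.norm_image_sub_le_of_norm_hasDerivWithin_le
            (fun u hu ↦ (h2 u hu).hasDerivWithinAt) hB hs.convex hx (hsub hz)
      _ ≤ B * |y - x| := by gcongr; exact abs_sub_left_of_mem_uIcc hz
  have hderiv : ∀ u ∈ uIcc x y,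
      HasDerivWithinAt (fun z ↦ φ z - φ' x * z) (φ' u - φ' x) (uIcc x y) u := fun u hu ↦
    (((h1 u (hsub hu)).fun_sub ((hasDerivAt_id u).const_mul (φ' x))).congr_deriv
      (by ring)).hasDerivWithinAt
  calc |φ y - φ x - φ' x * (y - x)| = ‖φ y - φ' x * y - (φ x - φ' x * x)‖ := by
        rw [Real.norm_eq_abs]; congr 1; ring
    _ ≤ B * |y - x| * ‖y - x‖ :=
        Convex.norm_image_sub_le_of_norm_hasDerivWithin_le hderiv slope_le (convex_uIcc x y)
          left_mem_uIcc right_mem_uIcc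
    _ = B * (y - x) ^ 2 := by rw [Real.norm_eq_abs, mul_assoc, ← sq, sq_abs]

theorem exists_pos_bound_of_continuousOn_Icc {φ : ℝ → ℝ} {a b : ℝ}
    (hφ : ContinuousOn φ (Icc a b)) : ∃ B, 0 < B ∧ ∀ x ∈ Icc a b, |φ x| ≤ B := by
  obtain ⟨B, hB⟩ := isCompact_Icc.exists_bound_of_continuousOn hφ
  exact ⟨max B 1, by positivity, fun x hx ↦ (hB x hx).trans (le_max_left _ _)⟩

variable {f : ℝ → ℝ}

theorem contDiff_deriv (hf : ContDiff ℝ ∞ f) : ContDiff ℝ ∞ (deriv f) :=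
  (contDiff_infty_iff_deriv.1 hf).2

theorem hasDerivAt_of_contDiff (hf : ContDiff ℝ ∞ f) (x : ℝ) : HasDerivAt f (deriv f x) x :=
  ((contDiff_infty_iff_deriv.1 hf).1 x).hasDerivAt

theorem exists_taylor_bound {s : Set ℝ} (hs : IsOpen s) (hf : ContDiffOn ℝ ∞ f s) {a b : ℝ}
    (hab : Icc a b ⊆ s) : ∃ B, 0 < B ∧ (∀ x ∈ Icc a b, |deriv f x| ≤ B) ∧
    ∀ x ∈ Icc a b, ∀ y ∈ Icc a b, |f y - f x - deriv f x * (y - x)| ≤ B * (y - x) ^ 2 := by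
  obtain ⟨hdiff, hf'⟩ := (contDiffOn_infty_iff_deriv_of_isOpen hs).1 hf
  obtain ⟨hdiff', hf''⟩ := (contDiffOn_infty_iff_deriv_of_isOpen hs).1 hf'
  have hasDeriv {g : ℝ → ℝ} (hg : DifferentiableOn ℝ g s) (x : ℝ) (hx : x ∈ Icc a b) :
      HasDerivAt g (deriv g x) x := (hg.differentiableAt (hs.mem_nhds (hab hx))).hasDerivAt
  obtain ⟨B₁, hB₁, bound₁⟩ := exists_pos_bound_of_continuousOn_Icc (hf'.continuousOn.mono hab)
  obtain ⟨B₂, hB₂, bound₂⟩ := exists_pos_bound_of_continuousOn_Icc (hf''.continuousOn.mono hab)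
  refine ⟨B₁ + B₂, by positivity, fun x hx ↦ by linarith [bound₁ x hx], fun x hx y hy ↦ ?_⟩
  calc |f y - f x - deriv f x * (y - x)| ≤ B₂ * (y - x) ^ 2 :=
        abs_sub_sub_deriv_mul_le ordConnected_Icc (hasDeriv hdiff) (hasDeriv hdiff') bound₂ hx hy
    _ ≤ (B₁ + B₂) * (y - x) ^ 2 := by gcongr; linarith

end Calculus

/-! ### Potentials on `[0, 1]` -/

/-- The ratio `G'' / G_P'' = x (1 - x) G''(x)` for `G = G_P + f`; unlike `G''` it extends smoothly
to the endpoints, where it equals `1`. -/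
noncomputable def hessRatio (f : ℝ → ℝ) (x : ℝ) : ℝ := 1 + x * (1 - x) * deriv (deriv f) x

/-- Smooth perturbations `f` of `G_P` with quantitative convexity `x (1 - x) (G_P + f)'' ≥ c` and
`C³` bounds on `[0, 1]`; all asymptotic estimates are uniform given `c` and `K`. -/
structure IsAdmissible (f : ℝ → ℝ) (c K : ℝ) : Prop where
  contDiff : ContDiff ℝ ∞ f
  c_pos : 0 < c
  one_le_K : 1 ≤ K
  le_hessRatio : ∀ x ∈ Icc (0 : ℝ) 1, c ≤ hessRatio f x
  abs_deriv_le : ∀ x ∈ Icc (0 : ℝ) 1, |deriv f x| ≤ K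
  abs_deriv2_le : ∀ x ∈ Icc (0 : ℝ) 1, |deriv (deriv f) x| ≤ K
  abs_deriv3_le : ∀ x ∈ Icc (0 : ℝ) 1, |deriv (deriv (deriv f)) x| ≤ K

section HessRatio

variable {f : ℝ → ℝ} {c K x : ℝ}

theorem mul_one_sub_mem_Icc (hx : x ∈ Icc (0 : ℝ) 1) : x * (1 - x) ∈ Icc (0 : ℝ) 1 :=
  ⟨mul_nonneg hx.1 (sub_nonneg.2 hx.2), by nlinarith [hx.1, hx.2]⟩

theorem abs_one_sub_two_mul_le (hx : x ∈ Icc (0 : ℝ) 1) : |1 - 2 * x| ≤ 1 :=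
  abs_le.2 ⟨by linarith [hx.2], by linarith [hx.1]⟩

theorem contDiff_hessRatio (hf : ContDiff ℝ ∞ f) : ContDiff ℝ ∞ (hessRatio f) := by
  have := contDiff_deriv (contDiff_deriv hf)
  unfold hessRatio
  fun_prop

theorem deriv_hessRatio (hf : ContDiff ℝ ∞ f) (x : ℝ) :
    deriv (hessRatio f) x =
      (1 - 2 * x) * deriv (deriv f) x + x * (1 - x) * deriv (deriv (deriv f)) x := by
  have hf3 := hasDerivAt_of_contDiff (contDiff_deriv (contDiff_deriv hf)) x
  have := (((hasDerivAt_id x).fun_mul ((hasDerivAt_id x).const_sub 1)).fun_mul hf3).const_add 1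
  refine HasDerivAt.deriv (this.congr_deriv ?_)
  simp only [id]
  ring

theorem hessRatio_zero (f : ℝ → ℝ) : hessRatio f 0 = 1 := by simp [hessRatio]

namespace IsAdmissible

variable (h : IsAdmissible f c K)
include h

theorem c_le_one : c ≤ 1 := hessRatio_zero f ▸ h.le_hessRatio 0 (by simp)

theorem hessRatio_pos (hx : x ∈ Icc (0 : ℝ) 1) : 0 < hessRatio f x :=
  h.c_pos.trans_le (h.le_hessRatio x hx)

theorem abs_hessRatio_le (hx : x ∈ Icc (0 : ℝ) 1) : |hessRatio f x| ≤ 1 + K := by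
  obtain ⟨hw0, hw1⟩ := mul_one_sub_mem_Icc hx
  calc |1 + x * (1 - x) * deriv (deriv f) x|
      ≤ |(1 : ℝ)| + |x * (1 - x) * deriv (deriv f) x| := abs_add_le _ _
    _ = 1 + x * (1 - x) * |deriv (deriv f) x| := by rw [abs_one, abs_mul, abs_of_nonneg hw0]
    _ ≤ 1 + 1 * K := by gcongr; exact h.abs_deriv2_le x hx
    _ = 1 + K := by rw [one_mul]

theorem abs_deriv_hessRatio_le (hx : x ∈ Icc (0 : ℝ) 1) : |deriv (hessRatio f) x| ≤ 2 * K := by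
  obtain ⟨hw0, hw1⟩ := mul_one_sub_mem_Icc hx
  rw [deriv_hessRatio h.contDiff]
  calc _ ≤ |1 - 2 * x| * |deriv (deriv f) x| + x * (1 - x) * |deriv (deriv (deriv f)) x| := by
        refine (abs_add_le _ _).trans_eq ?_
        rw [abs_mul, abs_mul, abs_of_nonneg hw0]
    _ ≤ 1 * K + 1 * K := by
        gcongr
        · exact abs_one_sub_two_mul_le hx
        · exact h.abs_deriv2_le x hx
        · exact h.abs_deriv3_le x hx
    _ = 2 * K := by ring

end IsAdmissible

end HessRatio

/-! ### The norming measures -/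

/-- For `G = G_P + f` this is `exp (N (G x - (x - k / N) G' x))`, the integrand of
`𝒬^N(k / N) / 2π`. -/
noncomputable def weight (f : ℝ → ℝ) (N k : ℕ) (x : ℝ) : ℝ :=
  x ^ k * (1 - x) ^ (N - k) * Real.exp (N * f x - (N * x - k) * deriv f x)

/-- The measure on `[0, 1]` with density `weight f N k`. -/
noncomputable def weightMeasure (f : ℝ → ℝ) (N k : ℕ) : Measure ℝ :=
  (volume.restrict (Icc 0 1)).withDensity fun x ↦ ENNReal.ofReal (weight f N k x)

/-- The total mass of `weightMeasure f N k`; it equals `𝒬^N(k / N) / 2π`. -/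
noncomputable def weightMass (f : ℝ → ℝ) (N k : ℕ) : ℝ := (weightMeasure f N k).real univ

/-- The density of `weightMeasure f N (k + 1)` with respect to `weightMeasure f N k`. -/
noncomputable def odds (f : ℝ → ℝ) (x : ℝ) : ℝ := x / (1 - x) * Real.exp (deriv f x)

/-- Minus the logarithmic derivative of `x (1 - x) weight f N k x` times `x (1 - x)`: the function
through which integration by parts against `weightMeasure f N k` is expressed. -/
noncomputable def score (f : ℝ → ℝ) (N k : ℕ) (x : ℝ) : ℝ :=
  (N * x - k) * hessRatio f x - (1 - 2 * x)

section WeightMeasure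

variable {f : ℝ → ℝ} {N k : ℕ} {φ ψ : ℝ → ℝ} {x : ℝ}

theorem continuous_weight (hf : ContDiff ℝ ∞ f) (N k : ℕ) : Continuous (weight f N k) := by
  have := hf.continuous
  have := (contDiff_deriv hf).continuous
  unfold weight
  fun_prop

theorem weight_nonneg (f : ℝ → ℝ) (N k : ℕ) (hx : x ∈ Icc (0 : ℝ) 1) : 0 ≤ weight f N k x := by
  have := hx.1
  have := sub_nonneg.2 hx.2
  unfold weight
  positivity

theorem weight_pos (f : ℝ → ℝ) (N k : ℕ) (hx : x ∈ Ioo (0 : ℝ) 1) : 0 < weight f N k x := by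
  have := hx.1
  have := sub_pos.2 hx.2
  unfold weight
  positivity

theorem weight_succ (hk : k < N) (hx : x ≠ 1) :
    weight f N (k + 1) x = weight f N k x * odds f x := by
  have hx' : 1 - x ≠ 0 := sub_ne_zero.2 hx.symm
  have hexp : Real.exp (N * f x - (N * x - (k + 1 : ℕ)) * deriv f x) =
      Real.exp (N * f x - (N * x - k) * deriv f x) * Real.exp (deriv f x) := by
    rw [← Real.exp_add]; congr 1; push_cast; ring
  simp only [weight, odds]
  rw [hexp, show N - k = N - (k + 1) + 1 by omega]
  field_simp
  ring

theorem ae_mem_Ico_weightMeasure (f : ℝ → ℝ) (N k : ℕ) :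
    ∀ᵐ x ∂weightMeasure f N k, x ∈ Ico (0 : ℝ) 1 := by
  refine (withDensity_absolutelyContinuous _ _).ae_le ?_
  rw [restrict_Ico_eq_restrict_Icc.symm]
  exact ae_restrict_mem measurableSet_Ico

theorem ae_weightMeasure_of_forall_mem_Icc {p : ℝ → Prop} (hp : ∀ x ∈ Icc (0 : ℝ) 1, p x) :
    ∀ᵐ x ∂weightMeasure f N k, p x :=
  (ae_mem_Ico_weightMeasure f N k).mono fun x hx ↦ hp x (Ico_subset_Icc_self hx)

theorem integrable_weightMeasure_iff (hf : ContDiff ℝ ∞ f) :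
    Integrable φ (weightMeasure f N k) ↔
      IntegrableOn (fun x ↦ weight f N k x * φ x) (Icc 0 1) := by
  rw [weightMeasure, integrable_withDensity_iff_integrable_smul'
    (continuous_weight hf N k).measurable.ennreal_ofReal (by simp)]
  refine integrable_congr ?_
  filter_upwards [ae_restrict_mem measurableSet_Icc] with x hx
  rw [ENNReal.toReal_ofReal (weight_nonneg f N k hx), smul_eq_mul]

theorem integrable_weightMeasure (hf : ContDiff ℝ ∞ f) (hφ : ContinuousOn φ (Icc 0 1)) :
    Integrable φ (weightMeasure f N k) :=
  (integrable_weightMeasure_iff hf).2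
    (((continuous_weight hf N k).continuousOn.mul hφ).integrableOn_compact isCompact_Icc)

theorem integral_weightMeasure (hf : ContDiff ℝ ∞ f) (N k : ℕ) (φ : ℝ → ℝ) :
    ∫ x, φ x ∂weightMeasure f N k = ∫ x in (0 : ℝ)..1, weight f N k x * φ x := by
  rw [weightMeasure, integral_withDensity_eq_integral_toReal_smul₀
    (continuous_weight hf N k).measurable.ennreal_ofReal.aemeasurable (by simp),
    intervalIntegral.integral_of_le zero_le_one, ← integral_Icc_eq_integral_Ioc]
  refine setIntegral_congr_fun measurableSet_Icc fun x hx ↦ ?_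
  simp only [ENNReal.toReal_ofReal (weight_nonneg f N k hx), smul_eq_mul]

theorem integral_const_weightMeasure (f : ℝ → ℝ) (N k : ℕ) (a : ℝ) :
    ∫ _, a ∂weightMeasure f N k = a * weightMass f N k := by
  rw [integral_const, smul_eq_mul, mul_comm, weightMass]

theorem weightMass_eq_integral (hf : ContDiff ℝ ∞ f) (N k : ℕ) :
    weightMass f N k = ∫ x in (0 : ℝ)..1, weight f N k x := by
  simpa [weightMass] using integral_weightMeasure hf N k fun _ ↦ 1

theorem weightMass_pos (hf : ContDiff ℝ ∞ f) (N k : ℕ) : 0 < weightMass f N k := by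
  rw [weightMass_eq_integral hf]
  exact intervalIntegral.intervalIntegral_pos_of_pos_on
    ((continuous_weight hf N k).intervalIntegrable _ _) (fun x hx ↦ weight_pos f N k hx) one_pos

theorem integral_weightMeasure_mono (hf : ContDiff ℝ ∞ f) (hφ : ContinuousOn φ (Icc 0 1))
    (hψ : ContinuousOn ψ (Icc 0 1)) (hle : ∀ x ∈ Icc (0 : ℝ) 1, φ x ≤ ψ x) :
    ∫ x, φ x ∂weightMeasure f N k ≤ ∫ x, ψ x ∂weightMeasure f N k :=
  integral_mono_ae (integrable_weightMeasure hf hφ) (integrable_weightMeasure hf hψ)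
    (ae_weightMeasure_of_forall_mem_Icc hle)

theorem integral_weightMeasure_le (hf : ContDiff ℝ ∞ f) (hφ : ContinuousOn φ (Icc 0 1)) {C : ℝ}
    (hle : ∀ x ∈ Icc (0 : ℝ) 1, φ x ≤ C) :
    ∫ x, φ x ∂weightMeasure f N k ≤ C * weightMass f N k :=
  (integral_weightMeasure_mono hf hφ continuousOn_const hle).trans_eq
    (integral_const_weightMeasure f N k C)

theorem abs_integral_weightMeasure_le (hf : ContDiff ℝ ∞ f) {C : ℝ}
    (hle : ∀ x ∈ Icc (0 : ℝ) 1, |φ x| ≤ C) :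
    |∫ x, φ x ∂weightMeasure f N k| ≤ C * weightMass f N k := by
  have : IsFiniteMeasure (weightMeasure f N k) :=
    (integrable_const_iff_isFiniteMeasure one_ne_zero).1
      (integrable_weightMeasure hf (φ := fun _ ↦ (1 : ℝ)) continuousOn_const)
  exact norm_integral_le_of_norm_le_const
    (ae_weightMeasure_of_forall_mem_Icc (p := fun x ↦ ‖φ x‖ ≤ C) hle)

theorem weight_succ_mul_ae_eq (f : ℝ → ℝ) (hk : k < N) (φ : ℝ → ℝ) :
    (fun x ↦ weight f N (k + 1) x * φ x) =ᵐ[volume.restrict (Icc 0 1)]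
      fun x ↦ weight f N k x * (odds f x * φ x) := by
  rw [restrict_Ico_eq_restrict_Icc.symm]
  filter_upwards [ae_restrict_mem measurableSet_Ico] with x hx
  rw [weight_succ hk hx.2.ne, mul_assoc]

theorem integrable_odds_mul (hf : ContDiff ℝ ∞ f) (hk : k < N)
    (hφ : Integrable φ (weightMeasure f N (k + 1))) :
    Integrable (fun x ↦ odds f x * φ x) (weightMeasure f N k) :=
  (integrable_weightMeasure_iff hf).2
    (((integrable_weightMeasure_iff hf).1 hφ).congr (weight_succ_mul_ae_eq f hk φ))

theorem integral_odds_mul (hf : ContDiff ℝ ∞ f) (hk : k < N) (φ : ℝ → ℝ) :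
    ∫ x, odds f x * φ x ∂weightMeasure f N k = ∫ x, φ x ∂weightMeasure f N (k + 1) := by
  simp only [integral_weightMeasure hf, intervalIntegral.integral_of_le zero_le_one,
    ← integral_Icc_eq_integral_Ioc]
  exact integral_congr_ae (weight_succ_mul_ae_eq f hk φ).symm

theorem integral_id_weightMeasure (hf : ContDiff ℝ ∞ f) (hk : k < N) :
    ∫ x, x ∂weightMeasure f N k =
      ∫ x, (1 - x) * Real.exp (-deriv f x) ∂weightMeasure f N (k + 1) := by
  rw [← integral_odds_mul hf hk]
  refine integral_congr_ae ?_
  filter_upwards [ae_mem_Ico_weightMeasure f N k] with x hx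
  have : 1 - x ≠ 0 := (sub_pos.2 hx.2).ne'
  rw [odds, Real.exp_neg]
  field_simp

theorem hasDerivAt_mul_weight (hf : ContDiff ℝ ∞ f) (hk : k ≤ N) (x : ℝ) :
    HasDerivAt (fun x ↦ x * (1 - x) * weight f N k x) (-(weight f N k x * score f N k x)) x := by
  obtain ⟨m, rfl⟩ := Nat.exists_eq_add_of_le hk
  have hpow := (hasDerivAt_pow (k + 1) x).fun_mul
    (((hasDerivAt_id x).const_sub 1).fun_pow (m + 1))
  have hexp := (((hasDerivAt_of_contDiff hf x).const_mul ((k + m : ℕ) : ℝ)).fun_sub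
    ((((hasDerivAt_id x).const_mul ((k + m : ℕ) : ℝ)).sub_const (k : ℝ)).fun_mul
      (hasDerivAt_of_contDiff (contDiff_deriv hf) x))).exp
  refine ((hpow.fun_mul hexp).congr_deriv ?_).congr_of_eventuallyEq (.of_forall fun y ↦ ?_)
  · simp only [id, weight, score, hessRatio, Nat.add_sub_cancel_left]
    push_cast
    ring
  · simp only [id, weight, Nat.add_sub_cancel_left]
    ring

theorem contDiff_score (hf : ContDiff ℝ ∞ f) (N k : ℕ) : ContDiff ℝ ∞ (score f N k) := by
  have := contDiff_hessRatio hf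
  unfold score
  fun_prop

theorem integral_score_mul (hf : ContDiff ℝ ∞ f) (hk : k ≤ N) {φ' : ℝ → ℝ}
    (hφ' : ContinuousOn φ' (Icc 0 1)) (hderiv : ∀ x ∈ Icc (0 : ℝ) 1, HasDerivAt φ (φ' x) x) :
    ∫ x, score f N k x * φ x ∂weightMeasure f N k =
      ∫ x, x * (1 - x) * φ' x ∂weightMeasure f N k := by
  have hscore := (contDiff_score hf N k).continuous
  have hweight := continuous_weight hf N k
  have by_parts := intervalIntegral.integral_mul_deriv_eq_deriv_mul (a := 0) (b := 1)
    (u := fun x ↦ x * (1 - x) * weight f N k x) (v := φ) (v' := φ')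
    (fun x _ ↦ hasDerivAt_mul_weight hf hk x) (by rwa [uIcc_of_le zero_le_one])
    (Continuous.intervalIntegrable (by fun_prop) _ _)
    (ContinuousOn.intervalIntegrable (by rwa [uIcc_of_le zero_le_one]))
  rw [integral_weightMeasure hf, integral_weightMeasure hf]
  calc ∫ x in (0 : ℝ)..1, weight f N k x * (score f N k x * φ x)
      = -∫ x in (0 : ℝ)..1, -(weight f N k x * score f N k x) * φ x := by
        rw [← intervalIntegral.integral_neg]; congr 1; ext x; ring
    _ = ∫ x in (0 : ℝ)..1, x * (1 - x) * weight f N k x * φ' x := by rw [by_parts]; simp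
    _ = ∫ x in (0 : ℝ)..1, weight f N k x * (x * (1 - x) * φ' x) := by congr 1; ext x; ring

theorem integral_score (hf : ContDiff ℝ ∞ f) (hk : k ≤ N) :
    ∫ x, score f N k x ∂weightMeasure f N k = 0 := by
  simpa using integral_score_mul hf hk (φ := fun _ ↦ 1) continuousOn_const
    fun x _ ↦ hasDerivAt_const x 1

end WeightMeasure

/-- The ratio of consecutive norming constants. -/
noncomputable def massRatio (f : ℝ → ℝ) (N k : ℕ) : ℝ := weightMass f N (k + 1) / weightMass f N k

/-- `N` times a lower bound for the increments of `massRatio f N` when `f` is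
`IsAdmissible f c K`. -/
noncomputable def ratioGap (c K : ℝ) : ℝ := c ^ 2 / (6 * K * Real.exp K)

/-- The derivative on `(0, 1)` of the symplectic potential `G_P + f`; it maps `(0, 1)` onto `ℝ`. -/
noncomputable def symplecticGradient (f : ℝ → ℝ) (x : ℝ) : ℝ :=
  Real.log x - Real.log (1 - x) + deriv f x

-- The integral of `(u - m - s S)²`, with `m` the mean of `u`, is nonnegative.
theorem two_mul_integral_mul_sub_le {Ω : Type*} [MeasurableSpace Ω] {μ : Measure Ω}
    [IsFiniteMeasure μ] {u S : Ω → ℝ} (hμ : 0 < μ.real univ) (hu : MemLp u 2 μ) (hS : MemLp S 2 μ)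
    (hS0 : ∫ x, S x ∂μ = 0) (s : ℝ) :
    2 * s * ∫ x, u x * S x ∂μ - s ^ 2 * ∫ x, S x ^ 2 ∂μ ≤
      ∫ x, u x ^ 2 ∂μ - (∫ x, u x ∂μ) ^ 2 / μ.real univ := by
  set m := (∫ x, u x ∂μ) / μ.real univ with hm
  have hu1 := hu.integrable one_le_two
  have hS1 := hS.integrable one_le_two
  have hu2 := hu.integrable_sq
  have hS2 := hS.integrable_sq
  have huS : Integrable (fun x ↦ u x * S x) μ := hu.integrable_mul hS
  have expand : ∫ x, (u x - m - s * S x) ^ 2 ∂μ = ∫ x, u x ^ 2 ∂μ - 2 * s * ∫ x, u x * S x ∂μ +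
      s ^ 2 * ∫ x, S x ^ 2 ∂μ - 2 * m * ∫ x, u x ∂μ + m ^ 2 * μ.real univ := by
    calc ∫ x, (u x - m - s * S x) ^ 2 ∂μ
        = ∫ x, (u x ^ 2 - 2 * s * (u x * S x) + s ^ 2 * S x ^ 2 - 2 * m * u x +
            2 * m * s * S x + m ^ 2) ∂μ := by congr 1; ext x; ring
      _ = _ := by
        rw [integral_add, integral_add, integral_sub, integral_add, integral_sub]
        · simp only [integral_const_mul, hS0, integral_const, smul_eq_mul]
          ring
        all_goals fun_prop
  have nonneg : 0 ≤ ∫ x, (u x - m - s * S x) ^ 2 ∂μ := integral_nonneg fun x ↦ sq_nonneg _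
  have complete : (∫ x, u x ∂μ) ^ 2 / μ.real univ =
      2 * m * ∫ x, u x ∂μ - m ^ 2 * μ.real univ := by rw [hm]; field_simp; ring
  linarith

section MassRatio

variable {f : ℝ → ℝ} {c K : ℝ} {N k : ℕ}

theorem isFiniteMeasure_weightMeasure (hf : ContDiff ℝ ∞ f) (N k : ℕ) :
    IsFiniteMeasure (weightMeasure f N k) :=
  (integrable_const_iff_isFiniteMeasure one_ne_zero).1
    (integrable_weightMeasure hf (φ := fun _ ↦ (1 : ℝ)) continuousOn_const)

theorem integral_odds (hf : ContDiff ℝ ∞ f) (hk : k < N) :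
    ∫ x, odds f x ∂weightMeasure f N k = weightMass f N (k + 1) := by
  simpa [weightMass] using integral_odds_mul hf hk fun _ ↦ 1

theorem integrable_odds (hf : ContDiff ℝ ∞ f) (hk : k < N) :
    Integrable (odds f) (weightMeasure f N k) := by
  simpa using integrable_odds_mul hf hk
    (integrable_weightMeasure hf (φ := fun _ ↦ (1 : ℝ)) continuousOn_const)

theorem memLp_odds (hf : ContDiff ℝ ∞ f) (hk : k + 1 < N) :
    MemLp (odds f) 2 (weightMeasure f N k) := by
  have hk' : k < N := by omega
  refine (memLp_two_iff_integrable_sq (integrable_odds hf hk').aestronglyMeasurable).2 ?_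
  simpa only [sq] using integrable_odds_mul hf hk' (integrable_odds hf hk)

theorem integral_odds_sq (hf : ContDiff ℝ ∞ f) (hk : k + 1 < N) :
    ∫ x, odds f x ^ 2 ∂weightMeasure f N k = weightMass f N (k + 2) := by
  simp only [sq]
  rw [integral_odds_mul hf (by omega) (odds f), integral_odds hf hk]

theorem memLp_score (hf : ContDiff ℝ ∞ f) (N k : ℕ) :
    MemLp (score f N k) 2 (weightMeasure f N k) := by
  have hscore := (contDiff_score hf N k).continuous
  have hint : Integrable (score f N k) (weightMeasure f N k) :=
    integrable_weightMeasure hf hscore.continuousOn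
  exact (memLp_two_iff_integrable_sq hint.aestronglyMeasurable).2
    (integrable_weightMeasure hf (hscore.pow 2).continuousOn)

theorem hasDerivAt_score (hf : ContDiff ℝ ∞ f) (N k : ℕ) (x : ℝ) : HasDerivAt (score f N k)
    (N * hessRatio f x + (N * x - k) * deriv (hessRatio f) x + 2) x :=
  (((((hasDerivAt_id x).const_mul (N : ℝ)).sub_const (k : ℝ)).fun_mul
    (hasDerivAt_of_contDiff (contDiff_hessRatio hf) x)).fun_sub
    (((hasDerivAt_id x).const_mul 2).const_sub 1)).congr_deriv (by simp only [id]; ring)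

theorem abs_mul_sub_natCast_le {x : ℝ} (hk : k ≤ N) (hx : x ∈ Icc (0 : ℝ) 1) :
    |N * x - k| ≤ N := by
  have hkN : (k : ℝ) ≤ N := by exact_mod_cast hk
  have hNx : N * x ≤ N := mul_le_of_le_one_right N.cast_nonneg hx.2
  have hNx0 : 0 ≤ N * x := mul_nonneg N.cast_nonneg hx.1
  exact abs_le.2 ⟨by linarith, by linarith [k.cast_nonneg (α := ℝ)]⟩

namespace IsAdmissible

variable (h : IsAdmissible f c K)
include h

theorem integral_id_le (hk : k < N) :
    ∫ x, x ∂weightMeasure f N k ≤ Real.exp K * weightMass f N (k + 1) := by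
  have := (contDiff_deriv h.contDiff).continuous
  rw [integral_id_weightMeasure h.contDiff hk]
  refine integral_weightMeasure_le h.contDiff (by fun_prop) fun x hx ↦ ?_
  calc (1 - x) * Real.exp (-deriv f x) ≤ 1 * Real.exp K := by
        gcongr
        · linarith [hx.1]
        · linarith [(abs_le.1 (h.abs_deriv_le x hx)).1]
    _ = Real.exp K := one_mul _

theorem le_integral_odds_mul_score (hk : k < N) :
    c * weightMass f N (k + 1) ≤ ∫ x, odds f x * score f N k x ∂weightMeasure f N k := by
  have hf := h.contDiff
  have hκ := (contDiff_hessRatio hf).continuous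
  have hscore := (contDiff_score hf N (k + 1)).continuous
  have score_succ : score f N k = fun x ↦ score f N (k + 1) x + hessRatio f x := by
    ext x; simp only [score]; push_cast; ring
  rw [integral_odds_mul hf hk, score_succ, integral_add
    (integrable_weightMeasure hf hscore.continuousOn)
    (integrable_weightMeasure hf hκ.continuousOn), integral_score hf hk, zero_add,
    ← integral_const_weightMeasure]
  exact integral_weightMeasure_mono hf continuousOn_const hκ.continuousOn h.le_hessRatio

theorem integral_score_sq_le (hk : k < N) :
    ∫ x, score f N k x ^ 2 ∂weightMeasure f N k ≤
      6 * K * N * Real.exp K * weightMass f N (k + 1) := by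
  have hf := h.contDiff
  have hK := h.one_le_K
  have hN : (1 : ℝ) ≤ N := by exact_mod_cast (by omega : 1 ≤ N)
  have hκ := (contDiff_hessRatio hf).continuous
  have hκ' := (contDiff_deriv (contDiff_hessRatio hf)).continuous
  set S' := fun x ↦ N * hessRatio f x + (N * x - k) * deriv (hessRatio f) x + 2
  have S'_le : ∀ x ∈ Icc (0 : ℝ) 1, S' x ≤ 6 * K * N := fun x hx ↦
    calc S' x ≤ N * (1 + K) + N * (2 * K) + 2 := by
          have hx₁ := (le_abs_self _).trans (h.abs_hessRatio_le hx)
          have hx₂ : (N * x - k) * deriv (hessRatio f) x ≤ N * (2 * K) :=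
            calc _ ≤ |N * x - k| * |deriv (hessRatio f) x| :=
                  (le_abs_self _).trans_eq (abs_mul _ _)
              _ ≤ N * (2 * K) := by
                  gcongr
                  · exact abs_mul_sub_natCast_le hk.le hx
                  · exact h.abs_deriv_hessRatio_le hx
          simp only [S']
          gcongr
      _ ≤ 6 * K * N := by nlinarith
  calc ∫ x, score f N k x ^ 2 ∂weightMeasure f N k
      = ∫ x, x * (1 - x) * S' x ∂weightMeasure f N k := by
        simp only [sq]
        exact integral_score_mul hf hk.le (by fun_prop) fun x _ ↦ hasDerivAt_score hf N k x
    _ ≤ ∫ x, 6 * K * N * x ∂weightMeasure f N k := by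
        refine integral_weightMeasure_mono hf (by fun_prop) (by fun_prop) fun x hx ↦ ?_
        calc x * (1 - x) * S' x ≤ x * (1 - x) * (6 * K * N) :=
              mul_le_mul_of_nonneg_left (S'_le x hx) (mul_one_sub_mem_Icc hx).1
          _ ≤ x * (6 * K * N) := by
              gcongr; exact mul_le_of_le_one_right hx.1 (by linarith [hx.1])
          _ = 6 * K * N * x := mul_comm _ _
    _ ≤ 6 * K * N * (Real.exp K * weightMass f N (k + 1)) := by
        rw [integral_const_mul]; gcongr; exact h.integral_id_le hk
    _ = 6 * K * N * Real.exp K * weightMass f N (k + 1) := by ring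

-- Quantitative log-convexity of the norming constants: the Cramér–Rao bound for the variance of
-- `odds f` under `weightMeasure f N k`.
theorem massRatio_add_le (hk : k + 1 < N) :
    massRatio f N k + ratioGap c K / N ≤ massRatio f N (k + 1) := by
  have hf := h.contDiff
  have hK := h.one_le_K
  have hM₀ := weightMass_pos hf N k
  have hM₁ := weightMass_pos hf N (k + 1)
  have hN : (0 : ℝ) < N := by exact_mod_cast (by omega : 0 < N)
  have := isFiniteMeasure_weightMeasure hf N k
  set D := 6 * K * N * Real.exp K with hD
  have hD0 : 0 < D := by positivity
  have cramer_rao := two_mul_integral_mul_sub_le hM₀ (memLp_odds hf hk) (memLp_score hf N k)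
    (integral_score hf (by omega)) (c / D)
  rw [integral_odds_sq hf hk, integral_odds hf (by omega)] at cramer_rao
  have gap : c ^ 2 / D * weightMass f N (k + 1) ≤
      weightMass f N (k + 2) - weightMass f N (k + 1) ^ 2 / weightMass f N k :=
    calc c ^ 2 / D * weightMass f N (k + 1) = 2 * (c / D) * (c * weightMass f N (k + 1)) -
          (c / D) ^ 2 * (D * weightMass f N (k + 1)) := by field_simp; ring
      _ ≤ _ := by
          have := h.c_pos
          refine le_trans ?_ cramer_rao
          gcongr
          · exact h.le_integral_odds_mul_score (by omega)
          · exact h.integral_score_sq_le (by omega)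
  rw [← le_sub_iff_add_le']
  calc ratioGap c K / N = c ^ 2 / D := by rw [ratioGap, hD]; field_simp
    _ ≤ (weightMass f N (k + 2) - weightMass f N (k + 1) ^ 2 / weightMass f N k) /
          weightMass f N (k + 1) := (le_div_iff₀ hM₁).2 gap
    _ = massRatio f N (k + 1) - massRatio f N k := by
        rw [massRatio, massRatio]; field_simp

theorem ratioGap_pos : 0 < ratioGap c K := by
  have := h.one_le_K
  have := h.c_pos
  unfold ratioGap
  positivity

theorem weightMass_zero_le (hN : 1 ≤ N) :
    weightMass f N 0 ≤ 6 * K * Real.exp K * N * weightMass f N 1 := by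
  have hf := h.contDiff
  have hK := h.one_le_K
  have hN' : (1 : ℝ) ≤ N := by exact_mod_cast hN
  have hκ := (contDiff_hessRatio hf).continuous
  have hscore := (contDiff_score hf N 0).continuous
  have by_parts := integral_score_mul (φ := fun x ↦ 1 - x) hf N.zero_le
    (φ' := fun _ ↦ -1) continuousOn_const fun x _ ↦ (hasDerivAt_id x).const_sub 1
  have split : ∫ x, (x + N * (x * (1 - x) * hessRatio f x) + 3 * (x * (1 - x)) +
      (x * (1 - x) * (-1) - score f N 0 x * (1 - x))) ∂weightMeasure f N 0 =
      weightMass f N 0 := by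
    rw [← one_mul (weightMass f N 0), ← integral_const_weightMeasure]
    congr 1; ext x; simp only [score]; push_cast; ring
  rw [integral_add (integrable_weightMeasure hf (by fun_prop))
    (integrable_weightMeasure hf (by fun_prop)), integral_sub
    (integrable_weightMeasure hf (by fun_prop)) (integrable_weightMeasure hf (by fun_prop)),
    by_parts, sub_self, add_zero] at split
  rw [← split]
  calc _ ≤ ∫ x, 6 * K * N * x ∂weightMeasure f N 0 := by
        refine integral_weightMeasure_mono hf (by fun_prop) (by fun_prop) fun x hx ↦ ?_
        have hw : x * (1 - x) ≤ x := mul_le_of_le_one_right hx.1 (by linarith [hx.1])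
        have hκx := (le_abs_self _).trans (h.abs_hessRatio_le hx)
        have hx0 := hx.1
        have hNK : 4 + N * (1 + K) ≤ 6 * K * N := by nlinarith
        calc x + N * (x * (1 - x) * hessRatio f x) + 3 * (x * (1 - x))
            ≤ x + N * (x * (1 + K)) + 3 * x := by
              gcongr
              exact (h.hessRatio_pos hx).le
          _ = (4 + N * (1 + K)) * x := by ring
          _ ≤ 6 * K * N * x := by gcongr
    _ ≤ 6 * K * N * (Real.exp K * weightMass f N 1) := by
        rw [integral_const_mul]; gcongr; exact h.integral_id_le hN
    _ = 6 * K * Real.exp K * N * weightMass f N 1 := by ring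

theorem ratioGap_le_massRatio_zero (hN : 1 ≤ N) : ratioGap c K / N ≤ massRatio f N 0 := by
  have hK := h.one_le_K
  have : (0 : ℝ) < N := by exact_mod_cast hN
  have hc2 : c ^ 2 ≤ 1 := pow_le_one₀ h.c_pos.le h.c_le_one
  calc ratioGap c K / N = c ^ 2 / (6 * K * Real.exp K * N) := by rw [ratioGap, div_div]
    _ ≤ 1 / (6 * K * Real.exp K * N) := by gcongr
    _ ≤ massRatio f N 0 := by
        rw [massRatio, div_le_div_iff₀ (by positivity) (weightMass_pos h.contDiff N 0), one_mul,
          mul_comm]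
        exact h.weightMass_zero_le hN

end IsAdmissible

end MassRatio

section Concentration

variable {f : ℝ → ℝ} {c K : ℝ} {N k : ℕ}

theorem natCast_div_mem_Icc (hk : k ≤ N) : (k / N : ℝ) ∈ Icc (0 : ℝ) 1 :=
  ⟨by positivity, div_le_one_of_le₀ (by exact_mod_cast hk) N.cast_nonneg⟩

theorem abs_log_div_sub_log_div_le {A B a b m ε : ℝ} (hm : 0 < m) (hε : ε ≤ m / 2) (ha : m ≤ a)
    (hb : m ≤ b) (hA : |A - a| ≤ ε) (hB : |B - b| ≤ ε) :
    |Real.log (A / B) - Real.log (a / b)| ≤ 4 * ε / m := by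
  have hA' : m / 2 ≤ A := by linarith [(abs_le.1 hA).1]
  have hB' : m / 2 ≤ B := by linarith [(abs_le.1 hB).1]
  calc _ = |(Real.log A - Real.log a) - (Real.log B - Real.log b)| := by
        rw [Real.log_div (by linarith) (by linarith), Real.log_div (by linarith) (by linarith)]
        congr 1; ring
    _ ≤ ε / (m / 2) + ε / (m / 2) := by
        refine (abs_sub _ _).trans ?_
        gcongr
        · exact (abs_log_sub_log_le (by positivity) hA' (by linarith)).trans (by gcongr)
        · exact (abs_log_sub_log_le (by positivity) hB' (by linarith)).trans (by gcongr)
    _ = 4 * ε / m := by field_simp; ring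

theorem massRatio_mul_average (hf : ContDiff ℝ ∞ f) (hk : k < N) :
    massRatio f N k * ((∫ x, (1 - x) * Real.exp (-deriv f x) ∂weightMeasure f N (k + 1)) /
      weightMass f N (k + 1)) = (∫ x, x ∂weightMeasure f N k) / weightMass f N k := by
  have hM₀ := weightMass_pos hf N k
  have hM₁ := weightMass_pos hf N (k + 1)
  rw [integral_id_weightMeasure hf hk, massRatio]
  field_simp

theorem symplecticGradient_eq_log_div (f : ℝ → ℝ) {x : ℝ} (hx0 : 0 < x) (hx1 : x < 1) :
    symplecticGradient f x = Real.log (x / ((1 - x) * Real.exp (-deriv f x))) := by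
  rw [Real.log_div hx0.ne' (by have := sub_pos.2 hx1; positivity),
    Real.log_mul (by linarith) (Real.exp_pos _).ne', Real.log_exp, symplecticGradient]
  ring

namespace IsAdmissible

variable (h : IsAdmissible f c K)
include h

theorem mul_integral_sq_le (hk : k ≤ N) :
    c * ∫ x, (N * x - k) ^ 2 ∂weightMeasure f N k ≤ 2 * N * weightMass f N k := by
  have hf := h.contDiff
  have := (contDiff_hessRatio hf).continuous
  have hscore := (contDiff_score hf N k).continuous
  have by_parts := integral_score_mul (φ := fun x ↦ N * x - k) (φ' := fun _ ↦ (N : ℝ)) hf hk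
    continuousOn_const fun x _ ↦
      (((hasDerivAt_id x).const_mul (N : ℝ)).sub_const (k : ℝ)).congr_deriv (mul_one _)
  calc c * ∫ x, (N * x - k) ^ 2 ∂weightMeasure f N k
      ≤ ∫ x, (score f N k x * (N * x - k) + N) ∂weightMeasure f N k := by
        rw [← integral_const_mul]
        refine integral_weightMeasure_mono hf (by fun_prop) (by fun_prop) fun x hx ↦ ?_
        have lower : c * (N * x - k) ^ 2 ≤ hessRatio f x * (N * x - k) ^ 2 := by
          gcongr; exact h.le_hessRatio x hx
        have error : (1 - 2 * x) * (N * x - k) ≤ 1 * N :=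
          calc _ ≤ |1 - 2 * x| * |N * x - k| := (le_abs_self _).trans_eq (abs_mul _ _)
            _ ≤ 1 * N := by
              gcongr
              · exact abs_one_sub_two_mul_le hx
              · exact abs_mul_sub_natCast_le hk hx
        simp only [score]
        linarith
    _ = ∫ x, (x * (1 - x) * N + N) ∂weightMeasure f N k := by
        rw [integral_add (integrable_weightMeasure hf (by fun_prop))
          (integrable_weightMeasure hf (by fun_prop)), by_parts, ← integral_add
          (integrable_weightMeasure hf (by fun_prop)) (integrable_weightMeasure hf (by fun_prop))]
    _ ≤ 2 * N * weightMass f N k := by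
        refine integral_weightMeasure_le hf (by fun_prop) fun x hx ↦ ?_
        have := mul_le_mul_of_nonneg_right (mul_one_sub_mem_Icc hx).2 N.cast_nonneg (α := ℝ)
        linarith

-- Integration by parts against `1 / hessRatio f` cancels the leading part of the score.
theorem abs_integral_sub_le (hk : k ≤ N) :
    |∫ x, (N * x - k) ∂weightMeasure f N k| ≤ (1 / c + 2 * K / c ^ 2) * weightMass f N k := by
  have hf := h.contDiff
  have hc := h.c_pos
  have hκ := (contDiff_hessRatio hf).continuous
  have hκ' := (contDiff_deriv (contDiff_hessRatio hf)).continuous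
  have hκ0 : ∀ x ∈ Icc (0 : ℝ) 1, hessRatio f x ≠ 0 := fun x hx ↦ (h.hessRatio_pos hx).ne'
  have : ContinuousOn (fun x ↦ (hessRatio f x)⁻¹) (Icc 0 1) := hκ.continuousOn.inv₀ hκ0
  have hinv' : ContinuousOn (fun x ↦ -deriv (hessRatio f) x / hessRatio f x ^ 2) (Icc 0 1) :=
    ContinuousOn.div (by fun_prop) (by fun_prop) fun x hx ↦ pow_ne_zero 2 (hκ0 x hx)
  have hscore := (contDiff_score hf N k).continuous
  have by_parts := integral_score_mul hf hk hinv' fun x hx ↦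
    (hasDerivAt_of_contDiff (contDiff_hessRatio hf) x).fun_inv (hκ0 x hx)
  have identity : ∫ x, (N * x - k) ∂weightMeasure f N k =
      ∫ x, ((1 - 2 * x) * (hessRatio f x)⁻¹ +
        x * (1 - x) * (-deriv (hessRatio f) x / hessRatio f x ^ 2)) ∂weightMeasure f N k := by
    rw [integral_add (integrable_weightMeasure hf (by fun_prop))
      (integrable_weightMeasure hf (by fun_prop)), ← by_parts, ← integral_add
      (integrable_weightMeasure hf (by fun_prop)) (integrable_weightMeasure hf (by fun_prop))]
    refine integral_congr_ae (ae_weightMeasure_of_forall_mem_Icc fun x hx ↦ ?_)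
    have := hκ0 x hx
    simp only [score]
    field_simp
    ring
  rw [identity]
  refine abs_integral_weightMeasure_le hf fun x hx ↦ ?_
  obtain ⟨hw0, hw1⟩ := mul_one_sub_mem_Icc hx
  have hκx := h.hessRatio_pos hx
  have hcκ := h.le_hessRatio x hx
  calc _ ≤ |1 - 2 * x| * (hessRatio f x)⁻¹ +
        x * (1 - x) * (|deriv (hessRatio f) x| / hessRatio f x ^ 2) := by
        refine (abs_add_le _ _).trans_eq ?_
        rw [abs_mul, abs_mul, abs_div, abs_neg, abs_of_nonneg hw0, abs_of_pos (inv_pos.2 hκx),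
          abs_of_pos (pow_pos hκx 2)]
    _ ≤ 1 * c⁻¹ + 1 * (2 * K / c ^ 2) := by
        have := h.one_le_K
        gcongr
        · exact abs_one_sub_two_mul_le hx
        · exact h.abs_deriv_hessRatio_le hx
    _ = 1 / c + 2 * K / c ^ 2 := by ring

theorem exists_abs_integral_sub_le {φ : ℝ → ℝ} (hφ : ContDiff ℝ ∞ φ) :
    ∃ C, 0 < C ∧ ∀ N k : ℕ, 1 ≤ N → k ≤ N →
      |∫ x, φ x ∂weightMeasure f N k - φ (k / N) * weightMass f N k| ≤
        C / N * weightMass f N k := by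
  obtain ⟨B, hB, deriv_le, taylor⟩ :=
    exists_taylor_bound isOpen_univ hφ.contDiffOn (subset_univ (Icc 0 1))
  have hf := h.contDiff
  have hc := h.c_pos
  have hK := h.one_le_K
  refine ⟨B * (2 / c) + B * (1 / c + 2 * K / c ^ 2), by positivity, fun N k hN hk ↦ ?_⟩
  have hN' : (0 : ℝ) < N := by exact_mod_cast hN
  have hα := natCast_div_mem_Icc hk
  have hcont := hφ.continuous
  set α : ℝ := k / N with hα_def
  set M := weightMass f N k
  have remainder_le : |∫ x, (φ x - φ α - deriv φ α * (x - α)) ∂weightMeasure f N k| ≤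
      B / N ^ 2 * ∫ x, (N * x - k) ^ 2 ∂weightMeasure f N k := by
    rw [← integral_const_mul]
    refine abs_integral_le_integral_abs.trans ?_
    refine integral_weightMeasure_mono hf (by fun_prop) (by fun_prop) fun x hx ↦ ?_
    refine (taylor α hα x hx).trans_eq ?_
    rw [hα_def]; field_simp
  have second_moment : ∫ x, (N * x - k) ^ 2 ∂weightMeasure f N k ≤ 2 * N * M / c :=
    (le_div_iff₀' hc).2 (h.mul_integral_sq_le hk)
  have decompose : ∫ x, φ x ∂weightMeasure f N k - φ α * M =
      ∫ x, (φ x - φ α - deriv φ α * (x - α)) ∂weightMeasure f N k +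
        deriv φ α / N * ∫ x, (N * x - k) ∂weightMeasure f N k := by
    rw [← integral_const_weightMeasure, ← integral_const_mul, ← integral_sub
      (integrable_weightMeasure hf (by fun_prop)) (integrable_weightMeasure hf (by fun_prop)),
      ← integral_add (integrable_weightMeasure hf (by fun_prop))
      (integrable_weightMeasure hf (by fun_prop))]
    congr 1; ext x
    rw [hα_def]; field_simp; ring
  rw [decompose]
  calc _ ≤ B / N ^ 2 * (2 * N * M / c) + B / N * ((1 / c + 2 * K / c ^ 2) * M) := by
        refine (abs_add_le _ _).trans ?_
        rw [abs_mul, abs_div, abs_of_pos hN']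
        gcongr
        · exact remainder_le.trans (by gcongr)
        · exact deriv_le α hα
        · exact h.abs_integral_sub_le hk
    _ = (B * (2 / c) + B * (1 / c + 2 * K / c ^ 2)) / N * M := by field_simp

theorem exists_abs_average_sub_le {φ : ℝ → ℝ} (hφ : ContDiff ℝ ∞ φ) :
    ∃ C, 0 < C ∧ ∀ N k : ℕ, 1 ≤ N → k ≤ N →
      |(∫ x, φ x ∂weightMeasure f N k) / weightMass f N k - φ (k / N)| ≤ C / N := by
  obtain ⟨C, hC, hle⟩ := h.exists_abs_integral_sub_le hφ
  refine ⟨C, hC, fun N k hN hk ↦ ?_⟩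
  have hM := weightMass_pos h.contDiff N k
  rw [div_sub' hM.ne', abs_div, abs_of_pos hM, div_le_iff₀ hM, mul_comm _ (φ _)]
  exact hle N k hN hk

-- By `massRatio_mul_average`, `massRatio f N k` is the quotient of two averages close to `α` and
-- `(1 - α) exp (-f' α)`.
theorem exists_abs_log_massRatio_sub_le {δ : ℝ} (hδ : 0 < δ) :
    ∃ C, ∃ N₀ : ℕ, 0 < C ∧ ∀ N k : ℕ, N₀ ≤ N → k < N →
      ((k + 1 : ℕ) / N : ℝ) ∈ Icc δ (1 - δ) →
      |Real.log (massRatio f N k) - symplecticGradient f ((k + 1 : ℕ) / N)| ≤ C / N := by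
  have := contDiff_deriv h.contDiff
  obtain ⟨C₁, hC₁, near₁⟩ := h.exists_abs_average_sub_le (φ := fun x ↦ x) contDiff_id
  obtain ⟨C₂, hC₂, near₂⟩ :=
    h.exists_abs_average_sub_le (φ := fun x ↦ (1 - x) * Real.exp (-deriv f x)) (by fun_prop)
  set d := δ * Real.exp (-K)
  have hd : 0 < d := by positivity
  have hdδ : d ≤ δ := mul_le_of_le_one_right hδ.le
    (Real.exp_le_one_iff.2 (by linarith [h.one_le_K]))
  set C := C₁ + 1 + C₂
  obtain ⟨N₀, hN₀⟩ := exists_nat_gt (C / (d / 2))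
  refine ⟨4 * C / d, N₀ + 1, by positivity, fun N k hN hk hα ↦ ?_⟩
  have hN' : (0 : ℝ) < N := by exact_mod_cast (by omega : 0 < N)
  have small : C / N ≤ d / 2 := by
    rw [div_le_comm₀ hN' (by positivity)]
    exact hN₀.le.trans (by exact_mod_cast (by omega : N₀ ≤ N))
  set α : ℝ := (k + 1 : ℕ) / N with hα_def
  have hα01 : α ∈ Icc (0 : ℝ) 1 := ⟨hδ.le.trans hα.1, hα.2.trans (by linarith)⟩
  have numerator : |(∫ x, x ∂weightMeasure f N k) / weightMass f N k - α| ≤ C / N :=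
    calc _ = |((∫ x, x ∂weightMeasure f N k) / weightMass f N k - k / N) - 1 / N| := by
          congr 1; rw [hα_def]; push_cast; ring
      _ ≤ C₁ / N + 1 / N := by
          refine (abs_sub _ _).trans (add_le_add (near₁ N k (by omega) hk.le) ?_)
          exact (abs_of_pos (by positivity)).le
      _ ≤ C / N := by rw [← add_div]; gcongr; linarith
  have denominator := (near₂ N (k + 1) (by omega) hk).trans
    (by gcongr; linarith : C₂ / N ≤ C / N)
  have hb : d ≤ (1 - α) * Real.exp (-deriv f α) := mul_le_mul (by linarith [hα.2])
    (Real.exp_le_exp.2 (by linarith [(abs_le.1 (h.abs_deriv_le α hα01)).2])) (Real.exp_pos _).le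
    (by linarith [hα01.2])
  have denominator_pos : 0 < (∫ x, (1 - x) * Real.exp (-deriv f x) ∂weightMeasure f N (k + 1)) /
      weightMass f N (k + 1) := by linarith [(abs_le.1 denominator).1]
  rw [eq_div_of_mul_eq denominator_pos.ne' (massRatio_mul_average h.contDiff hk),
    symplecticGradient_eq_log_div f (by linarith [hα.1]) (by linarith [hα.2])]
  exact (abs_log_div_sub_log_div_le hd small (hdδ.trans hα.1) hb numerator denominator).trans_eq
    (by ring)

end IsAdmissible

end Concentration

/-! ### Symplectic potentials and the size of the norming constants -/

/-- The symplectic potential `G_P + f`. -/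
noncomputable def symplecticPotential (f : ℝ → ℝ) (x : ℝ) : ℝ := GP x + f x

/-- The second derivative on `(0, 1)` of the symplectic potential `G_P + f`. -/
noncomputable def symplecticHessian (f : ℝ → ℝ) (x : ℝ) : ℝ := hessRatio f x / (x * (1 - x))

section Potential

variable {f : ℝ → ℝ} {c K x α : ℝ} {N k : ℕ}

theorem continuous_GP : Continuous GP :=
  Real.continuous_mul_log.add (Real.continuous_mul_log.comp (continuous_const.sub continuous_id))

theorem hasDerivAt_GP (hx : x ∈ Ioo (0 : ℝ) 1) :
    HasDerivAt GP (Real.log x - Real.log (1 - x)) x := by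
  have hx1 : 1 - x ≠ 0 := (sub_pos.2 hx.2).ne'
  have hright := (Real.hasDerivAt_mul_log hx1).comp x ((hasDerivAt_id x).const_sub 1)
  exact ((Real.hasDerivAt_mul_log hx.1.ne').add hright).congr_deriv (by ring)

theorem hasDerivAt_symplecticPotential (hf : ContDiff ℝ ∞ f) (hx : x ∈ Ioo (0 : ℝ) 1) :
    HasDerivAt (symplecticPotential f) (symplecticGradient f x) x :=
  (hasDerivAt_GP hx).add (hasDerivAt_of_contDiff hf x)

theorem contDiffAt_symplecticPotential (hf : ContDiff ℝ ∞ f) (hx : x ∈ Ioo (0 : ℝ) 1) :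
    ContDiffAt ℝ ∞ (symplecticPotential f) x := by
  have hx1 : 1 - x ≠ 0 := (sub_pos.2 hx.2).ne'
  have hright : ContDiffAt ℝ ∞ (fun y : ℝ ↦ 1 - y) x := contDiffAt_const.sub contDiffAt_id
  exact ((contDiffAt_id.mul (contDiffAt_id.log hx.1.ne')).add (hright.mul (hright.log hx1))).add
    hf.contDiffAt

theorem contDiffAt_symplecticGradient (hf : ContDiff ℝ ∞ f) (hx : x ∈ Ioo (0 : ℝ) 1) :
    ContDiffAt ℝ ∞ (symplecticGradient f) x :=
  ((contDiffAt_id.log hx.1.ne').sub ((contDiffAt_const.sub contDiffAt_id).log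
    (sub_pos.2 hx.2).ne')).add (contDiff_deriv hf).contDiffAt

theorem hasDerivAt_symplecticGradient (hf : ContDiff ℝ ∞ f) (hx : x ∈ Ioo (0 : ℝ) 1) :
    HasDerivAt (symplecticGradient f) (symplecticHessian f x) x := by
  have hx0 := hx.1.ne'
  have hx1 : 1 - x ≠ 0 := (sub_pos.2 hx.2).ne'
  have hright := (Real.hasDerivAt_log hx1).comp x ((hasDerivAt_id x).const_sub 1)
  refine (((Real.hasDerivAt_log hx0).sub hright).add
    (hasDerivAt_of_contDiff (contDiff_deriv hf) x)).congr_deriv ?_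
  unfold symplecticHessian hessRatio
  field_simp
  ring

theorem Phase_symplecticPotential (hf : ContDiff ℝ ∞ f) (α : ℝ) (hx : x ∈ Ioo (0 : ℝ) 1) :
    Phase (symplecticPotential f) α x =
      (x - α) * symplecticGradient f x - (symplecticPotential f x - symplecticPotential f α) := by
  rw [Phase, (hasDerivAt_symplecticPotential hf hx).deriv]

theorem weight_eq_exp_Phase (hf : ContDiff ℝ ∞ f) (hN : 1 ≤ N) (hk : k ≤ N)
    (hx : x ∈ Ioo (0 : ℝ) 1) :
    weight f N k x = Real.exp (-N * Phase (symplecticPotential f) (k / N) x) *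
      Real.exp (N * symplecticPotential f (k / N)) := by
  have hN' : (N : ℝ) ≠ 0 := by positivity
  have hx1 : 0 < 1 - x := sub_pos.2 hx.2
  rw [Phase_symplecticPotential hf _ hx, weight, ← Real.rpow_natCast x, Real.rpow_def_of_pos hx.1,
    ← Real.rpow_natCast (1 - x), Real.rpow_def_of_pos hx1, ← Real.exp_add, ← Real.exp_add,
    ← Real.exp_add, Nat.cast_sub hk]
  unfold symplecticGradient symplecticPotential GP
  congr 1
  field_simp
  ring

theorem QQ_symplecticPotential (hf : ContDiff ℝ ∞ f) (hN : 1 ≤ N) (hk : k ≤ N) :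
    QQ (symplecticPotential f) N (k / N) = 2 * Real.pi * weightMass f N k := by
  rw [QQ, Qnorm, mul_assoc, ← intervalIntegral.integral_mul_const, weightMass_eq_integral hf]
  congr 1
  exact intervalIntegral.integral_congr_Ioo_of_le zero_le_one
    fun x hx ↦ (weight_eq_exp_Phase hf hN hk hx).symm

namespace IsAdmissible

variable (h : IsAdmissible f c K)
include h

theorem le_symplecticHessian (hx : x ∈ Ioo (0 : ℝ) 1) : c ≤ symplecticHessian f x := by
  have hw := mul_one_sub_mem_Icc (Ioo_subset_Icc_self hx)
  have hc := h.le_hessRatio x (Ioo_subset_Icc_self hx)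
  rw [symplecticHessian, le_div_iff₀ (mul_pos hx.1 (sub_pos.2 hx.2))]
  nlinarith [hw.2, h.c_pos]

theorem symplecticHessian_pos (hx : x ∈ Ioo (0 : ℝ) 1) : 0 < symplecticHessian f x :=
  h.c_pos.trans_le (h.le_symplecticHessian hx)

theorem convexOn_symplecticPotential_sub :
    ConvexOn ℝ (Icc 0 1) fun x ↦ symplecticPotential f x - c / 2 * x ^ 2 := by
  refine convexOn_of_hasDerivWithinAt2_nonneg (convex_Icc 0 1)
    (f' := fun x ↦ symplecticGradient f x - c * x) (f'' := fun x ↦ symplecticHessian f x - c) ?_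
    (fun y hy ↦ HasDerivAt.hasDerivWithinAt ?_) (fun y hy ↦ HasDerivAt.hasDerivWithinAt ?_)
    fun y hy ↦ ?_
  · have := continuous_GP
    have := h.contDiff.continuous
    unfold symplecticPotential
    fun_prop
  all_goals rw [interior_Icc] at hy
  · refine ((hasDerivAt_symplecticPotential h.contDiff hy).fun_sub
      ((hasDerivAt_pow 2 y).const_mul (c / 2))).congr_deriv ?_
    norm_num
    ring
  · exact ((hasDerivAt_symplecticGradient h.contDiff hy).fun_sub
      ((hasDerivAt_id y).const_mul c)).congr_deriv (by ring)
  · exact sub_nonneg.2 (h.le_symplecticHessian hy)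

theorem mul_sq_le_Phase (hα : α ∈ Icc (0 : ℝ) 1) (hx : x ∈ Ioo (0 : ℝ) 1) :
    c / 2 * (α - x) ^ 2 ≤ Phase (symplecticPotential f) α x := by
  have hconv := h.convexOn_symplecticPotential_sub
  have hderiv : HasDerivAt (fun x ↦ symplecticPotential f x - c / 2 * x ^ 2)
      (symplecticGradient f x - c * x) x := by
    refine ((hasDerivAt_symplecticPotential h.contDiff hx).fun_sub
      ((hasDerivAt_pow 2 x).const_mul (c / 2))).congr_deriv ?_
    norm_num
    ring
  have hx' := Ioo_subset_Icc_self hx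
  rw [Phase_symplecticPotential h.contDiff α hx]
  rcases lt_trichotomy x α with hlt | rfl | hgt
  · have hslope := hconv.le_slope_of_hasDerivAt hx' hα hlt hderiv
    rw [slope_def_field, le_div_iff₀ (sub_pos.2 hlt)] at hslope
    nlinarith
  · simp
  · have hslope := hconv.slope_le_of_hasDerivAt hα hx' hgt hderiv
    rw [slope_def_field, div_le_iff₀ (sub_pos.2 hgt)] at hslope
    nlinarith

theorem Phase_nonneg (hα : α ∈ Icc (0 : ℝ) 1) (hx : x ∈ Ioo (0 : ℝ) 1) :
    0 ≤ Phase (symplecticPotential f) α x :=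
  (mul_nonneg (half_pos h.c_pos).le (sq_nonneg _)).trans (h.mul_sq_le_Phase hα hx)

theorem weightMass_le (hN : 1 ≤ N) (hk : k ≤ N) :
    weightMass f N k ≤ Real.exp (N * symplecticPotential f (k / N)) := by
  rw [weightMass_eq_integral h.contDiff]
  calc _ ≤ ∫ _ in (0 : ℝ)..1, Real.exp (N * symplecticPotential f (k / N)) := by
        refine intervalIntegral.integral_mono_on_of_le_Ioo zero_le_one
          ((continuous_weight h.contDiff N k).intervalIntegrable _ _) (by simp) fun x hx ↦ ?_
        rw [weight_eq_exp_Phase h.contDiff hN hk hx]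
        refine mul_le_of_le_one_left (Real.exp_pos _).le (Real.exp_le_one_iff.2 ?_)
        rw [neg_mul, neg_nonpos]
        exact mul_nonneg N.cast_nonneg (h.Phase_nonneg (natCast_div_mem_Icc hk) hx)
    _ = Real.exp (N * symplecticPotential f (k / N)) := by simp

theorem weight_zero_mul_le_weight (hN : 1 ≤ N) (hk : k ≤ N) (hx : x ∈ Icc (0 : ℝ) 1) :
    weight 0 N k x * Real.exp (N * f (k / N)) * Real.exp (-(N * K * (k / N - x) ^ 2)) ≤
      weight f N k x := by
  have hN' : (N : ℝ) ≠ 0 := by positivity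
  have hf := h.contDiff
  have htaylor := (abs_le.1 (abs_sub_sub_deriv_mul_le ordConnected_Icc
    (fun z _ ↦ hasDerivAt_of_contDiff hf z)
    (fun z _ ↦ hasDerivAt_of_contDiff (contDiff_deriv hf) z) h.abs_deriv2_le hx
    (natCast_div_mem_Icc hk))).2
  have hweight : weight f N k x =
      weight 0 N k x * Real.exp (N * (f x + deriv f x * (k / N - x))) := by
    simp only [weight, Pi.zero_apply, deriv_zero, mul_zero, sub_zero, Real.exp_zero, mul_one]
    congr 2
    field_simp
    ring
  have := weight_nonneg 0 N k hx
  calc _ = weight 0 N k x * Real.exp (N * (f (k / N) - K * (k / N - x) ^ 2)) := by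
        rw [mul_assoc, ← Real.exp_add]; congr 2; ring
    _ ≤ _ := by rw [hweight]; gcongr; linarith

end IsAdmissible

theorem exp_neg_mul_le_exp_neg (m y : ℝ) : Real.exp (-m) * (1 + m - y) ≤ Real.exp (-y) := by
  have := Real.add_one_le_exp (m - y)
  calc _ ≤ Real.exp (-m) * Real.exp (m - y) := by gcongr; linarith
    _ = _ := by rw [← Real.exp_add]; congr 1; ring

theorem isAdmissible_zero : IsAdmissible 0 1 1 where
  contDiff := contDiff_zero_fun
  c_pos := one_pos
  one_le_K := le_rfl
  le_hessRatio := by simp [hessRatio]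
  abs_deriv_le := by simp
  abs_deriv2_le := by simp
  abs_deriv3_le := by simp

theorem succ_mul_weightMass_zero (hk : k < N) :
    (k + 1) * weightMass 0 N k = (N - k) * weightMass 0 N (k + 1) := by
  have hid : ∀ j ≤ N, (N + 2) * ∫ x, x ∂weightMeasure 0 N j = (j + 1) * weightMass 0 N j := by
    intro j hj
    have hscore := integral_score isAdmissible_zero.contDiff hj
    have heq : score 0 N j = fun x : ℝ ↦ (N + 2) * x - (j + 1) := by
      ext x
      simp only [score, hessRatio, deriv_zero, Pi.zero_apply]
      ring
    rw [heq, integral_sub (integrable_weightMeasure isAdmissible_zero.contDiff (by fun_prop))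
      (integrable_weightMeasure isAdmissible_zero.contDiff (by fun_prop)), integral_const_mul,
      integral_const_weightMeasure] at hscore
    linarith
  have hswap := integral_id_weightMeasure isAdmissible_zero.contDiff hk
  have hcompl : ∫ x, (1 - x) ∂weightMeasure 0 N (k + 1) =
      weightMass 0 N (k + 1) - ∫ x, x ∂weightMeasure 0 N (k + 1) := by
    rw [integral_sub (integrable_weightMeasure isAdmissible_zero.contDiff (by fun_prop))
      (integrable_weightMeasure isAdmissible_zero.contDiff (by fun_prop)),
      integral_const_weightMeasure, one_mul]
  have hnext := hid (k + 1) hk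
  simp only [deriv_zero, Pi.zero_apply, neg_zero, Real.exp_zero, mul_one] at hswap
  rw [← hid k hk.le, hswap, hcompl]
  push_cast at hnext
  linear_combination -hnext

theorem choose_mul_weightMass_zero (hk : k ≤ N) :
    (N.choose k : ℝ) * weightMass 0 N k = 1 / (N + 1) := by
  induction k with
  | zero =>
    rw [weightMass_eq_integral isAdmissible_zero.contDiff]
    have := intervalIntegral.integral_comp_sub_left (fun x : ℝ ↦ x ^ N) (a := 0) (b := 1) 1
    simpa [weight, integral_pow] using this
  | succ k ih =>
    have hrec := succ_mul_weightMass_zero hk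
    have hchoose : (N.choose (k + 1) : ℝ) * (k + 1) = N.choose k * (N - k) := by
      have := Nat.choose_succ_right_eq N k
      rw [← Nat.cast_sub (by omega)]
      exact_mod_cast this
    have hk1 : (k + 1 : ℝ) ≠ 0 := by positivity
    rw [← ih (by omega)]
    refine mul_left_cancel₀ hk1 ?_
    linear_combination weightMass 0 N (k + 1) * hchoose - N.choose k * hrec

-- A single term of the binomial expansion of `(k / N + (1 - k / N)) ^ N`.
theorem choose_mul_exp_GP_le_one (hN : 1 ≤ N) (hk : k ≤ N) :
    (N.choose k : ℝ) * Real.exp (N * GP (k / N)) ≤ 1 := by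
  have hN' : (N : ℝ) ≠ 0 := by positivity
  have hexp : ∀ j : ℕ, Real.exp (j * Real.log (j / N)) = (j / N : ℝ) ^ j := by
    intro j
    rcases Nat.eq_zero_or_pos j with rfl | hj
    · simp
    · rw [Real.exp_nat_mul, Real.exp_log (by positivity)]
  have hcompl : (1 - k / N : ℝ) = (N - k : ℕ) / N := by rw [Nat.cast_sub hk]; field_simp
  have hGP : N * GP (k / N) = k * Real.log (k / N) +
      (N - k : ℕ) * Real.log ((N - k : ℕ) / N : ℝ) := by
    rw [GP, hcompl]
    field_simp
  have hα := natCast_div_mem_Icc hk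
  have hβ := sub_nonneg.2 hα.2
  calc (N.choose k : ℝ) * Real.exp (N * GP (k / N))
      = (k / N : ℝ) ^ k * (1 - k / N) ^ (N - k) * N.choose k := by
        rw [hGP, Real.exp_add, hexp, hexp, hcompl]; ring
    _ ≤ ∑ j ∈ Finset.range (N + 1), (k / N : ℝ) ^ j * (1 - k / N) ^ (N - j) * N.choose j :=
        Finset.single_le_sum (f := fun j ↦ (k / N : ℝ) ^ j * (1 - k / N) ^ (N - j) * N.choose j)
          (fun j _ ↦ by have := hα.1; positivity) (by simpa [Nat.lt_succ_iff] using hk)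
    _ = 1 := by rw [← add_pow, add_sub_cancel, one_pow]

theorem exp_GP_le_weightMass_zero (hN : 1 ≤ N) (hk : k ≤ N) :
    Real.exp (N * GP (k / N)) / (N + 1) ≤ weightMass 0 N k := by
  have hchoose : 0 < (N.choose k : ℝ) := by exact_mod_cast Nat.choose_pos hk
  rw [← mul_le_mul_iff_right₀ hchoose, choose_mul_weightMass_zero hk, ← mul_div_assoc]
  gcongr
  exact choose_mul_exp_GP_le_one hN hk

namespace IsAdmissible

variable (h : IsAdmissible f c K)
include h

theorem le_weightMass (hN : 1 ≤ N) (hk : k ≤ N) :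
    Real.exp (-(2 * K)) / (N + 1) * Real.exp (N * symplecticPotential f (k / N)) ≤
      weightMass f N k := by
  have hN' : (N : ℝ) ≠ 0 := by positivity
  have hK := h.one_le_K
  have hsq := isAdmissible_zero.mul_integral_sq_le hk
  have hzero : ∫ x, (1 + 2 * K - N * K * (k / N - x) ^ 2) ∂weightMeasure 0 N k ≥
      weightMass 0 N k := by
    have heq : ∀ x : ℝ, 1 + 2 * K - N * K * (k / N - x) ^ 2 =
        1 + 2 * K - K / N * (N * x - k) ^ 2 := by intro x; field_simp; ring
    simp only [heq]
    rw [integral_sub (integrable_weightMeasure isAdmissible_zero.contDiff (by fun_prop))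
      (integrable_weightMeasure isAdmissible_zero.contDiff (by fun_prop)), integral_const_mul,
      integral_const_weightMeasure]
    have : K / N * ∫ x, (N * x - k) ^ 2 ∂weightMeasure 0 N k ≤
        K / N * (2 * N * weightMass 0 N k) := by
      gcongr; linarith
    have : K / N * (2 * N * weightMass 0 N k) = 2 * K * weightMass 0 N k := by field_simp
    linarith
  calc _ = Real.exp (N * f (k / N)) * Real.exp (-(2 * K)) *
        (Real.exp (N * GP (k / N)) / (N + 1)) := by
        rw [symplecticPotential, mul_add, Real.exp_add]; ring
    _ ≤ Real.exp (N * f (k / N)) * Real.exp (-(2 * K)) *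
        ∫ x, (1 + 2 * K - N * K * (k / N - x) ^ 2) ∂weightMeasure 0 N k := by
        gcongr; exact (exp_GP_le_weightMass_zero hN hk).trans hzero
    _ = ∫ x in (0 : ℝ)..1, weight 0 N k x * Real.exp (N * f (k / N)) *
        (Real.exp (-(2 * K)) * (1 + 2 * K - N * K * (k / N - x) ^ 2)) := by
        rw [integral_weightMeasure isAdmissible_zero.contDiff,
          ← intervalIntegral.integral_const_mul]
        congr 1; ext x; ring
    _ ≤ weightMass f N k := by
        rw [weightMass_eq_integral h.contDiff]
        have := continuous_weight isAdmissible_zero.contDiff N k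
        refine intervalIntegral.integral_mono_on zero_le_one
          (Continuous.intervalIntegrable (by fun_prop) _ _)
          ((continuous_weight h.contDiff N k).intervalIntegrable _ _)
          fun x hx ↦ (mul_le_mul_of_nonneg_left (exp_neg_mul_le_exp_neg _ _) ?_).trans
            (h.weight_zero_mul_le_weight hN hk hx)
        exact mul_nonneg (weight_nonneg 0 N k hx) (Real.exp_pos _).le

theorem choose_mul_weight_zero_mul_le (hN : 1 ≤ N) (hk : k ≤ N) (hx : x ∈ Ioo (0 : ℝ) 1) :
    N.choose k * weight 0 N k x * (Real.exp (-K) * (1 + K - N * K * (k / N - x) ^ 2)) ≤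
      Real.exp (-N * Phase (symplecticPotential f) (k / N) x) := by
  have hw := weight_nonneg 0 N k (Ioo_subset_Icc_self hx)
  have hweight := h.weight_zero_mul_le_weight hN hk (Ioo_subset_Icc_self hx)
  have hchoose := choose_mul_exp_GP_le_one hN hk
  have hG := Real.exp_pos (N * symplecticPotential f (k / N))
  rw [weight_eq_exp_Phase h.contDiff hN hk hx] at hweight
  rw [← mul_le_mul_iff_left₀ hG]
  refine le_trans ?_ hweight
  calc _ ≤ N.choose k * weight 0 N k x * Real.exp (-(N * K * (k / N - x) ^ 2)) *
        Real.exp (N * symplecticPotential f (k / N)) := by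
        gcongr
        exact exp_neg_mul_le_exp_neg _ _
    _ = weight 0 N k x * Real.exp (N * f (k / N)) * Real.exp (-(N * K * (k / N - x) ^ 2)) *
        (N.choose k * Real.exp (N * GP (k / N))) := by
        rw [symplecticPotential, mul_add, Real.exp_add]; ring
    _ ≤ _ := mul_le_of_le_one_right (by positivity) hchoose

-- The Bernstein polynomials average `1 + K - N K (k / N - x)²` to `1 + K - K x (1 - x) ≥ 1`.
theorem exp_neg_le_sum_exp_Phase (hN : 1 ≤ N) (hx : x ∈ Ioo (0 : ℝ) 1) :
    Real.exp (-K) ≤ ∑ k ∈ Finset.range (N + 1),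
      Real.exp (-N * Phase (symplecticPotential f) (k / N) x) := by
  have hN' : (N : ℝ) ≠ 0 := by positivity
  have hK := h.one_le_K
  have hw := (mul_one_sub_mem_Icc (Ioo_subset_Icc_self hx)).2
  have hbernstein : ∀ k, bernstein N k ⟨x, Ioo_subset_Icc_self hx⟩ =
      N.choose k * weight 0 N k x := fun k ↦ by simp [bernstein_apply, weight, mul_assoc]
  have hprob := bernstein.probability N ⟨x, Ioo_subset_Icc_self hx⟩
  have hvar := bernstein.variance (by omega : N ≠ 0) ⟨x, Ioo_subset_Icc_self hx⟩
  simp only [hbernstein, bernstein.z] at hprob hvar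
  rw [Fin.sum_univ_eq_sum_range fun k ↦ (N.choose k : ℝ) * weight 0 N k x] at hprob
  rw [Fin.sum_univ_eq_sum_range fun k ↦ (x - k / N) ^ 2 * (N.choose k * weight 0 N k x)] at hvar
  calc Real.exp (-K) ≤ Real.exp (-K) * (1 + K - K * (x * (1 - x))) :=
        le_mul_of_one_le_right (Real.exp_pos _).le (by nlinarith)
    _ = ∑ k ∈ Finset.range (N + 1),
        N.choose k * weight 0 N k x * (Real.exp (-K) * (1 + K - N * K * (k / N - x) ^ 2)) := by
        have hterm : ∀ k : ℕ, N.choose k * weight 0 N k x *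
            (Real.exp (-K) * (1 + K - N * K * (k / N - x) ^ 2)) =
            Real.exp (-K) * (1 + K) * (N.choose k * weight 0 N k x) -
              Real.exp (-K) * (N * K) * ((x - k / N) ^ 2 * (N.choose k * weight 0 N k x)) :=
          fun k ↦ by ring
        simp only [hterm, Finset.sum_sub_distrib, ← Finset.mul_sum, hprob, hvar]
        field_simp
    _ ≤ _ := Finset.sum_le_sum fun k hk ↦
        h.choose_mul_weight_zero_mul_le hN (by simpa [Nat.lt_succ_iff] using hk) hx

end IsAdmissible

end Potential

/-! ### Weighted means over a finite set -/

/-- The mean `(∑ wᵢ φᵢ) / ∑ wᵢ` of `φ` over `s` with unnormalised weights `w`. -/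
noncomputable def weightedMean {ι : Type*} (s : Finset ι) (w φ : ι → ℝ) : ℝ :=
  (∑ i ∈ s, w i * φ i) / ∑ i ∈ s, w i

/-- The covariance of `φ` and `ψ` over `s` with unnormalised weights `w`. -/
noncomputable def weightedCov {ι : Type*} (s : Finset ι) (w φ ψ : ι → ℝ) : ℝ :=
  weightedMean s w (fun i ↦ φ i * ψ i) - weightedMean s w φ * weightedMean s w ψ

/-- Weights which define a probability distribution of full support on `s`. -/
structure IsPositiveWeight {ι : Type*} (s : Finset ι) (w : ι → ℝ) : Prop where
  nonempty : s.Nonempty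
  pos : ∀ i ∈ s, 0 < w i

section WeightedMean

variable {ι : Type*} {s : Finset ι} {w φ ψ χ : ι → ℝ} {a : ℝ}

theorem weightedMean_add :
    weightedMean s w (fun i ↦ φ i + ψ i) = weightedMean s w φ + weightedMean s w ψ := by
  simp only [weightedMean, mul_add, Finset.sum_add_distrib, add_div]

theorem weightedMean_const_mul :
    weightedMean s w (fun i ↦ a * φ i) = a * weightedMean s w φ := by
  simp only [weightedMean, mul_left_comm _ a, ← Finset.mul_sum, mul_div_assoc]

theorem weightedMean_sub :
    weightedMean s w (fun i ↦ φ i - ψ i) = weightedMean s w φ - weightedMean s w ψ := by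
  simp only [weightedMean, mul_sub, Finset.sum_sub_distrib, sub_div]

theorem weightedMean_congr (h : ∀ i ∈ s, φ i = ψ i) : weightedMean s w φ = weightedMean s w ψ := by
  rw [weightedMean, weightedMean, Finset.sum_congr rfl fun i hi ↦ by rw [h i hi]]

theorem weightedCov_comm : weightedCov s w φ ψ = weightedCov s w ψ φ := by
  simp only [weightedCov, mul_comm]

theorem weightedCov_add_left :
    weightedCov s w (fun i ↦ φ i + ψ i) χ = weightedCov s w φ χ + weightedCov s w ψ χ := by
  simp only [weightedCov, add_mul, weightedMean_add]
  ring

theorem weightedCov_const_mul_left :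
    weightedCov s w (fun i ↦ a * φ i) χ = a * weightedCov s w φ χ := by
  simp only [weightedCov, mul_assoc, weightedMean_const_mul]
  ring

theorem weightedCov_add_const_mul_self :
    weightedCov s w (fun i ↦ φ i + a * ψ i) (fun i ↦ φ i + a * ψ i) =
      weightedCov s w φ φ + 2 * a * weightedCov s w φ ψ + a ^ 2 * weightedCov s w ψ ψ := by
  rw [weightedCov_add_left, weightedCov_const_mul_left, weightedCov_comm,
    weightedCov_comm (φ := ψ), weightedCov_add_left, weightedCov_add_left,
    weightedCov_const_mul_left, weightedCov_const_mul_left, weightedCov_comm (φ := ψ) (ψ := φ)]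
  ring

namespace IsPositiveWeight

variable (hw : IsPositiveWeight s w)
include hw

theorem sum_pos : 0 < ∑ i ∈ s, w i := Finset.sum_pos hw.pos hw.nonempty

theorem weightedMean_const (a : ℝ) : weightedMean s w (fun _ ↦ a) = a := by
  rw [weightedMean, ← Finset.sum_mul, mul_div_cancel_left₀ _ hw.sum_pos.ne']

theorem weightedMean_mono (h : ∀ i ∈ s, φ i ≤ ψ i) : weightedMean s w φ ≤ weightedMean s w ψ :=
  div_le_div_of_nonneg_right
    (Finset.sum_le_sum fun i hi ↦ mul_le_mul_of_nonneg_left (h i hi) (hw.pos i hi).le)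
    hw.sum_pos.le

theorem weightedMean_nonneg (h : ∀ i ∈ s, 0 ≤ φ i) : 0 ≤ weightedMean s w φ :=
  (hw.weightedMean_const 0).symm.le.trans (hw.weightedMean_mono h)

theorem abs_weightedMean_le (h : ∀ i ∈ s, |φ i| ≤ ψ i) :
    |weightedMean s w φ| ≤ weightedMean s w ψ := by
  have hneg := weightedMean_const_mul (s := s) (w := w) (φ := ψ) (a := -1)
  rw [neg_one_mul] at hneg
  refine abs_le.2 ⟨hneg ▸ hw.weightedMean_mono fun i hi ↦ ?_, hw.weightedMean_mono fun i hi ↦ ?_⟩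
  · rw [neg_one_mul]
    exact (abs_le.1 (h i hi)).1
  · exact (abs_le.1 (h i hi)).2

theorem weightedCov_sub_const (φ ψ : ι → ℝ) (a b : ℝ) :
    weightedCov s w (fun i ↦ φ i - a) (fun i ↦ ψ i - b) = weightedCov s w φ ψ := by
  simp only [weightedCov, sub_mul, mul_sub, weightedMean_sub, weightedMean_const_mul,
    hw.weightedMean_const, mul_comm _ b]
  ring

theorem weightedCov_self_le (φ : ι → ℝ) (a : ℝ) :
    weightedCov s w φ φ ≤ weightedMean s w (fun i ↦ (φ i - a) ^ 2) := by
  rw [← hw.weightedCov_sub_const φ φ a a, weightedCov]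
  simp only [← sq]
  exact sub_le_self _ (sq_nonneg _)

theorem weightedCov_self_nonneg (φ : ι → ℝ) : 0 ≤ weightedCov s w φ φ := by
  rw [← hw.weightedCov_sub_const φ φ (weightedMean s w φ) (weightedMean s w φ), weightedCov,
    weightedMean_sub, hw.weightedMean_const, sub_self, zero_mul, sub_zero]
  exact hw.weightedMean_nonneg fun i _ ↦ mul_self_nonneg _

theorem weightedCov_sq_le (φ ψ : ι → ℝ) :
    weightedCov s w φ ψ ^ 2 ≤ weightedCov s w φ φ * weightedCov s w ψ ψ := by
  have hquad : ∀ a : ℝ, 0 ≤ weightedCov s w ψ ψ * (a * a) + 2 * weightedCov s w φ ψ * a +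
      weightedCov s w φ φ := by
    intro a
    have hnonneg := hw.weightedCov_self_nonneg fun i ↦ φ i + a * ψ i
    rw [weightedCov_add_const_mul_self] at hnonneg
    linarith
  have hdiscrim := discrim_le_zero hquad
  rw [discrim] at hdiscrim
  linarith

-- Average `(φ i - φ j) (ψ i - ψ j) ≥ 0` over all pairs.
theorem weightedCov_nonneg_of_monovaryOn (h : MonovaryOn φ ψ s) : 0 ≤ weightedCov s w φ ψ := by
  have hinner : ∀ i, weightedMean s w (fun j ↦ (φ j - φ i) * (ψ j - ψ i)) =
      weightedMean s w (fun j ↦ φ j * ψ j) + φ i * ψ i -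
        (weightedMean s w ψ * φ i + weightedMean s w φ * ψ i) := by
    intro i
    simp only [sub_mul, mul_sub, weightedMean_sub, weightedMean_const_mul, mul_comm _ (ψ i),
      hw.weightedMean_const]
    ring
  have hpairs : 0 ≤ weightedMean s w fun i ↦
      weightedMean s w fun j ↦ (φ j - φ i) * (ψ j - ψ i) :=
    hw.weightedMean_nonneg fun i hi ↦ hw.weightedMean_nonneg fun j hj ↦
      monovaryOn_iff_forall_mul_nonneg.1 h hi hj
  simp only [hinner, weightedMean_sub, weightedMean_add, weightedMean_const_mul,
    hw.weightedMean_const] at hpairs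
  rw [weightedCov]
  linarith

end IsPositiveWeight

theorem hasDerivAt_sum_mul {w : ℝ → ι → ℝ} {u : ℝ}
    (hw : ∀ i, HasDerivAt (fun v ↦ w v i) (w u i * ψ i) u) (φ : ι → ℝ) :
    HasDerivAt (fun v ↦ ∑ i ∈ s, w v i * φ i) (∑ i ∈ s, w u i * (ψ i * φ i)) u :=
  (HasDerivAt.fun_sum fun i _ ↦ (hw i).mul_const (φ i)).congr_deriv
    (Finset.sum_congr rfl fun _ _ ↦ mul_assoc _ _ _)

theorem hasDerivAt_log_sum {w : ℝ → ι → ℝ} {u : ℝ} (hpos : IsPositiveWeight s (w u))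
    (hw : ∀ i, HasDerivAt (fun v ↦ w v i) (w u i * ψ i) u) :
    HasDerivAt (fun v ↦ Real.log (∑ i ∈ s, w v i)) (weightedMean s (w u) ψ) u :=
  (HasDerivAt.fun_sum fun i _ ↦ hw i).log hpos.sum_pos.ne'

theorem hasDerivAt_weightedMean {w : ℝ → ι → ℝ} {u : ℝ} (hpos : IsPositiveWeight s (w u))
    (hw : ∀ i, HasDerivAt (fun v ↦ w v i) (w u i * ψ i) u) (φ : ι → ℝ) :
    HasDerivAt (fun v ↦ weightedMean s (w v) φ) (weightedCov s (w u) ψ φ) u := by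
  have hZ := hpos.sum_pos.ne'
  refine ((hasDerivAt_sum_mul hw φ).fun_div (HasDerivAt.fun_sum fun i _ ↦ hw i) hZ).congr_deriv ?_
  simp only [weightedCov, weightedMean]
  field_simp

end WeightedMean

/-- The backward ratio `w (k - 1) / w k`, extended by `0` at `k = 0`; the discrete analogue of a
logarithmic derivative. -/
noncomputable def backwardRatio (w : ℕ → ℝ) : ℕ → ℝ
  | 0 => 0
  | k + 1 => w k / w (k + 1)

section BackwardRatio

variable {N : ℕ} {w : ℕ → ℝ} (hw : IsPositiveWeight (Finset.range (N + 1)) w)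
include hw

theorem backwardRatio_nonneg {k : ℕ} (hk : k ≤ N) : 0 ≤ backwardRatio w k := by
  rcases k with - | k
  · exact le_rfl
  · exact div_nonneg (hw.pos k (by simp; omega)).le (hw.pos (k + 1) (by simp; omega)).le

-- Summation by parts.
theorem weightedMean_backwardRatio_mul (φ : ℕ → ℝ) :
    weightedMean (Finset.range (N + 1)) w (fun k ↦ backwardRatio w k * φ k) =
      weightedMean (Finset.range (N + 1)) w (fun k ↦ φ (k + 1)) -
        w N * φ (N + 1) / ∑ k ∈ Finset.range (N + 1), w k := by
  rw [weightedMean, weightedMean, ← sub_div, Finset.sum_range_succ',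
    Finset.sum_range_succ (fun k ↦ w k * φ (k + 1))]
  simp only [backwardRatio, zero_mul, mul_zero, add_zero, add_sub_cancel_right]
  congr 1
  refine Finset.sum_congr rfl fun k hk ↦ ?_
  have := (hw.pos (k + 1) (by simpa using hk)).ne'
  field_simp

-- If the backward ratio grows at rate `l`, then it can be compared with `l k` in the Chebyshev sum
-- inequality, and summation by parts bounds the covariance of `k` with the backward ratio by `1`.
theorem mul_weightedCov_natCast_le_one {l : ℝ}
    (h : ∀ k < N, backwardRatio w k + l ≤ backwardRatio w (k + 1)) :
    l * weightedCov (Finset.range (N + 1)) w (fun k ↦ (k : ℝ)) (fun k ↦ (k : ℝ)) ≤ 1 := by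
  have hmono : MonotoneOn (fun k : ℕ ↦ backwardRatio w k + -l * k)
      (Finset.range (N + 1) : Set ℕ) := by
    refine monotoneOn_of_le_succ (by rw [Finset.coe_range]; exact ordConnected_Iio)
      fun k _ _ hk ↦ ?_
    have := h k (by simpa using hk)
    rw [Order.succ_eq_add_one]
    push_cast
    linarith
  have hcheb := hw.weightedCov_nonneg_of_monovaryOn
    (hmono.monovaryOn fun i _ j _ hij ↦ Nat.cast_le (α := ℝ).2 hij)
  rw [weightedCov_add_left, weightedCov_const_mul_left] at hcheb
  have hone := weightedMean_backwardRatio_mul hw fun _ ↦ 1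
  have hid := weightedMean_backwardRatio_mul hw fun k ↦ k
  simp only [Nat.cast_add, Nat.cast_one, weightedMean_add, hw.weightedMean_const, mul_one]
    at hone hid
  have hmean : weightedMean (Finset.range (N + 1)) w (fun k ↦ (k : ℝ)) ≤ N := by
    rw [← hw.weightedMean_const N]
    exact hw.weightedMean_mono fun k hk ↦ by simpa [Nat.lt_succ_iff] using hk
  have hlast : 0 ≤ w N / ∑ k ∈ Finset.range (N + 1), w k :=
    div_nonneg (hw.pos N (by simp)).le hw.sum_pos.le
  have hcov : weightedCov (Finset.range (N + 1)) w (backwardRatio w) (fun k ↦ (k : ℝ)) ≤ 1 := by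
    rw [weightedCov, hid, hone, mul_div_right_comm]
    nlinarith
  linarith

end BackwardRatio

-- Superadditivity of the weighted geometric mean: AM-GM for the normalised pairs.
theorem rpow_mul_rpow_add_le {a b a' b' t : ℝ} (ha : 0 < a) (hb : 0 < b) (ha' : 0 < a')
    (hb' : 0 < b') (ht : t ∈ Icc (0 : ℝ) 1) :
    a ^ (1 - t) * b ^ t + a' ^ (1 - t) * b' ^ t ≤ (a + a') ^ (1 - t) * (b + b') ^ t := by
  have hA : 0 < a + a' := add_pos ha ha'
  have hB : 0 < b + b' := add_pos hb hb'
  have hamgm : ∀ {y z : ℝ}, 0 < y → 0 < z →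
      y ^ (1 - t) * z ^ t / ((a + a') ^ (1 - t) * (b + b') ^ t) ≤
        (1 - t) * (y / (a + a')) + t * (z / (b + b')) := fun hy hz ↦ by
    rw [mul_div_mul_comm, ← Real.div_rpow hy.le hA.le, ← Real.div_rpow hz.le hB.le]
    exact Real.geom_mean_le_arith_mean2_weighted (sub_nonneg.2 ht.2) ht.1 (div_pos hy hA).le
      (div_pos hz hB).le (by ring)
  rw [← div_le_one (by positivity), add_div]
  refine (add_le_add (hamgm ha hb) (hamgm ha' hb')).trans_eq ?_
  field_simp
  ring

section Reflection

variable {N : ℕ} {w : ℕ → ℝ}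

theorem weightedMean_range_reflect (w φ : ℕ → ℝ) :
    weightedMean (Finset.range (N + 1)) (fun k ↦ w (N - k)) (fun k ↦ φ (N - k)) =
      weightedMean (Finset.range (N + 1)) w φ := by
  have hsum := Finset.sum_range_reflect (fun k ↦ w k * φ k) (N + 1)
  have hmass := Finset.sum_range_reflect w (N + 1)
  simp only [Nat.add_sub_cancel] at hsum hmass
  rw [weightedMean, weightedMean, hsum, hmass]

theorem weightedCov_natCast_reflect (hw : IsPositiveWeight (Finset.range (N + 1)) w) :
    weightedCov (Finset.range (N + 1)) (fun k ↦ w (N - k)) (fun k ↦ (k : ℝ)) (fun k ↦ (k : ℝ)) =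
      weightedCov (Finset.range (N + 1)) w (fun k ↦ (k : ℝ)) (fun k ↦ (k : ℝ)) := by
  have hcast : ∀ k ∈ Finset.range (N + 1), (k : ℝ) = N - (N - k : ℕ) := fun k hk ↦ by
    rw [Nat.cast_sub (by simpa [Nat.lt_succ_iff] using hk)]; ring
  have hmean : weightedMean (Finset.range (N + 1)) (fun k ↦ w (N - k)) (fun k ↦ (k : ℝ)) =
      weightedMean (Finset.range (N + 1)) w fun k ↦ N - (k : ℝ) := by
    rw [← weightedMean_range_reflect w fun k ↦ N - (k : ℝ)]
    exact weightedMean_congr hcast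
  have hsq : weightedMean (Finset.range (N + 1)) (fun k ↦ w (N - k)) (fun k ↦ (k * k : ℝ)) =
      weightedMean (Finset.range (N + 1)) w fun k ↦ (N - k) * (N - k : ℝ) := by
    rw [← weightedMean_range_reflect w fun k ↦ (N - k) * (N - k : ℝ)]
    exact weightedMean_congr fun k hk ↦ by rw [← hcast k hk]
  rw [weightedCov, hmean, hsq, ← hw.weightedCov_sub_const (fun k ↦ (k : ℝ)) (fun k ↦ (k : ℝ)) N N,
    weightedCov]
  simp only [← neg_sub (N : ℝ), neg_mul_neg]
  simp only [← neg_one_mul ((N : ℝ) - _), weightedMean_const_mul]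
  ring

theorem weightedMean_const_mul_weight {ι : Type*} {s : Finset ι} {w φ : ι → ℝ} {a : ℝ}
    (ha : a ≠ 0) : weightedMean s (fun i ↦ a * w i) φ = weightedMean s w φ := by
  simp only [weightedMean, mul_assoc, ← Finset.mul_sum, mul_div_mul_left _ _ ha]

theorem weightedMean_congr_weight {ι : Type*} {s : Finset ι} {v w φ : ι → ℝ}
    (h : ∀ i ∈ s, v i = w i) : weightedMean s v φ = weightedMean s w φ := by
  rw [weightedMean, weightedMean, Finset.sum_congr rfl h,
    Finset.sum_congr rfl fun i hi ↦ by rw [h i hi]]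

theorem contDiff_reflect {f : ℝ → ℝ} (hf : ContDiff ℝ ∞ f) : ContDiff ℝ ∞ fun x ↦ f (1 - x) :=
  hf.comp (contDiff_const.sub contDiff_id)

theorem deriv_reflect {f : ℝ → ℝ} (hf : ContDiff ℝ ∞ f) :
    deriv (fun x ↦ f (1 - x)) = fun x ↦ -deriv f (1 - x) := by
  ext x
  exact ((hasDerivAt_of_contDiff hf (1 - x)).comp x ((hasDerivAt_id x).const_sub 1)).deriv.trans
    (by ring)

variable {f : ℝ → ℝ}

theorem IsAdmissible.reflect {c K : ℝ} (h : IsAdmissible f c K) :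
    IsAdmissible (fun x ↦ f (1 - x)) c K := by
  have hf := h.contDiff
  have hderiv2 : deriv (deriv fun x ↦ f (1 - x)) = fun x ↦ deriv (deriv f) (1 - x) := by
    rw [deriv_reflect hf, deriv.fun_neg', deriv_reflect (contDiff_deriv hf)]
    simp only [neg_neg]
  have hmem : ∀ x ∈ Icc (0 : ℝ) 1, 1 - x ∈ Icc (0 : ℝ) 1 := fun x hx ↦
    ⟨sub_nonneg.2 hx.2, sub_le_self 1 hx.1⟩
  refine ⟨contDiff_reflect hf, h.c_pos, h.one_le_K, fun x hx ↦ ?_,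
    fun x hx ↦ ?_, fun x hx ↦ ?_, fun x hx ↦ ?_⟩
  · have hlower := h.le_hessRatio _ (hmem x hx)
    rw [hessRatio, sub_sub_cancel, mul_comm (1 - x)] at hlower
    rwa [hessRatio, hderiv2]
  · rw [deriv_reflect hf, abs_neg]
    exact h.abs_deriv_le _ (hmem x hx)
  · rw [hderiv2]
    exact h.abs_deriv2_le _ (hmem x hx)
  · rw [hderiv2, deriv_reflect (contDiff_deriv (contDiff_deriv hf)), abs_neg]
    exact h.abs_deriv3_le _ (hmem x hx)

theorem weightMass_reflect {k : ℕ} (hf : ContDiff ℝ ∞ f) (hk : k ≤ N) :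
    weightMass (fun x ↦ f (1 - x)) N k = weightMass f N (N - k) := by
  have hweight : ∀ x, weight (fun x ↦ f (1 - x)) N k x = weight f N (N - k) (1 - x) := by
    intro x
    rw [weight, weight, deriv_reflect hf, Nat.sub_sub_self hk, Nat.cast_sub hk, sub_sub_cancel,
      mul_comm (x ^ k)]
    ring_nf
  rw [weightMass_eq_integral (contDiff_reflect hf), weightMass_eq_integral hf]
  simp only [hweight]
  rw [intervalIntegral.integral_comp_sub_left fun x ↦ weight f N (N - k) x]
  simp only [sub_self, sub_zero]

end Reflection

/-! ### The Bergman weights and their variance near the ends of the interval -/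

/-- The `k`-th term of `E_N(t, ρ)` up to a factor independent of `k`, in which the norming constants
enter through the masses of the two endpoint potentials. -/
noncomputable def bergmanWeight (f₀ f₁ : ℝ → ℝ) (N : ℕ) (t ρ : ℝ) (k : ℕ) : ℝ :=
  Real.exp (k * ρ -
    ((1 - t) * Real.log (weightMass f₀ N k) + t * Real.log (weightMass f₁ N k)))

section BergmanWeight

variable {f₀ f₁ : ℝ → ℝ} {c K : ℝ} {N : ℕ} {t : ℝ}

theorem isPositiveWeight_bergmanWeight (f₀ f₁ : ℝ → ℝ) (N : ℕ) (t ρ : ℝ) :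
    IsPositiveWeight (Finset.range (N + 1)) (bergmanWeight f₀ f₁ N t ρ) :=
  ⟨⟨0, by simp⟩, fun _ _ ↦ Real.exp_pos _⟩

theorem massRatio_pos {f : ℝ → ℝ} (hf : ContDiff ℝ ∞ f) (N k : ℕ) : 0 < massRatio f N k :=
  div_pos (weightMass_pos hf N (k + 1)) (weightMass_pos hf N k)

theorem backwardRatio_bergmanWeight (hf₀ : ContDiff ℝ ∞ f₀) (hf₁ : ContDiff ℝ ∞ f₁) (N : ℕ)
    (t ρ : ℝ) (k : ℕ) :
    backwardRatio (bergmanWeight f₀ f₁ N t ρ) (k + 1) = Real.exp (-ρ +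
      ((1 - t) * Real.log (massRatio f₀ N k) + t * Real.log (massRatio f₁ N k))) := by
  have hlog : ∀ {f}, ContDiff ℝ ∞ f → Real.log (massRatio f N k) =
      Real.log (weightMass f N (k + 1)) - Real.log (weightMass f N k) := fun hf ↦
    Real.log_div (weightMass_pos hf N (k + 1)).ne' (weightMass_pos hf N k).ne'
  rw [backwardRatio, bergmanWeight, bergmanWeight, ← Real.exp_sub, hlog hf₀, hlog hf₁]
  congr 1
  push_cast
  ring

theorem backwardRatio_bergmanWeight_eq_rpow (hf₀ : ContDiff ℝ ∞ f₀) (hf₁ : ContDiff ℝ ∞ f₁)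
    (N : ℕ) (t ρ : ℝ) (k : ℕ) :
    backwardRatio (bergmanWeight f₀ f₁ N t ρ) (k + 1) =
      Real.exp (-ρ) * (massRatio f₀ N k ^ (1 - t) * massRatio f₁ N k ^ t) := by
  rw [backwardRatio_bergmanWeight hf₀ hf₁, Real.rpow_def_of_pos (massRatio_pos hf₀ N k),
    Real.rpow_def_of_pos (massRatio_pos hf₁ N k), ← Real.exp_add, ← Real.exp_add,
    mul_comm (1 - t), mul_comm t]

namespace IsAdmissible

variable (h₀ : IsAdmissible f₀ c K) (h₁ : IsAdmissible f₁ c K) (ht : t ∈ Icc (0 : ℝ) 1)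
include h₀ h₁ ht

theorem backwardRatio_add_le (ρ : ℝ) {k : ℕ} (hk : k < N) :
    backwardRatio (bergmanWeight f₀ f₁ N t ρ) k + Real.exp (-ρ) * (ratioGap c K / N) ≤
      backwardRatio (bergmanWeight f₀ f₁ N t ρ) (k + 1) := by
  have hN : (0 : ℝ) < N := Nat.cast_pos.2 (by omega)
  have hgap : 0 < ratioGap c K / N := div_pos h₀.ratioGap_pos hN
  have hgap_rpow : (ratioGap c K / N) ^ (1 - t) * (ratioGap c K / N) ^ t = ratioGap c K / N := by
    rw [← Real.rpow_add hgap, sub_add_cancel, Real.rpow_one]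
  have ht₁ := sub_nonneg.2 ht.2
  rw [backwardRatio_bergmanWeight_eq_rpow h₀.contDiff h₁.contDiff]
  rcases k with _ | k
  · rw [backwardRatio, zero_add, ← hgap_rpow]
    have := massRatio_pos h₀.contDiff N 0
    gcongr
    exacts [h₀.ratioGap_le_massRatio_zero (by omega), ht.1,
      h₁.ratioGap_le_massRatio_zero (by omega)]
  · have hr₀ := massRatio_pos h₀.contDiff N k
    have hr₁ := massRatio_pos h₁.contDiff N k
    have := massRatio_pos h₀.contDiff N (k + 1)
    rw [backwardRatio_bergmanWeight_eq_rpow h₀.contDiff h₁.contDiff, ← mul_add]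
    nth_rewrite 1 [← hgap_rpow]
    gcongr
    refine (rpow_mul_rpow_add_le hr₀ hr₁ hgap hgap ht).trans ?_
    gcongr
    exacts [h₀.massRatio_add_le hk, ht.1, h₁.massRatio_add_le hk]

theorem weightedCov_natCast_le_exp (hN : 1 ≤ N) (ρ : ℝ) :
    weightedCov (Finset.range (N + 1)) (bergmanWeight f₀ f₁ N t ρ) (fun k ↦ (k : ℝ))
      (fun k ↦ (k : ℝ)) ≤ N / ratioGap c K * Real.exp ρ := by
  have hgap := h₀.ratioGap_pos
  have hbound := mul_weightedCov_natCast_le_one (isPositiveWeight_bergmanWeight f₀ f₁ N t ρ)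
    fun k hk ↦ h₀.backwardRatio_add_le h₁ ht ρ hk
  rw [mul_comm, ← le_div_iff₀ (by positivity)] at hbound
  refine hbound.trans_eq ?_
  rw [Real.exp_neg]
  field_simp

theorem weightedCov_natCast_le_exp_neg (hN : 1 ≤ N) (ρ : ℝ) :
    weightedCov (Finset.range (N + 1)) (bergmanWeight f₀ f₁ N t ρ) (fun k ↦ (k : ℝ))
      (fun k ↦ (k : ℝ)) ≤ N / ratioGap c K * Real.exp (-ρ) := by
  have hreflect : ∀ k ∈ Finset.range (N + 1), bergmanWeight f₀ f₁ N t ρ (N - k) =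
      Real.exp (N * ρ) *
        bergmanWeight (fun x ↦ f₀ (1 - x)) (fun x ↦ f₁ (1 - x)) N t (-ρ) k := by
    intro k hk
    have hkN : k ≤ N := by simpa [Nat.lt_succ_iff] using hk
    rw [bergmanWeight, bergmanWeight, ← Real.exp_add, weightMass_reflect h₀.contDiff hkN,
      weightMass_reflect h₁.contDiff hkN, Nat.cast_sub hkN]
    congr 1
    ring
  rw [← weightedCov_natCast_reflect (isPositiveWeight_bergmanWeight f₀ f₁ N t ρ)]
  refine le_trans (le_of_eq ?_) (h₀.reflect.weightedCov_natCast_le_exp h₁.reflect ht hN (-ρ))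
  simp only [weightedCov, weightedMean_congr_weight hreflect,
    weightedMean_const_mul_weight (Real.exp_pos _).ne']

end IsAdmissible

end BergmanWeight

/-! ### Linear paths of perturbations -/

/-- The path `f_t = (1 - t) f₀ + t f₁`, so that `G_t = G_P + f_t`. -/
def linearPath (f₀ f₁ : ℝ → ℝ) (t x : ℝ) : ℝ := (1 - t) * f₀ x + t * f₁ x

section LinearPath

variable {f₀ f₁ : ℝ → ℝ} {c K t : ℝ}

theorem contDiff_linearPath (hf₀ : ContDiff ℝ ∞ f₀) (hf₁ : ContDiff ℝ ∞ f₁) (t : ℝ) :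
    ContDiff ℝ ∞ (linearPath f₀ f₁ t) :=
  (contDiff_const.mul hf₀).add (contDiff_const.mul hf₁)

theorem deriv_linearPath (hf₀ : ContDiff ℝ ∞ f₀) (hf₁ : ContDiff ℝ ∞ f₁) (t : ℝ) :
    deriv (linearPath f₀ f₁ t) = linearPath (deriv f₀) (deriv f₁) t := by
  ext x
  exact (((hasDerivAt_of_contDiff hf₀ x).const_mul (1 - t)).add
    ((hasDerivAt_of_contDiff hf₁ x).const_mul t)).deriv

theorem symplecticPotential_linearPath (f₀ f₁ : ℝ → ℝ) (t x : ℝ) :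
    symplecticPotential (linearPath f₀ f₁ t) x =
      (1 - t) * symplecticPotential f₀ x + t * symplecticPotential f₁ x := by
  simp only [symplecticPotential, linearPath]
  ring

theorem symplecticGradient_linearPath (hf₀ : ContDiff ℝ ∞ f₀) (hf₁ : ContDiff ℝ ∞ f₁) (t x : ℝ) :
    symplecticGradient (linearPath f₀ f₁ t) x =
      (1 - t) * symplecticGradient f₀ x + t * symplecticGradient f₁ x := by
  rw [symplecticGradient, deriv_linearPath hf₀ hf₁]
  simp only [symplecticGradient, linearPath]
  ring

theorem hessRatio_linearPath (hf₀ : ContDiff ℝ ∞ f₀) (hf₁ : ContDiff ℝ ∞ f₁) (t x : ℝ) :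
    hessRatio (linearPath f₀ f₁ t) x = (1 - t) * hessRatio f₀ x + t * hessRatio f₁ x := by
  rw [hessRatio, deriv_linearPath hf₀ hf₁,
    deriv_linearPath (contDiff_deriv hf₀) (contDiff_deriv hf₁)]
  simp only [hessRatio, linearPath]
  ring

theorem symplecticHessian_linearPath (hf₀ : ContDiff ℝ ∞ f₀) (hf₁ : ContDiff ℝ ∞ f₁) (t x : ℝ) :
    symplecticHessian (linearPath f₀ f₁ t) x =
      (1 - t) * symplecticHessian f₀ x + t * symplecticHessian f₁ x := by
  simp only [symplecticHessian, hessRatio_linearPath hf₀ hf₁]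
  ring

theorem one_sub_mul_add_mul_mem {s : Set ℝ} (hs : Convex ℝ s) (ht : t ∈ Icc (0 : ℝ) 1) {a b : ℝ}
    (ha : a ∈ s) (hb : b ∈ s) : (1 - t) * a + t * b ∈ s :=
  hs ha hb (sub_nonneg.2 ht.2) ht.1 (sub_add_cancel 1 t)

theorem IsAdmissible.isAdmissible_linearPath (h₀ : IsAdmissible f₀ c K) (h₁ : IsAdmissible f₁ c K)
    (ht : t ∈ Icc (0 : ℝ) 1) : IsAdmissible (linearPath f₀ f₁ t) c K := by
  have hf₀ := h₀.contDiff
  have hf₁ := h₁.contDiff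
  have habs : ∀ {a b : ℝ}, |a| ≤ K → |b| ≤ K → |(1 - t) * a + t * b| ≤ K := fun ha hb ↦
    abs_le.2 (one_sub_mul_add_mul_mem (convex_Icc (-K) K) ht (abs_le.1 ha) (abs_le.1 hb))
  have hd₁ := deriv_linearPath hf₀ hf₁ t
  have hd₂ := deriv_linearPath (contDiff_deriv hf₀) (contDiff_deriv hf₁) t
  have hd₃ := deriv_linearPath (contDiff_deriv (contDiff_deriv hf₀))
    (contDiff_deriv (contDiff_deriv hf₁)) t
  refine ⟨contDiff_linearPath hf₀ hf₁ t, h₀.c_pos, h₀.one_le_K, fun x hx ↦ ?_, fun x hx ↦ ?_,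
    fun x hx ↦ ?_, fun x hx ↦ ?_⟩
  · rw [hessRatio_linearPath hf₀ hf₁]
    exact one_sub_mul_add_mul_mem (convex_Ici c) ht (h₀.le_hessRatio x hx) (h₁.le_hessRatio x hx)
  · rw [hd₁]
    exact habs (h₀.abs_deriv_le x hx) (h₁.abs_deriv_le x hx)
  · rw [hd₁, hd₂]
    exact habs (h₀.abs_deriv2_le x hx) (h₁.abs_deriv2_le x hx)
  · rw [hd₁, hd₂, hd₃]
    exact habs (h₀.abs_deriv3_le x hx) (h₁.abs_deriv3_le x hx)

end LinearPath

/-! ### Concentration of the Bergman weights -/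

/-- The value at the slope `ρ = G'(x)` of the Legendre transform of `G = G_P + f`. -/
noncomputable def legendreValue (f : ℝ → ℝ) (x : ℝ) : ℝ :=
  x * symplecticGradient f x - symplecticPotential f x

/-- A bound for the error `N G(k/N) - log M_k` of Laplace's method. -/
noncomputable def logError (K : ℝ) (N : ℕ) : ℝ := 2 * K + Real.log (N + 1)

/-- The Bergman weight in the moment coordinate `x`, that is, at the slope `ρ = G_t'(x)`. -/
noncomputable def momentWeight (f₀ f₁ : ℝ → ℝ) (N : ℕ) (t x : ℝ) : ℕ → ℝ :=
  bergmanWeight f₀ f₁ N t (symplecticGradient (linearPath f₀ f₁ t) x)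

/-- The deviation of the lattice point `k / N` from `x`. -/
noncomputable def deviation (N : ℕ) (x : ℝ) (k : ℕ) : ℝ := k / N - x

section Concentration

variable {f f₀ f₁ : ℝ → ℝ} {c K t x : ℝ} {N k : ℕ}

theorem isPositiveWeight_momentWeight (f₀ f₁ : ℝ → ℝ) (N : ℕ) (t x : ℝ) :
    IsPositiveWeight (Finset.range (N + 1)) (momentWeight f₀ f₁ N t x) :=
  isPositiveWeight_bergmanWeight f₀ f₁ N t _

theorem abs_deviation_le_one (hk : k ≤ N) (hx : x ∈ Ioo (0 : ℝ) 1) : |deviation N x k| ≤ 1 := by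
  have hmem := natCast_div_mem_Icc hk
  exact abs_le.2 ⟨by rw [deviation]; linarith [hmem.1, hx.2],
    by rw [deviation]; linarith [hmem.2, hx.1]⟩

theorem IsAdmissible.symplecticPotential_sub_log_weightMass_mem (h : IsAdmissible f c K)
    (hN : 1 ≤ N) (hk : k ≤ N) :
    N * symplecticPotential f (k / N) - Real.log (weightMass f N k) ∈ Icc 0 (logError K N) := by
  have hM := weightMass_pos h.contDiff N k
  have hupper := (Real.log_le_iff_le_exp hM).2 (h.weightMass_le hN hk)
  have hlower := Real.log_le_log (by positivity) (h.le_weightMass hN hk)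
  rw [Real.log_mul (by positivity) (by positivity), Real.log_div (by positivity) (by positivity),
    Real.log_exp, Real.log_exp] at hlower
  rw [logError]
  exact ⟨by linarith, by linarith⟩

variable (h₀ : IsAdmissible f₀ c K) (h₁ : IsAdmissible f₁ c K) (ht : t ∈ Icc (0 : ℝ) 1)
  (hN : 1 ≤ N) (hx : x ∈ Ioo (0 : ℝ) 1)

namespace IsAdmissible

include h₀ h₁ ht hN hx

theorem exists_momentWeight_eq_exp (hk : k ≤ N) : ∃ r ∈ Icc 0 (logError K N),
    momentWeight f₀ f₁ N t x k = Real.exp (N * legendreValue (linearPath f₀ f₁ t) x -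
      N * Phase (symplecticPotential (linearPath f₀ f₁ t)) (k / N) x + r) := by
  refine ⟨_, one_sub_mul_add_mul_mem (convex_Icc _ _) ht
    (h₀.symplecticPotential_sub_log_weightMass_mem hN hk)
    (h₁.symplecticPotential_sub_log_weightMass_mem hN hk), ?_⟩
  have hN' : (N : ℝ) ≠ 0 := by positivity
  rw [momentWeight, bergmanWeight,
    Phase_symplecticPotential (h₀.isAdmissible_linearPath h₁ ht).contDiff _ hx, legendreValue,
    symplecticPotential_linearPath f₀ f₁ t (k / N)]
  congr 1
  field_simp
  ring

theorem momentWeight_le (hk : k ≤ N) : momentWeight f₀ f₁ N t x k ≤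
    Real.exp (N * legendreValue (linearPath f₀ f₁ t) x + logError K N -
      N * (c / 2) * deviation N x k ^ 2) := by
  obtain ⟨r, hr, hexp⟩ := h₀.exists_momentWeight_eq_exp h₁ ht hN hx hk
  have hPhase := mul_le_mul_of_nonneg_left
    ((h₀.isAdmissible_linearPath h₁ ht).mul_sq_le_Phase (natCast_div_mem_Icc hk) hx) N.cast_nonneg
  rw [hexp]
  refine Real.exp_le_exp.2 ?_
  rw [deviation]
  linarith [hr.2]

theorem le_sum_momentWeight : Real.exp (N * legendreValue (linearPath f₀ f₁ t) x - K) ≤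
    ∑ k ∈ Finset.range (N + 1), momentWeight f₀ f₁ N t x k := by
  have hsum := (h₀.isAdmissible_linearPath h₁ ht).exp_neg_le_sum_exp_Phase hN hx
  rw [sub_eq_add_neg, Real.exp_add]
  refine (mul_le_mul_of_nonneg_left hsum (Real.exp_pos _).le).trans ?_
  rw [Finset.mul_sum]
  refine Finset.sum_le_sum fun k hk ↦ ?_
  obtain ⟨r, hr, hexp⟩ := h₀.exists_momentWeight_eq_exp h₁ ht hN hx
    (Finset.mem_range_succ_iff.1 hk)
  rw [hexp, ← Real.exp_add]
  exact Real.exp_le_exp.2 (by linarith [hr.1])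

theorem sum_momentWeight_le : ∑ k ∈ Finset.range (N + 1), momentWeight f₀ f₁ N t x k ≤
    (N + 1) * Real.exp (N * legendreValue (linearPath f₀ f₁ t) x + logError K N) := by
  have hc := h₀.c_pos
  have hle : ∀ k ∈ Finset.range (N + 1), momentWeight f₀ f₁ N t x k ≤
      Real.exp (N * legendreValue (linearPath f₀ f₁ t) x + logError K N) := fun k hk ↦
    (h₀.momentWeight_le h₁ ht hN hx (Finset.mem_range_succ_iff.1 hk)).trans
      (Real.exp_le_exp.2 (sub_le_self _ (by positivity)))
  simpa using Finset.sum_le_card_nsmul _ _ _ hle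

theorem abs_log_sum_momentWeight_sub_le :
    |Real.log (∑ k ∈ Finset.range (N + 1), momentWeight f₀ f₁ N t x k) -
      N * legendreValue (linearPath f₀ f₁ t) x| ≤ 2 * logError K N := by
  have hpos := (isPositiveWeight_momentWeight f₀ f₁ N t x).sum_pos
  have hlower := Real.log_le_log (Real.exp_pos _) (h₀.le_sum_momentWeight h₁ ht hN hx)
  have hupper := Real.log_le_log hpos (h₀.sum_momentWeight_le h₁ ht hN hx)
  rw [Real.log_exp] at hlower
  rw [Real.log_mul (by positivity) (Real.exp_pos _).ne', Real.log_exp] at hupper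
  have hK := h₀.one_le_K
  have hlog : 0 ≤ Real.log (N + 1) := Real.log_nonneg (by linarith [N.cast_nonneg (α := ℝ)])
  refine abs_le.2 ⟨?_, ?_⟩ <;> rw [logError] at * <;> linarith

theorem momentWeight_le_mul_sum (hk : k ≤ N) : momentWeight f₀ f₁ N t x k ≤
    (N + 1) * Real.exp (3 * K - N * (c / 2) * deviation N x k ^ 2) *
      ∑ k ∈ Finset.range (N + 1), momentWeight f₀ f₁ N t x k := by
  have hexp : N * legendreValue (linearPath f₀ f₁ t) x + logError K N -
      N * (c / 2) * deviation N x k ^ 2 = Real.log (N + 1) +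
        (3 * K - N * (c / 2) * deviation N x k ^ 2) +
          (N * legendreValue (linearPath f₀ f₁ t) x - K) := by
    rw [logError]
    ring
  calc _ ≤ _ := h₀.momentWeight_le h₁ ht hN hx hk
    _ = (N + 1) * Real.exp (3 * K - N * (c / 2) * deviation N x k ^ 2) *
          Real.exp (N * legendreValue (linearPath f₀ f₁ t) x - K) := by
        rw [hexp, Real.exp_add, Real.exp_add, Real.exp_log (by positivity)]
    _ ≤ _ := by gcongr; exact h₀.le_sum_momentWeight h₁ ht hN hx

theorem weightedMean_abs_deviation_pow_three_le {η : ℝ} (hη : 0 ≤ η) :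
    weightedMean (Finset.range (N + 1)) (momentWeight f₀ f₁ N t x)
      (fun k ↦ |deviation N x k| ^ 3) ≤
      η ^ 3 + (N + 1) ^ 2 * Real.exp (3 * K - N * (c / 2) * η ^ 2) := by
  have hc := h₀.c_pos
  have hpos := (isPositiveWeight_momentWeight f₀ f₁ N t x).sum_pos
  set Z := ∑ k ∈ Finset.range (N + 1), momentWeight f₀ f₁ N t x k
  set A := (N + 1) * Real.exp (3 * K - N * (c / 2) * η ^ 2) with hA
  have hterm : ∀ k ∈ Finset.range (N + 1), momentWeight f₀ f₁ N t x k * |deviation N x k| ^ 3 ≤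
      momentWeight f₀ f₁ N t x k * η ^ 3 + A * Z := by
    intro k hk
    have hkN := Finset.mem_range_succ_iff.1 hk
    have hw := (isPositiveWeight_momentWeight f₀ f₁ N t x).pos k hk
    rcases le_total |deviation N x k| η with hnear | hfar
    · exact (mul_le_mul_of_nonneg_left (by gcongr) hw.le).trans
        (le_add_of_nonneg_right (by positivity))
    · have hsq : η ^ 2 ≤ deviation N x k ^ 2 := by rw [← sq_abs (deviation N x k)]; gcongr
      calc _ ≤ momentWeight f₀ f₁ N t x k :=
            mul_le_of_le_one_right hw.le
              (pow_le_one₀ (abs_nonneg _) (abs_deviation_le_one hkN hx))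
        _ ≤ A * Z := (h₀.momentWeight_le_mul_sum h₁ ht hN hx hkN).trans (by rw [hA]; gcongr)
        _ ≤ _ := le_add_of_nonneg_left (by positivity)
  rw [weightedMean, div_le_iff₀ hpos]
  refine (Finset.sum_le_sum hterm).trans_eq ?_
  rw [Finset.sum_add_distrib, ← Finset.sum_mul, Finset.sum_const, Finset.card_range, nsmul_eq_mul]
  push_cast
  ring

end IsAdmissible

end Concentration

/-! ### Limits uniform in `(t, x)` -/

/-- The filter on triples `(N, t, x)` whose limits are those as `N → ∞`, uniform in `t ∈ [0, 1]`
and `x ∈ S`. -/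
def momentFilter (S : Set ℝ) : Filter (ℕ × ℝ × ℝ) := atTop ×ˢ 𝓟 (Icc 0 1 ×ˢ S)

/-- The mean for the weights `momentWeight` with parameters `p = (N, t, x)`. -/
noncomputable abbrev momentMean (f₀ f₁ : ℝ → ℝ) (p : ℕ × ℝ × ℝ) (φ : ℕ → ℝ) : ℝ :=
  weightedMean (Finset.range (p.1 + 1)) (momentWeight f₀ f₁ p.1 p.2.1 p.2.2) φ

/-- The covariance for the weights `momentWeight` with parameters `p = (N, t, x)`. -/
noncomputable abbrev momentCov (f₀ f₁ : ℝ → ℝ) (p : ℕ × ℝ × ℝ) (φ ψ : ℕ → ℝ) : ℝ :=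
  weightedCov (Finset.range (p.1 + 1)) (momentWeight f₀ f₁ p.1 p.2.1 p.2.2) φ ψ

section MomentFilter

variable {S T : Set ℝ}

theorem eventually_momentFilter {P : ℕ × ℝ × ℝ → Prop} : (∀ᶠ p in momentFilter S, P p) ↔
    ∀ᶠ N in atTop, ∀ t ∈ Icc (0 : ℝ) 1, ∀ x ∈ S, P (N, t, x) := by
  simp only [momentFilter, eventually_prod_principal_iff, Prod.forall, mem_prod, and_imp]
  exact eventually_congr (Eventually.of_forall fun N ↦ by tauto)

theorem momentFilter_mono (h : S ⊆ T) : momentFilter S ≤ momentFilter T :=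
  prod_mono le_rfl (principal_mono.2 (prod_mono_right h))

theorem tendsto_fst_momentFilter : Tendsto Prod.fst (momentFilter S) atTop := tendsto_fst

theorem eventually_mem_momentFilter (S : Set ℝ) :
    ∀ᶠ p in momentFilter S, 1 ≤ p.1 ∧ p.2.1 ∈ Icc (0 : ℝ) 1 ∧ p.2.2 ∈ S :=
  eventually_momentFilter.2 ((eventually_ge_atTop 1).mono fun _ hN _ ht _ hx ↦ ⟨hN, ht, hx⟩)

end MomentFilter

section ErrorTerms

variable (a K : ℝ)

theorem tendsto_logError_pow_div (n : ℕ) :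
    Tendsto (fun N : ℕ ↦ logError K N ^ n / N) atTop (𝓝 0) := by
  have hy : Tendsto (fun N : ℕ ↦ Real.exp (2 * K) * ((N : ℝ) + 1)) atTop atTop :=
    (tendsto_natCast_atTop_atTop.atTop_add tendsto_const_nhds).const_mul_atTop (Real.exp_pos _)
  refine ((Real.tendsto_pow_log_div_mul_add_atTop (Real.exp (-(2 * K))) (-1) n
    (Real.exp_pos _).ne').comp hy).congr fun N ↦ ?_
  rw [Function.comp_apply, Real.log_mul (Real.exp_pos _).ne' (by positivity), Real.log_exp,
    ← mul_assoc, ← Real.exp_add, neg_add_cancel, Real.exp_zero, one_mul, add_neg_cancel_right,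
    logError]

-- In terms of `s = N ^ (1/5)` the two terms are at most `1 / s` and `4 exp (a - b s) s ^ 15`.
theorem tendsto_concentration_error {b : ℝ} (hb : 0 < b) :
    Tendsto (fun N : ℕ ↦ N * (((N : ℝ) ^ (-(2 / 5) : ℝ)) ^ 3 +
      (N + 1) ^ 2 * Real.exp (a - N * b * ((N : ℝ) ^ (-(2 / 5) : ℝ)) ^ 2))) atTop (𝓝 0) := by
  have hs : Tendsto (fun N : ℕ ↦ (N : ℝ) ^ (1 / 5 : ℝ)) atTop atTop :=
    (tendsto_rpow_atTop (by norm_num)).comp tendsto_natCast_atTop_atTop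
  have hbound := ((tendsto_inv_atTop_zero.comp hs).add
    (((tendsto_rpow_mul_exp_neg_mul_atTop_nhds_zero 15 b hb).comp hs).const_mul
      (4 * Real.exp a)))
  rw [mul_zero, add_zero] at hbound
  refine squeeze_zero' (Eventually.of_forall fun N ↦ by positivity) ?_ hbound
  filter_upwards [eventually_ge_atTop 1] with N hN
  have hN' : (1 : ℝ) ≤ N := by exact_mod_cast hN
  simp only [Function.comp_apply]
  set s := (N : ℝ) ^ (1 / 5 : ℝ)
  have hs0 : 0 < s := by positivity
  have hNs : (N : ℝ) = s ^ 5 := by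
    rw [← Real.rpow_natCast, ← Real.rpow_mul N.cast_nonneg]
    norm_num
  have hη : (N : ℝ) ^ (-(2 / 5) : ℝ) = (s ^ 2)⁻¹ := by
    rw [← Real.rpow_natCast, ← Real.rpow_mul N.cast_nonneg, ← Real.rpow_neg N.cast_nonneg]
    norm_num
  have hexp : Real.exp (a - N * b * (s ^ 2)⁻¹ ^ 2) = Real.exp a * Real.exp (-b * s) := by
    rw [← Real.exp_add, hNs]
    congr 1
    field_simp
    ring
  have h15 : s ^ (15 : ℝ) = s ^ 15 := by exact_mod_cast Real.rpow_natCast s 15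
  rw [hη, hexp, h15]
  calc (N : ℝ) * ((s ^ 2)⁻¹ ^ 3 + (N + 1) ^ 2 * (Real.exp a * Real.exp (-b * s)))
      ≤ N * ((s ^ 2)⁻¹ ^ 3 + (N + N) ^ 2 * (Real.exp a * Real.exp (-b * s))) := by gcongr
    _ = s⁻¹ + 4 * Real.exp a * (s ^ 15 * Real.exp (-b * s)) := by
      rw [hNs]
      field_simp
      ring

end ErrorTerms

namespace IsAdmissible

variable {f₀ f₁ : ℝ → ℝ} {c K : ℝ} (h₀ : IsAdmissible f₀ c K) (h₁ : IsAdmissible f₁ c K)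
include h₀ h₁

theorem tendsto_mul_mean_abs_deviation_pow_three : Tendsto
    (fun p ↦ p.1 * momentMean f₀ f₁ p fun k ↦ |deviation p.1 p.2.2 k| ^ 3)
    (momentFilter (Ioo 0 1)) (𝓝 0) := by
  have hc := h₀.c_pos
  refine squeeze_zero' (Eventually.of_forall fun p ↦ ?_) ?_
    ((tendsto_concentration_error (3 * K) (half_pos hc)).comp tendsto_fst_momentFilter)
  · exact mul_nonneg p.1.cast_nonneg
      ((isPositiveWeight_momentWeight f₀ f₁ _ _ _).weightedMean_nonneg fun _ _ ↦ by positivity)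
  · filter_upwards [eventually_mem_momentFilter (Ioo 0 1)] with ⟨N, t, x⟩ ⟨hN, ht, hx⟩
    exact mul_le_mul_of_nonneg_left
      (h₀.weightedMean_abs_deviation_pow_three_le h₁ ht hN hx (by positivity)) N.cast_nonneg

-- If `|u| ≥ N ^ (-1/2)`, then `|u| ≤ N |u| ^ 3`.
theorem tendsto_mean_abs_deviation : Tendsto
    (fun p ↦ momentMean f₀ f₁ p fun k ↦ |deviation p.1 p.2.2 k|)
    (momentFilter (Ioo 0 1)) (𝓝 0) := by
  have hsqrt : Tendsto (fun N : ℕ ↦ (√N)⁻¹) atTop (𝓝 0) :=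
    (Real.tendsto_sqrt_atTop.comp tendsto_natCast_atTop_atTop).inv_tendsto_atTop
  have hbound := (hsqrt.comp tendsto_fst_momentFilter).add
    (h₀.tendsto_mul_mean_abs_deviation_pow_three h₁)
  rw [add_zero] at hbound
  refine squeeze_zero' (Eventually.of_forall fun p ↦ ?_) ?_ hbound
  · exact (isPositiveWeight_momentWeight f₀ f₁ _ _ _).weightedMean_nonneg fun _ _ ↦ abs_nonneg _
  · filter_upwards [eventually_mem_momentFilter (Ioo 0 1)] with ⟨N, t, x⟩ ⟨hN, _, _⟩
    have hw := isPositiveWeight_momentWeight f₀ f₁ N t x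
    have hN' : (0 : ℝ) < N := by exact_mod_cast hN
    refine (hw.weightedMean_mono (ψ := fun k ↦ (√N)⁻¹ + N * |deviation N x k| ^ 3)
      fun k _ ↦ ?_).trans_eq ?_
    · rcases le_total |deviation N x k| (√N)⁻¹ with hnear | hfar
      · exact hnear.trans (le_add_of_nonneg_right (by positivity))
      · have hone : 1 ≤ N * |deviation N x k| ^ 2 := by
          calc 1 = N * (√N)⁻¹ ^ 2 := by
                rw [inv_pow, Real.sq_sqrt hN'.le, mul_inv_cancel₀ hN'.ne']
            _ ≤ _ := by gcongr
        calc |deviation N x k| ≤ |deviation N x k| * (N * |deviation N x k| ^ 2) :=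
              le_mul_of_one_le_right (abs_nonneg _) hone
          _ = N * |deviation N x k| ^ 3 := by ring
          _ ≤ _ := le_add_of_nonneg_left (by positivity)
    · rw [weightedMean_add, hw.weightedMean_const, weightedMean_const_mul]
      rfl

theorem tendsto_mean_deviation_sq : Tendsto
    (fun p ↦ momentMean f₀ f₁ p fun k ↦ deviation p.1 p.2.2 k ^ 2)
    (momentFilter (Ioo 0 1)) (𝓝 0) := by
  refine squeeze_zero' (Eventually.of_forall fun p ↦ ?_) ?_ (h₀.tendsto_mean_abs_deviation h₁)
  · exact (isPositiveWeight_momentWeight f₀ f₁ _ _ _).weightedMean_nonneg fun _ _ ↦ sq_nonneg _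
  · filter_upwards [eventually_mem_momentFilter (Ioo 0 1)] with ⟨N, t, x⟩ ⟨_, _, hx⟩
    refine (isPositiveWeight_momentWeight f₀ f₁ N t x).weightedMean_mono fun k hk ↦ ?_
    have hle := abs_deviation_le_one (Finset.mem_range_succ_iff.1 hk) hx
    rw [← sq_abs]
    exact pow_le_of_le_one (abs_nonneg _) hle two_ne_zero

theorem tendsto_log_sum_momentWeight_sub : Tendsto
    (fun p ↦ (Real.log (∑ k ∈ Finset.range (p.1 + 1), momentWeight f₀ f₁ p.1 p.2.1 p.2.2 k) -
      p.1 * legendreValue (linearPath f₀ f₁ p.2.1) p.2.2) / p.1)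
    (momentFilter (Ioo 0 1)) (𝓝 0) := by
  have hbound := ((tendsto_logError_pow_div K 1).comp
    (tendsto_fst_momentFilter (S := Ioo 0 1))).const_mul 2
  rw [mul_zero] at hbound
  refine squeeze_zero_norm' ?_ hbound
  filter_upwards [eventually_mem_momentFilter (Ioo 0 1)] with ⟨N, t, x⟩ ⟨hN, ht, hx⟩
  rw [Real.norm_eq_abs, abs_div, Nat.abs_cast, Function.comp_apply, ← mul_div_assoc, pow_one]
  exact div_le_div_of_nonneg_right (h₀.abs_log_sum_momentWeight_sub_le h₁ ht hN hx)
    N.cast_nonneg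

end IsAdmissible

/-! ### The discrete velocity -/

/-- The discrete velocity `(log M_k(f₁) - log M_k(f₀)) / N`, an approximation of
`(f₁ - f₀) (k / N)`; up to the factor `-N` it is the `t`-derivative of `log bergmanWeight`. -/
noncomputable def velocity (f₀ f₁ : ℝ → ℝ) (N k : ℕ) : ℝ :=
  (Real.log (weightMass f₁ N k) - Real.log (weightMass f₀ N k)) / N

/-- The error of the first-order expansion of `velocity` at `x`. -/
noncomputable def velocityRemainder (f₀ f₁ : ℝ → ℝ) (N : ℕ) (x : ℝ) (k : ℕ) : ℝ :=
  velocity f₀ f₁ N k - ((f₁ - f₀) x + deriv (f₁ - f₀) x * deviation N x k)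

namespace IsAdmissible

variable {f₀ f₁ : ℝ → ℝ} {c K : ℝ} (h₀ : IsAdmissible f₀ c K) (h₁ : IsAdmissible f₁ c K)
include h₀ h₁

theorem abs_velocity_sub_le {N k : ℕ} (hN : 1 ≤ N) (hk : k ≤ N) :
    |velocity f₀ f₁ N k - (f₁ - f₀) (k / N)| ≤ logError K N / N := by
  have hN' : (0 : ℝ) < N := by exact_mod_cast hN
  have hmem₀ := h₀.symplecticPotential_sub_log_weightMass_mem hN hk
  have hmem₁ := h₁.symplecticPotential_sub_log_weightMass_mem hN hk
  have hsplit : velocity f₀ f₁ N k - (f₁ - f₀) (k / N) =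
      (N * symplecticPotential f₀ (k / N) - Real.log (weightMass f₀ N k) -
        (N * symplecticPotential f₁ (k / N) - Real.log (weightMass f₁ N k))) / N := by
    rw [velocity, symplecticPotential, symplecticPotential, Pi.sub_apply]
    field_simp
    ring
  rw [hsplit, abs_div, abs_of_pos hN']
  gcongr
  exact abs_sub_le_iff.2 ⟨by linarith [hmem₀.2, hmem₁.1], by linarith [hmem₀.1, hmem₁.2]⟩

theorem exists_abs_velocityRemainder_le : ∃ B, ∀ N k : ℕ, ∀ x ∈ Ioo (0 : ℝ) 1, 1 ≤ N → k ≤ N →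
    |velocityRemainder f₀ f₁ N x k| ≤ logError K N / N + B * deviation N x k ^ 2 := by
  obtain ⟨B, _, _, taylor⟩ := exists_taylor_bound isOpen_univ
    (h₁.contDiff.sub h₀.contDiff).contDiffOn (subset_univ (Icc 0 1))
  refine ⟨B, fun N k x hx hN hk ↦ ?_⟩
  have hsplit : velocityRemainder f₀ f₁ N x k = (velocity f₀ f₁ N k - (f₁ - f₀) (k / N)) +
      ((f₁ - f₀) (k / N) - (f₁ - f₀) x - deriv (f₁ - f₀) x * deviation N x k) := by
    rw [velocityRemainder]
    ring
  rw [hsplit]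
  exact (abs_add_le _ _).trans (add_le_add (h₀.abs_velocity_sub_le h₁ hN hk)
    (taylor x (Ioo_subset_Icc_self hx) _ (natCast_div_mem_Icc hk)))

theorem abs_deriv_sub_le {x : ℝ} (hx : x ∈ Icc (0 : ℝ) 1) : |deriv (f₁ - f₀) x| ≤ 2 * K := by
  have hderiv : deriv (f₁ - f₀) x = deriv f₁ x - deriv f₀ x :=
    ((hasDerivAt_of_contDiff h₁.contDiff x).sub (hasDerivAt_of_contDiff h₀.contDiff x)).deriv
  rw [hderiv]
  linarith [abs_sub (deriv f₁ x) (deriv f₀ x), h₀.abs_deriv_le x hx, h₁.abs_deriv_le x hx]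

theorem tendsto_mean_velocity_sub : Tendsto
    (fun p ↦ momentMean f₀ f₁ p (velocity f₀ f₁ p.1) - (f₁ - f₀) p.2.2)
    (momentFilter (Ioo 0 1)) (𝓝 0) := by
  obtain ⟨B, hle⟩ := h₀.exists_abs_velocityRemainder_le h₁
  have hbound := ((tendsto_logError_pow_div K 1).comp tendsto_fst_momentFilter).add
    (((h₀.tendsto_mean_deviation_sq h₁).const_mul B).add
      ((h₀.tendsto_mean_abs_deviation h₁).const_mul (2 * K)))
  simp only [mul_zero, add_zero] at hbound
  refine squeeze_zero_norm' ?_ hbound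
  filter_upwards [eventually_mem_momentFilter (Ioo 0 1)] with ⟨N, t, x⟩ ⟨hN, _, hx⟩
  have hw := isPositiveWeight_momentWeight f₀ f₁ N t x
  rw [momentMean, ← hw.weightedMean_const ((f₁ - f₀) x), ← weightedMean_sub, Real.norm_eq_abs]
  refine (hw.abs_weightedMean_le (ψ := fun k ↦ logError K N / N +
    (B * deviation N x k ^ 2 + 2 * K * |deviation N x k|)) fun k hk ↦ ?_).trans_eq ?_
  · have hrem := hle N k x hx hN (Finset.mem_range_succ_iff.1 hk)
    have hlin := mul_le_mul_of_nonneg_right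
      (h₀.abs_deriv_sub_le h₁ (Ioo_subset_Icc_self hx)) (abs_nonneg (deviation N x k))
    rw [← abs_mul] at hlin
    have hsplit : velocity f₀ f₁ N k - (f₁ - f₀) x =
        velocityRemainder f₀ f₁ N x k + deriv (f₁ - f₀) x * deviation N x k := by
      rw [velocityRemainder]
      ring
    rw [hsplit]
    linarith [abs_add_le (velocityRemainder f₀ f₁ N x k) (deriv (f₁ - f₀) x * deviation N x k)]
  · rw [weightedMean_add, weightedMean_add, hw.weightedMean_const, weightedMean_const_mul,
      weightedMean_const_mul, Function.comp_apply, pow_one]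

theorem tendsto_mul_mean_velocityRemainder_sq : Tendsto
    (fun p ↦ p.1 * momentMean f₀ f₁ p fun k ↦ velocityRemainder f₀ f₁ p.1 p.2.2 k ^ 2)
    (momentFilter (Ioo 0 1)) (𝓝 0) := by
  obtain ⟨B, hle⟩ := h₀.exists_abs_velocityRemainder_le h₁
  have hbound := (((tendsto_logError_pow_div K 2).comp tendsto_fst_momentFilter).const_mul 2).add
    ((h₀.tendsto_mul_mean_abs_deviation_pow_three h₁).const_mul (2 * B ^ 2))
  simp only [mul_zero, add_zero] at hbound
  refine squeeze_zero' (Eventually.of_forall fun p ↦ ?_) ?_ hbound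
  · exact mul_nonneg p.1.cast_nonneg
      ((isPositiveWeight_momentWeight f₀ f₁ _ _ _).weightedMean_nonneg fun _ _ ↦ sq_nonneg _)
  filter_upwards [eventually_mem_momentFilter (Ioo 0 1)] with ⟨N, t, x⟩ ⟨hN, _, hx⟩
  have hw := isPositiveWeight_momentWeight f₀ f₁ N t x
  have : (0 : ℝ) < N := by exact_mod_cast hN
  refine (mul_le_mul_of_nonneg_left (hw.weightedMean_mono (ψ := fun k ↦
    2 * (logError K N / N) ^ 2 + 2 * B ^ 2 * |deviation N x k| ^ 3) fun k hk ↦ ?_)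
    N.cast_nonneg).trans_eq ?_
  · have hk := Finset.mem_range_succ_iff.1 hk
    have hfour : (deviation N x k ^ 2) ^ 2 ≤ |deviation N x k| ^ 3 := by
      rw [← sq_abs (deviation N x k), ← pow_mul]
      exact pow_le_pow_of_le_one (abs_nonneg _) (abs_deviation_le_one hk hx) (by norm_num)
    calc velocityRemainder f₀ f₁ N x k ^ 2
        ≤ (logError K N / N + B * deviation N x k ^ 2) ^ 2 := by
          rw [← sq_abs]; gcongr; exact hle N k x hx hN hk
      _ ≤ 2 * ((logError K N / N) ^ 2 + (B * deviation N x k ^ 2) ^ 2) := add_sq_le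
      _ = 2 * (logError K N / N) ^ 2 + 2 * B ^ 2 * (deviation N x k ^ 2) ^ 2 := by ring
      _ ≤ _ := by gcongr
  · rw [weightedMean_add, hw.weightedMean_const, weightedMean_const_mul]
    simp only [Function.comp_apply]
    field_simp

end IsAdmissible

/-! ### The variance in the interior -/

theorem Icc_one_sub_subset_Ioo {δ : ℝ} (hδ : 0 < δ) : Icc δ (1 - δ) ⊆ Ioo (0 : ℝ) 1 :=
  Icc_subset_Ioo hδ (by linarith)

theorem abs_exp_sub_one_sub_le {v w e : ℝ} (hvw : |v - w| ≤ e) (hw : |w| ≤ 1 / 2)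
    (he : e ≤ 1 / 2) : |Real.exp v - 1 - w| ≤ 2 * w ^ 2 + 2 * e := by
  have he0 : 0 ≤ e := (abs_nonneg _).trans hvw
  have hsplit : v = w + (v - w) := by ring
  have hv : |v| ≤ 1 := by
    rw [hsplit]
    linarith [abs_add_le w (v - w)]
  have hsq : v ^ 2 ≤ 2 * w ^ 2 + e := by
    calc v ^ 2 = (w + (v - w)) ^ 2 := by rw [← hsplit]
      _ ≤ 2 * (w ^ 2 + (v - w) ^ 2) := add_sq_le
      _ ≤ 2 * (w ^ 2 + e ^ 2) := by rw [← sq_abs (v - w)]; gcongr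
      _ ≤ 2 * w ^ 2 + e := by nlinarith
  calc |Real.exp v - 1 - w| = |(Real.exp v - 1 - v) + (v - w)| := by congr 1; ring
    _ ≤ v ^ 2 + e := (abs_add_le _ _).trans
        (add_le_add (Real.abs_exp_sub_one_sub_id_le hv) hvw)
    _ ≤ _ := by linarith

theorem abs_exp_sub_one_add_mul_le {v d u e C D : ℝ} (hv : |v - d * u| ≤ C * (u ^ 2 + e))
    (hd : d ∈ Icc 0 D) (he : 0 ≤ e) (hu : D * |u| ≤ 1 / 2) (hC : C * (u ^ 2 + e) ≤ 1 / 2) :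
    |Real.exp v - (1 + d * u)| ≤ (2 * D ^ 2 + 2 * C) * (u ^ 2 + e) := by
  have hdu : |d * u| ≤ D * |u| := by
    rw [abs_mul, abs_of_nonneg hd.1]
    exact mul_le_mul_of_nonneg_right hd.2 (abs_nonneg u)
  have hsq : (d * u) ^ 2 ≤ D ^ 2 * (u ^ 2 + e) := by
    calc (d * u) ^ 2 ≤ D ^ 2 * u ^ 2 := by
          rw [mul_pow]
          exact mul_le_mul_of_nonneg_right (pow_le_pow_left₀ hd.1 hd.2 2) (sq_nonneg u)
      _ ≤ D ^ 2 * (u ^ 2 + e) := by gcongr; linarith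
  have hexp := abs_exp_sub_one_sub_le hv (hdu.trans hu) hC
  rw [sub_sub] at hexp
  linarith

theorem exists_eq_add_one_of_abs_deviation_lt {N k : ℕ} {x : ℝ} (h : |deviation N x k| < x) :
    ∃ j, k = j + 1 := by
  refine Nat.exists_eq_succ_of_ne_zero fun hk ↦ ?_
  rw [hk, deviation, Nat.cast_zero, zero_div, zero_sub, abs_neg] at h
  exact h.not_ge (le_abs_self x)

/-- The error of the first-order expansion at `x` of the backward ratio of the Bergman weights. -/
noncomputable def backwardRatioError (f₀ f₁ : ℝ → ℝ) (N : ℕ) (t x : ℝ) (k : ℕ) : ℝ :=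
  backwardRatio (momentWeight f₀ f₁ N t x) k -
    (1 + symplecticHessian (linearPath f₀ f₁ t) x * deviation N x k)

section BackwardRatioExpansion

variable {f f₀ f₁ : ℝ → ℝ} {c K δ : ℝ}

namespace IsAdmissible

theorem symplecticHessian_le (h : IsAdmissible f c K) (hδ : 0 < δ) {x : ℝ}
    (hx : x ∈ Icc δ (1 - δ)) : symplecticHessian f x ≤ (1 + K) / (δ * δ) := by
  have hx01 := Icc_one_sub_subset_Ioo hδ hx
  have := h.one_le_K
  rw [symplecticHessian]
  gcongr
  · exact (le_abs_self _).trans (h.abs_hessRatio_le (Ioo_subset_Icc_self hx01))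
  · exact hx01.1.le
  · exact hx.1
  · linarith [hx.2]

theorem exists_abs_log_massRatio_sub_taylor_le (h : IsAdmissible f c K) (hδ : 0 < δ) :
    ∃ C, ∃ N₀ : ℕ, 0 < C ∧ ∀ N k : ℕ, N₀ ≤ N → k < N → ∀ x ∈ Icc δ (1 - δ),
      |deviation N x (k + 1)| ≤ δ / 2 →
      |Real.log (massRatio f N k) -
        (symplecticGradient f x + symplecticHessian f x * deviation N x (k + 1))| ≤
          C * (deviation N x (k + 1) ^ 2 + 1 / N) := by
  obtain ⟨C, N₀, hC, near⟩ := h.exists_abs_log_massRatio_sub_le (half_pos hδ)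
  obtain ⟨B, hB, -, taylor⟩ := exists_taylor_bound isOpen_Ioo
    (fun x hx ↦ (contDiffAt_symplecticGradient h.contDiff hx).contDiffWithinAt)
    (Icc_one_sub_subset_Ioo (half_pos hδ))
  refine ⟨B + C, N₀, by positivity, fun N k hN hk x hx hu ↦ ?_⟩
  have hx' : x ∈ Icc (δ / 2) (1 - δ / 2) := ⟨by linarith [hx.1], by linarith [hx.2]⟩
  have hα : ((k + 1 : ℕ) / N : ℝ) ∈ Icc (δ / 2) (1 - δ / 2) := by
    rw [deviation] at hu
    constructor <;> linarith [(abs_le.1 hu).1, (abs_le.1 hu).2, hx.1, hx.2]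
  have htaylor := taylor x hx' _ hα
  rw [(hasDerivAt_symplecticGradient h.contDiff (Icc_one_sub_subset_Ioo hδ hx)).deriv] at htaylor
  have hsplit : Real.log (massRatio f N k) -
      (symplecticGradient f x + symplecticHessian f x * deviation N x (k + 1)) =
      (symplecticGradient f ((k + 1 : ℕ) / N) - symplecticGradient f x -
        symplecticHessian f x * ((k + 1 : ℕ) / N - x)) +
      (Real.log (massRatio f N k) - symplecticGradient f ((k + 1 : ℕ) / N)) := by
    rw [deviation]
    ring
  rw [hsplit]
  refine (abs_add_le _ _).trans ((add_le_add htaylor (near N k hN hk hα)).trans ?_)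
  rw [deviation, div_eq_mul_one_div C, mul_add]
  gcongr <;> linarith

variable (h₀ : IsAdmissible f₀ c K) (h₁ : IsAdmissible f₁ c K)
include h₀ h₁

theorem exists_abs_log_backwardRatio_sub_le (hδ : 0 < δ) : ∃ C, ∃ N₀ : ℕ, 0 < C ∧
    ∀ N k : ℕ, N₀ ≤ N → k < N → ∀ t ∈ Icc (0 : ℝ) 1, ∀ x ∈ Icc δ (1 - δ),
      |deviation N x (k + 1)| ≤ δ / 2 →
      |Real.log (backwardRatio (momentWeight f₀ f₁ N t x) (k + 1)) -
        symplecticHessian (linearPath f₀ f₁ t) x * deviation N x (k + 1)| ≤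
          C * (deviation N x (k + 1) ^ 2 + 1 / N) := by
  obtain ⟨C₀, N₀, hC₀, taylor₀⟩ := h₀.exists_abs_log_massRatio_sub_taylor_le hδ
  obtain ⟨C₁, N₁, hC₁, taylor₁⟩ := h₁.exists_abs_log_massRatio_sub_taylor_le hδ
  refine ⟨C₀ + C₁, max N₀ N₁, by positivity, fun N k hN hk t ht x hx hu ↦ ?_⟩
  have bound₀ := taylor₀ N k ((le_max_left _ _).trans hN) hk x hx hu
  have bound₁ := taylor₁ N k ((le_max_right _ _).trans hN) hk x hx hu
  set r := deviation N x (k + 1) ^ 2 + 1 / N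
  have : 0 ≤ r := by positivity
  rw [momentWeight, backwardRatio_bergmanWeight h₀.contDiff h₁.contDiff, Real.log_exp,
    symplecticGradient_linearPath h₀.contDiff h₁.contDiff,
    symplecticHessian_linearPath h₀.contDiff h₁.contDiff]
  have hmem := one_sub_mul_add_mul_mem (convex_Icc (-((C₀ + C₁) * r)) ((C₀ + C₁) * r)) ht
    (abs_le.1 (bound₀.trans (by gcongr; linarith)))
    (abs_le.1 (bound₁.trans (by gcongr; linarith)))
  refine abs_le.2 ⟨hmem.1.trans_eq ?_, Eq.trans_le ?_ hmem.2⟩ <;> ring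

theorem exists_abs_backwardRatioError_le_of_near (hδ : 0 < δ) : ∃ C η, 0 < C ∧ 0 < η ∧
    ∀ᶠ p in momentFilter (Icc δ (1 - δ)), ∀ k ≤ p.1, |deviation p.1 p.2.2 k| ≤ η →
      |backwardRatioError f₀ f₁ p.1 p.2.1 p.2.2 k| ≤
        C * (deviation p.1 p.2.2 k ^ 2 + 1 / p.1) := by
  obtain ⟨C, N₀, hC, hlog⟩ := h₀.exists_abs_log_backwardRatio_sub_le h₁ hδ
  set D := (1 + K) / (δ * δ)
  have hD : 0 < D := by have := h₀.one_le_K; positivity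
  set η := min (min (δ / 2) 1) (min (1 / (2 * D)) (1 / (4 * C)))
  have hη : 0 < η := by positivity
  have hη_le : η ≤ δ / 2 ∧ η ≤ 1 ∧ η * (2 * D) ≤ 1 ∧ η * (4 * C) ≤ 1 := by
    have hle := le_refl η
    simp only [η, le_min_iff] at hle
    exact ⟨hle.1.1, hle.1.2, (le_div_iff₀ (by positivity)).1 hle.2.1,
      (le_div_iff₀ (by positivity)).1 hle.2.2⟩
  obtain ⟨hηδ, hη1, hηD, hηC⟩ := hη_le
  refine ⟨2 * D ^ 2 + 2 * C, η, by positivity, hη, eventually_momentFilter.2 ?_⟩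
  have hlarge : ∀ᶠ N : ℕ in atTop, C * (1 / N) < 1 / 4 := by
    have := (tendsto_one_div_atTop_nhds_zero_nat (𝕜 := ℝ)).const_mul C
    rw [mul_zero] at this
    exact this.eventually_lt_const (by norm_num)
  filter_upwards [hlarge, eventually_ge_atTop N₀] with N hNC hN₀ t ht x hx k hk hu
  obtain ⟨j, rfl⟩ := exists_eq_add_one_of_abs_deviation_lt
    (show |deviation N x k| < x by linarith [hx.1])
  have hbound := hlog N j hN₀ hk t ht x hx (hu.trans hηδ)
  have hpath := h₀.isAdmissible_linearPath h₁ ht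
  have hd := hpath.symplecticHessian_le hδ hx
  have hd0 := (hpath.symplecticHessian_pos (Icc_one_sub_subset_Ioo hδ hx)).le
  have hu_sq : deviation N x (j + 1) ^ 2 ≤ η := by
    rw [← sq_abs]
    nlinarith [abs_nonneg (deviation N x (j + 1))]
  have hexp := abs_exp_sub_one_add_mul_le hbound ⟨hd0, hd⟩ (by positivity) (by nlinarith)
    (by nlinarith)
  rwa [Real.exp_log] at hexp
  rw [momentWeight, backwardRatio_bergmanWeight h₀.contDiff h₁.contDiff]
  exact Real.exp_pos _

-- Far from `x` the cubic terms dominate.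
theorem exists_abs_backwardRatioError_le (hδ : 0 < δ) : ∃ C, 0 < C ∧
    ∀ᶠ p in momentFilter (Icc δ (1 - δ)), ∀ k ≤ p.1,
      |backwardRatioError f₀ f₁ p.1 p.2.1 p.2.2 k| ≤
        C * (|deviation p.1 p.2.2 k| ^ 3 +
          backwardRatio (momentWeight f₀ f₁ p.1 p.2.1 p.2.2) k * |deviation p.1 p.2.2 k| ^ 3 +
          (deviation p.1 p.2.2 k ^ 2 + 1 / p.1)) := by
  obtain ⟨C, η, hC, hη, hnear⟩ := h₀.exists_abs_backwardRatioError_le_of_near h₁ hδ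
  set D := (1 + K) / (δ * δ)
  have hD : 0 < D := by have := h₀.one_le_K; positivity
  refine ⟨C + (1 + D) / η ^ 3, by positivity, ?_⟩
  filter_upwards [hnear, eventually_mem_momentFilter _] with ⟨N, t, x⟩ hNtx ⟨hN, ht, hx⟩ k hk
  have hx01 := Icc_one_sub_subset_Ioo hδ hx
  have hb : 0 ≤ backwardRatio (momentWeight f₀ f₁ N t x) k :=
    backwardRatio_nonneg (isPositiveWeight_momentWeight f₀ f₁ N t x) hk
  rcases le_or_gt |deviation N x k| η with hu | hu
  · refine (hNtx k hk hu).trans (mul_le_mul (le_add_of_nonneg_right (by positivity))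
      (le_add_of_nonneg_left (by positivity)) (by positivity) (by positivity))
  · have hpath := h₀.isAdmissible_linearPath h₁ ht
    have hd := hpath.symplecticHessian_le hδ hx
    have hd0 := (hpath.symplecticHessian_pos hx01).le
    have hcube : 1 ≤ |deviation N x k| ^ 3 / η ^ 3 :=
      (one_le_div (by positivity)).2 (pow_le_pow_left₀ hη.le hu.le 3)
    set b := backwardRatio (momentWeight f₀ f₁ N t x) k
    set d := symplecticHessian (linearPath f₀ f₁ t) x
    have hdu : |d * deviation N x k| ≤ D := by
      rw [abs_mul, abs_of_nonneg hd0]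
      exact (mul_le_of_le_one_right hd0 (abs_deviation_le_one hk hx01)).trans hd
    calc |backwardRatioError f₀ f₁ N t x k| ≤ (1 + D) * (1 + b) := by
          rw [backwardRatioError, abs_le]
          constructor <;> nlinarith [abs_le.1 hdu, mul_nonneg hD.le hb]
      _ ≤ (1 + D) * (1 + b) * (|deviation N x k| ^ 3 / η ^ 3) :=
          le_mul_of_one_le_right (by positivity) hcube
      _ = (1 + D) / η ^ 3 * (|deviation N x k| ^ 3 + b * |deviation N x k| ^ 3) := by ring
      _ ≤ _ := mul_le_mul (le_add_of_nonneg_left hC.le)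
          (le_add_of_nonneg_right (by positivity)) (by positivity) (by positivity)

end IsAdmissible

end BackwardRatioExpansion

/-- The Bergman probability of the endpoint `k = N`. -/
noncomputable def endpointMass (f₀ f₁ : ℝ → ℝ) (N : ℕ) (t x : ℝ) : ℝ :=
  momentWeight f₀ f₁ N t x N / ∑ k ∈ Finset.range (N + 1), momentWeight f₀ f₁ N t x k

section MomentIdentities

variable (f₀ f₁ : ℝ → ℝ) {N : ℕ} (hN : 1 ≤ N) (t x : ℝ)

theorem endpointMass_nonneg (N : ℕ) : 0 ≤ endpointMass f₀ f₁ N t x :=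
  div_nonneg ((isPositiveWeight_momentWeight f₀ f₁ N t x).pos N (Finset.self_mem_range_succ N)).le
    (isPositiveWeight_momentWeight f₀ f₁ N t x).sum_pos.le

theorem deviation_add_one (N k : ℕ) : deviation N x (k + 1) = deviation N x k + 1 / N := by
  rw [deviation, deviation]
  push_cast
  ring

theorem momentMean_backwardRatio_mul (φ : ℕ → ℝ) : momentMean f₀ f₁ (N, t, x)
    (fun k ↦ backwardRatio (momentWeight f₀ f₁ N t x) k * φ k) =
      momentMean f₀ f₁ (N, t, x) (fun k ↦ φ (k + 1)) -
        endpointMass f₀ f₁ N t x * φ (N + 1) := by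
  rw [momentMean, weightedMean_backwardRatio_mul (isPositiveWeight_momentWeight f₀ f₁ N t x),
    endpointMass, mul_div_right_comm]

theorem momentMean_backwardRatioError : momentMean f₀ f₁ (N, t, x)
    (backwardRatioError f₀ f₁ N t x) = -endpointMass f₀ f₁ N t x -
      symplecticHessian (linearPath f₀ f₁ t) x *
        momentMean f₀ f₁ (N, t, x) (deviation N x) := by
  have hone := momentMean_backwardRatio_mul f₀ f₁ (N := N) t x fun _ ↦ 1
  have hw := isPositiveWeight_momentWeight f₀ f₁ N t x
  simp only [mul_one, hw.weightedMean_const] at hone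
  unfold backwardRatioError
  simp only [weightedMean_sub, weightedMean_add, hw.weightedMean_const, weightedMean_const_mul,
    hone]
  ring

include hN

theorem deviation_self : deviation N x N = 1 - x := by
  rw [deviation, div_self (by positivity)]

theorem endpointMass_mul_le : endpointMass f₀ f₁ N t x * |1 - x| ^ 3 ≤
    momentMean f₀ f₁ (N, t, x) fun k ↦ |deviation N x k| ^ 3 := by
  have hw := isPositiveWeight_momentWeight f₀ f₁ N t x
  rw [endpointMass, ← mul_div_right_comm, ← deviation_self hN]
  exact div_le_div_of_nonneg_right (Finset.single_le_sum
    (f := fun k ↦ momentWeight f₀ f₁ N t x k * |deviation N x k| ^ 3)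
    (fun k hk ↦ mul_nonneg (hw.pos k hk).le (by positivity)) (Finset.self_mem_range_succ N))
    hw.sum_pos.le

theorem momentMean_backwardRatioError_mul_deviation : momentMean f₀ f₁ (N, t, x)
    (fun k ↦ backwardRatioError f₀ f₁ N t x k * deviation N x k) =
      1 / N - endpointMass f₀ f₁ N t x * (1 - x + 1 / N) -
        symplecticHessian (linearPath f₀ f₁ t) x *
          momentMean f₀ f₁ (N, t, x) fun k ↦ deviation N x k ^ 2 := by
  have hdev := momentMean_backwardRatio_mul f₀ f₁ (N := N) t x (deviation N x)
  have hw := isPositiveWeight_momentWeight f₀ f₁ N t x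
  simp only [deviation_add_one, deviation_self hN, weightedMean_add, hw.weightedMean_const]
    at hdev
  simp only [backwardRatioError, sub_mul, add_mul, one_mul, weightedMean_sub, weightedMean_add,
    mul_assoc, weightedMean_const_mul, ← sq, hdev]
  ring

theorem momentMean_backwardRatio_mul_abs_deviation_pow_three_le : momentMean f₀ f₁ (N, t, x)
    (fun k ↦ backwardRatio (momentWeight f₀ f₁ N t x) k * |deviation N x k| ^ 3) ≤
      4 * ((momentMean f₀ f₁ (N, t, x) fun k ↦ |deviation N x k| ^ 3) + (1 / N) ^ 3) := by
  have hw := isPositiveWeight_momentWeight f₀ f₁ N t x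
  have hcubes : ∀ k, |deviation N x (k + 1)| ^ 3 ≤ 4 * (|deviation N x k| ^ 3 + (1 / N) ^ 3) := by
    intro k
    have habs : |deviation N x (k + 1)| ≤ |deviation N x k| + 1 / N := by
      rw [deviation_add_one]
      exact (abs_add_le _ _).trans_eq (by rw [abs_of_nonneg (a := (1 / N : ℝ)) (by positivity)])
    refine (pow_le_pow_left₀ (abs_nonneg _) habs 3).trans
      ((add_pow_le (abs_nonneg _) (by positivity) 3).trans_eq (by norm_num))
  rw [momentMean_backwardRatio_mul]
  calc _ ≤ momentMean f₀ f₁ (N, t, x) fun k ↦ |deviation N x (k + 1)| ^ 3 :=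
        sub_le_self _ (mul_nonneg (endpointMass_nonneg f₀ f₁ t x N) (by positivity))
    _ ≤ momentMean f₀ f₁ (N, t, x) fun k ↦ 4 * (|deviation N x k| ^ 3 + (1 / N) ^ 3) :=
        hw.weightedMean_mono fun k _ ↦ hcubes k
    _ = _ := by simp only [weightedMean_const_mul, weightedMean_add, hw.weightedMean_const]

end MomentIdentities

namespace IsAdmissible

variable {f₀ f₁ : ℝ → ℝ} {c K δ : ℝ} (h₀ : IsAdmissible f₀ c K) (h₁ : IsAdmissible f₁ c K)
  (hδ : 0 < δ)
include h₀ h₁ hδ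

theorem tendsto_mul_mean_abs_deviation_pow_three_of_pos : Tendsto
    (fun p ↦ p.1 * momentMean f₀ f₁ p fun k ↦ |deviation p.1 p.2.2 k| ^ 3)
    (momentFilter (Icc δ (1 - δ))) (𝓝 0) :=
  (h₀.tendsto_mul_mean_abs_deviation_pow_three h₁).mono_left
    (momentFilter_mono (Icc_one_sub_subset_Ioo hδ))

theorem tendsto_mul_endpointMass : Tendsto
    (fun p ↦ p.1 * endpointMass f₀ f₁ p.1 p.2.1 p.2.2)
    (momentFilter (Icc δ (1 - δ))) (𝓝 0) := by
  have hbound := (h₀.tendsto_mul_mean_abs_deviation_pow_three_of_pos h₁ hδ).div_const (δ ^ 3)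
  rw [zero_div] at hbound
  refine squeeze_zero' (Eventually.of_forall fun p ↦
    mul_nonneg p.1.cast_nonneg (endpointMass_nonneg f₀ f₁ _ _ _)) ?_ hbound
  filter_upwards [eventually_mem_momentFilter _] with ⟨N, t, x⟩ ⟨hN, _, hx⟩
  rw [le_div_iff₀ (by positivity), mul_assoc]
  refine mul_le_mul_of_nonneg_left (le_trans ?_ (endpointMass_mul_le f₀ f₁ hN t x))
    N.cast_nonneg
  exact mul_le_mul_of_nonneg_left
    (pow_le_pow_left₀ hδ.le ((by linarith [hx.2]) : δ ≤ 1 - x) 3 |>.trans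
      (pow_le_pow_left₀ (by linarith [hx.2]) (le_abs_self _) 3))
    (endpointMass_nonneg f₀ f₁ _ _ _)

theorem tendsto_mul_mean_backwardRatio_mul_abs_deviation_pow_three : Tendsto
    (fun p ↦ p.1 * momentMean f₀ f₁ p fun k ↦
      backwardRatio (momentWeight f₀ f₁ p.1 p.2.1 p.2.2) k * |deviation p.1 p.2.2 k| ^ 3)
    (momentFilter (Icc δ (1 - δ))) (𝓝 0) := by
  have hinv := (tendsto_one_div_atTop_nhds_zero_nat (𝕜 := ℝ)).comp
    (tendsto_fst_momentFilter (S := Icc δ (1 - δ)))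
  have hbound := ((h₀.tendsto_mul_mean_abs_deviation_pow_three_of_pos h₁ hδ).add
    (hinv.pow 2)).const_mul 4
  rw [zero_pow two_ne_zero, add_zero, mul_zero] at hbound
  refine squeeze_zero' (Eventually.of_forall fun p ↦ ?_) ?_ hbound
  · have hw := isPositiveWeight_momentWeight f₀ f₁ p.1 p.2.1 p.2.2
    exact mul_nonneg p.1.cast_nonneg (hw.weightedMean_nonneg fun k hk ↦
      mul_nonneg (backwardRatio_nonneg hw (Finset.mem_range_succ_iff.1 hk)) (by positivity))
  · filter_upwards [eventually_mem_momentFilter _] with ⟨N, t, x⟩ ⟨hN, _, _⟩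
    refine (mul_le_mul_of_nonneg_left
      (momentMean_backwardRatio_mul_abs_deviation_pow_three_le f₀ f₁ hN t x)
      N.cast_nonneg).trans_eq ?_
    simp only [Function.comp_apply]
    field_simp

theorem tendsto_mul_mean_backwardRatioError_mul_deviation : Tendsto
    (fun p ↦ p.1 * momentMean f₀ f₁ p fun k ↦
      backwardRatioError f₀ f₁ p.1 p.2.1 p.2.2 k * deviation p.1 p.2.2 k)
    (momentFilter (Icc δ (1 - δ))) (𝓝 0) := by
  obtain ⟨C, hC, herror⟩ := h₀.exists_abs_backwardRatioError_le h₁ hδ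
  have hcube := h₀.tendsto_mul_mean_abs_deviation_pow_three_of_pos h₁ hδ
  have hbound := (((hcube.const_mul 2).add
    (h₀.tendsto_mul_mean_backwardRatio_mul_abs_deviation_pow_three h₁ hδ)).add
      ((h₀.tendsto_mean_abs_deviation h₁).mono_left
        (momentFilter_mono (Icc_one_sub_subset_Ioo hδ)))).const_mul C
  simp only [mul_zero, add_zero] at hbound
  refine squeeze_zero_norm' ?_ hbound
  filter_upwards [herror, eventually_mem_momentFilter _] with ⟨N, t, x⟩ herr ⟨hN, _, hx⟩
  have hw := isPositiveWeight_momentWeight f₀ f₁ N t x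
  have hx01 := Icc_one_sub_subset_Ioo hδ hx
  rw [Real.norm_eq_abs, abs_mul, Nat.abs_cast]
  refine (mul_le_mul_of_nonneg_left (hw.abs_weightedMean_le (ψ := fun k ↦
    C * (2 * |deviation N x k| ^ 3 + backwardRatio (momentWeight f₀ f₁ N t x) k *
      |deviation N x k| ^ 3 + 1 / N * |deviation N x k|)) fun k hk ↦ ?_)
        N.cast_nonneg).trans_eq ?_
  · have hk := Finset.mem_range_succ_iff.1 hk
    have hb : 0 ≤ backwardRatio (momentWeight f₀ f₁ N t x) k := backwardRatio_nonneg hw hk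
    have hu := abs_deviation_le_one hk hx01
    rw [abs_mul]
    refine (mul_le_mul_of_nonneg_right (herr k hk) (abs_nonneg _)).trans ?_
    rw [mul_assoc, ← sq_abs]
    refine mul_le_mul_of_nonneg_left ?_ hC.le
    have hu3 : |deviation N x k| ^ 3 * |deviation N x k| ≤ |deviation N x k| ^ 3 :=
      mul_le_of_le_one_right (by positivity) hu
    linarith [mul_le_mul_of_nonneg_left hu3 hb]
  · rw [weightedMean_const_mul, weightedMean_add, weightedMean_add, weightedMean_const_mul,
      weightedMean_const_mul]
    field_simp

-- Test the backward ratio against the deviation.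
theorem tendsto_symplecticHessian_mul_mean_deviation_sq : Tendsto
    (fun p ↦ symplecticHessian (linearPath f₀ f₁ p.2.1) p.2.2 *
      (p.1 * momentMean f₀ f₁ p fun k ↦ deviation p.1 p.2.2 k ^ 2))
    (momentFilter (Icc δ (1 - δ))) (𝓝 1) := by
  have hendpoint := (h₀.tendsto_mul_endpointMass h₁ hδ).const_mul 2
  have herror := h₀.tendsto_mul_mean_backwardRatioError_mul_deviation h₁ hδ
  have hbound := hendpoint.add herror.abs
  rw [mul_zero, abs_zero, add_zero] at hbound
  rw [tendsto_iff_norm_sub_tendsto_zero]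
  refine squeeze_zero' (Eventually.of_forall fun _ ↦ norm_nonneg _) ?_ hbound
  filter_upwards [eventually_mem_momentFilter _] with ⟨N, t, x⟩ ⟨hN, _, hx⟩
  have hidentity := momentMean_backwardRatioError_mul_deviation f₀ f₁ hN t x
  have hN' : (1 : ℝ) ≤ N := by exact_mod_cast hN
  have hsplit : symplecticHessian (linearPath f₀ f₁ t) x *
      (N * momentMean f₀ f₁ (N, t, x) fun k ↦ deviation N x k ^ 2) - 1 =
      -(N * endpointMass f₀ f₁ N t x * (1 - x + 1 / N) +
        N * momentMean f₀ f₁ (N, t, x) fun k ↦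
          backwardRatioError f₀ f₁ N t x k * deviation N x k) := by
    rw [hidentity]
    field_simp
    ring
  have hfactor : |1 - x + 1 / (N : ℝ)| ≤ 2 := by
    have hinv : 1 / (N : ℝ) ≤ 1 := (div_le_one (by linarith)).2 hN'
    have : 0 ≤ 1 / (N : ℝ) := by positivity
    exact abs_le.2 ⟨by linarith [hx.2], by linarith [hx.1]⟩
  rw [Real.norm_eq_abs, hsplit, abs_neg]
  refine (abs_add_le _ _).trans (add_le_add ?_ le_rfl)
  have hpos := mul_nonneg (N.cast_nonneg (α := ℝ)) (endpointMass_nonneg f₀ f₁ t x N)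
  rw [abs_mul, abs_of_nonneg hpos, mul_comm]
  exact mul_le_mul_of_nonneg_right hfactor hpos

theorem eventually_mul_mean_deviation_sq_le : ∀ᶠ p in momentFilter (Icc δ (1 - δ)),
    (p.1 * momentMean f₀ f₁ p fun k ↦ deviation p.1 p.2.2 k ^ 2) ≤ 2 / c := by
  filter_upwards [(h₀.tendsto_symplecticHessian_mul_mean_deviation_sq h₁ hδ).eventually_lt_const
    one_lt_two, eventually_mem_momentFilter _] with ⟨N, t, x⟩ hlt ⟨_, ht, hx⟩
  have hd := (h₀.isAdmissible_linearPath h₁ ht).le_symplecticHessian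
    (Icc_one_sub_subset_Ioo hδ hx)
  rw [le_div_iff₀ h₀.c_pos, mul_comm]
  exact (mul_le_mul_of_nonneg_right hd (mul_nonneg N.cast_nonneg
    ((isPositiveWeight_momentWeight f₀ f₁ N t x).weightedMean_nonneg
      fun _ _ ↦ sq_nonneg _))).trans hlt.le

-- Test the backward ratio against the constants.
theorem exists_mul_abs_mean_deviation_le : ∃ B, ∀ᶠ p in momentFilter (Icc δ (1 - δ)),
    p.1 * |momentMean f₀ f₁ p (deviation p.1 p.2.2)| ≤ B := by
  obtain ⟨C, hC, herror⟩ := h₀.exists_abs_backwardRatioError_le h₁ hδ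
  refine ⟨(1 + C * (1 + 1 + (2 / c + 1))) / c, ?_⟩
  filter_upwards [herror, eventually_mem_momentFilter _,
    h₀.eventually_mul_mean_deviation_sq_le h₁ hδ,
    (h₀.tendsto_mul_endpointMass h₁ hδ).eventually_le_const one_pos,
    (h₀.tendsto_mul_mean_abs_deviation_pow_three_of_pos h₁ hδ).eventually_le_const one_pos,
    (h₀.tendsto_mul_mean_backwardRatio_mul_abs_deviation_pow_three h₁ hδ).eventually_le_const
      one_pos] with ⟨N, t, x⟩ herr ⟨hN, ht, hx⟩ hsq hendpoint hcube hratio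
  have hw := isPositiveWeight_momentWeight f₀ f₁ N t x
  have hd := (h₀.isAdmissible_linearPath h₁ ht).le_symplecticHessian
    (Icc_one_sub_subset_Ioo hδ hx)
  have hmean := hw.abs_weightedMean_le fun k hk ↦ herr k (Finset.mem_range_succ_iff.1 hk)
  simp only [weightedMean_const_mul, weightedMean_add, hw.weightedMean_const] at hmean
  have hidentity := momentMean_backwardRatioError f₀ f₁ (N := N) t x
  have hc := h₀.c_pos
  set d := symplecticHessian (linearPath f₀ f₁ t) x
  set m := momentMean f₀ f₁ (N, t, x) (deviation N x)
  set e := momentMean f₀ f₁ (N, t, x) (backwardRatioError f₀ f₁ N t x)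
  have he : N * |e| ≤ C * (1 + 1 + (2 / c + 1)) := by
    refine (mul_le_mul_of_nonneg_left hmean N.cast_nonneg).trans ?_
    rw [mul_left_comm]
    refine mul_le_mul_of_nonneg_left ?_ hC.le
    rw [mul_add, mul_add, mul_add, mul_one_div_cancel (by positivity)]
    exact add_le_add (add_le_add hcube hratio) (add_le_add_left hsq 1)
  have hdm : d * m = -(endpointMass f₀ f₁ N t x + e) := by linarith
  rw [le_div_iff₀ hc]
  calc N * |m| * c ≤ N * |m| * d := by gcongr
    _ = N * |d * m| := by rw [abs_mul, abs_of_pos (hc.trans_le hd)]; ring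
    _ ≤ N * (endpointMass f₀ f₁ N t x + |e|) := by
      rw [hdm, abs_neg]
      gcongr
      exact (abs_add_le _ _).trans_eq
        (by rw [abs_of_nonneg (endpointMass_nonneg f₀ f₁ t x N)])
    _ ≤ 1 + C * (1 + 1 + (2 / c + 1)) := by
      rw [mul_add]
      exact add_le_add hendpoint he

theorem tendsto_mul_mean_deviation_sq : Tendsto
    (fun p ↦ p.1 * momentMean f₀ f₁ p (deviation p.1 p.2.2) ^ 2)
    (momentFilter (Icc δ (1 - δ))) (𝓝 0) := by
  obtain ⟨B, hB⟩ := h₀.exists_mul_abs_mean_deviation_le h₁ hδ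
  have hbound := ((h₀.tendsto_mean_abs_deviation h₁).mono_left
    (momentFilter_mono (Icc_one_sub_subset_Ioo hδ))).const_mul B
  rw [mul_zero] at hbound
  refine squeeze_zero' (Eventually.of_forall fun p ↦ by positivity) ?_ hbound
  filter_upwards [hB] with ⟨N, t, x⟩ hB
  have hle := (isPositiveWeight_momentWeight f₀ f₁ N t x).abs_weightedMean_le
    (φ := deviation N x) fun _ _ ↦ le_rfl
  rw [← sq_abs, sq, ← mul_assoc]
  exact mul_le_mul hB hle (abs_nonneg _) ((by positivity : (0 : ℝ) ≤ N * _).trans hB)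

theorem tendsto_mul_cov_deviation_sub_of_pos : Tendsto
    (fun p ↦ p.1 * momentCov f₀ f₁ p (deviation p.1 p.2.2) (deviation p.1 p.2.2) -
      1 / symplecticHessian (linearPath f₀ f₁ p.2.1) p.2.2)
    (momentFilter (Icc δ (1 - δ))) (𝓝 0) := by
  have hsq := (h₀.tendsto_symplecticHessian_mul_mean_deviation_sq h₁ hδ).sub_const 1
  have hbound := (hsq.abs.div_const c).add (h₀.tendsto_mul_mean_deviation_sq h₁ hδ)
  rw [sub_self, abs_zero, zero_div, add_zero] at hbound
  refine squeeze_zero_norm' ?_ hbound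
  filter_upwards [eventually_mem_momentFilter _] with ⟨N, t, x⟩ ⟨hN, ht, hx⟩
  have hd := (h₀.isAdmissible_linearPath h₁ ht).le_symplecticHessian
    (Icc_one_sub_subset_Ioo hδ hx)
  have hc := h₀.c_pos
  simp only [weightedCov, ← sq, mul_sub]
  set d := symplecticHessian (linearPath f₀ f₁ t) x
  set m₂ := momentMean f₀ f₁ (N, t, x) fun k ↦ deviation N x k ^ 2
  have hd0 : 0 < d := hc.trans_le hd
  have hquot : N * m₂ - 1 / d = (d * (N * m₂) - 1) / d := by
    field_simp
  rw [sub_right_comm, hquot]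
  refine (norm_sub_le _ _).trans (add_le_add ?_ (Real.norm_of_nonneg (by positivity)).le)
  rw [norm_div, Real.norm_eq_abs, Real.norm_of_nonneg hd0.le]
  gcongr

end IsAdmissible

/-! ### The covariances up to the boundary -/

section Boundary

variable {f f₀ f₁ : ℝ → ℝ} {c K t x : ℝ} {N : ℕ}

theorem exp_symplecticGradient (f : ℝ → ℝ) (hx : x ∈ Ioo (0 : ℝ) 1) :
    Real.exp (symplecticGradient f x) = x / (1 - x) * Real.exp (deriv f x) := by
  rw [symplecticGradient, Real.exp_add, Real.exp_sub, Real.exp_log hx.1,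
    Real.exp_log (sub_pos.2 hx.2)]

theorem IsAdmissible.min_exp_symplecticGradient_le (h : IsAdmissible f c K)
    (hx : x ∈ Ioo (0 : ℝ) 1) :
    min (Real.exp (symplecticGradient f x)) (Real.exp (-symplecticGradient f x)) ≤
      2 * Real.exp K * min x (1 - x) := by
  have hx' := sub_pos.2 hx.2
  have hx0 := hx.1
  have hderiv := abs_le.1 (h.abs_deriv_le x (Ioo_subset_Icc_self hx))
  rw [Real.exp_neg, exp_symplecticGradient f hx, mul_inv, inv_div, ← Real.exp_neg]
  rcases le_total x (1 - x) with hle | hle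
  · rw [min_eq_left hle]
    calc _ ≤ x / (1 - x) * Real.exp (deriv f x) := min_le_left _ _
      _ ≤ 2 * x * Real.exp K := by
        gcongr
        · rw [div_le_iff₀ hx']
          nlinarith
        · exact hderiv.2
      _ = _ := by ring
  · rw [min_eq_right hle]
    calc _ ≤ (1 - x) / x * Real.exp (-deriv f x) := min_le_right _ _
      _ ≤ 2 * (1 - x) * Real.exp K := by
        gcongr
        · rw [div_le_iff₀ hx.1]
          nlinarith
        · linarith
      _ = _ := by ring

theorem IsAdmissible.one_div_symplecticHessian_le (h : IsAdmissible f c K)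
    (hx : x ∈ Ioo (0 : ℝ) 1) : 1 / symplecticHessian f x ≤ 1 / c * min x (1 - x) := by
  have hx' := sub_pos.2 hx.2
  have hx0 := hx.1
  have hc := h.c_pos
  have hratio := h.le_hessRatio x (Ioo_subset_Icc_self hx)
  have hmin : x * (1 - x) ≤ min x (1 - x) :=
    le_min (mul_le_of_le_one_right hx0.le (by linarith)) (mul_le_of_le_one_left hx'.le hx.2.le)
  rw [symplecticHessian, one_div_div]
  calc x * (1 - x) / hessRatio f x ≤ min x (1 - x) / c := by gcongr
    _ = _ := by ring

theorem momentCov_deviation (f₀ f₁ : ℝ → ℝ) (N : ℕ) (t x : ℝ) :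
    momentCov f₀ f₁ (N, t, x) (deviation N x) (deviation N x) =
      momentCov f₀ f₁ (N, t, x) (fun k ↦ (k : ℝ) / N) (fun k ↦ (k : ℝ) / N) :=
  (isPositiveWeight_momentWeight f₀ f₁ N t x).weightedCov_sub_const _ _ x x

theorem mul_momentCov_div (f₀ f₁ : ℝ → ℝ) (hN : 1 ≤ N) (t x : ℝ) :
    N * momentCov f₀ f₁ (N, t, x) (fun k ↦ (k : ℝ) / N) (fun k ↦ (k : ℝ) / N) =
      momentCov f₀ f₁ (N, t, x) (fun k ↦ (k : ℝ)) (fun k ↦ (k : ℝ)) / N := by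
  simp only [div_eq_inv_mul, weightedCov_const_mul_left,
    weightedCov_comm (φ := fun k : ℕ ↦ (k : ℝ))]
  field_simp

namespace IsAdmissible

variable (h₀ : IsAdmissible f₀ c K) (h₁ : IsAdmissible f₁ c K)
include h₀ h₁

theorem mul_momentCov_div_le (hN : 1 ≤ N) (ht : t ∈ Icc (0 : ℝ) 1) (hx : x ∈ Ioo (0 : ℝ) 1) :
    N * momentCov f₀ f₁ (N, t, x) (fun k ↦ (k : ℝ) / N) (fun k ↦ (k : ℝ) / N) ≤
      2 * Real.exp K / ratioGap c K * min x (1 - x) := by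
  have hgap := h₀.ratioGap_pos
  rw [mul_momentCov_div f₀ f₁ hN, div_le_iff₀ (by positivity)]
  calc _ ≤ N / ratioGap c K *
        min (Real.exp (symplecticGradient (linearPath f₀ f₁ t) x))
          (Real.exp (-symplecticGradient (linearPath f₀ f₁ t) x)) := by
        rw [mul_min_of_nonneg _ _ (by positivity)]
        exact le_min (h₀.weightedCov_natCast_le_exp h₁ ht hN _)
          (h₀.weightedCov_natCast_le_exp_neg h₁ ht hN _)
    _ ≤ N / ratioGap c K * (2 * Real.exp K * min x (1 - x)) := by
        gcongr
        exact (h₀.isAdmissible_linearPath h₁ ht).min_exp_symplecticGradient_le hx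
    _ = _ := by ring

-- Near the boundary both terms are small; away from it the backward ratio determines the limit.
theorem tendsto_mul_cov_div_sub : Tendsto
    (fun p ↦ p.1 * momentCov f₀ f₁ p (fun k ↦ (k : ℝ) / p.1) (fun k ↦ (k : ℝ) / p.1) -
      1 / symplecticHessian (linearPath f₀ f₁ p.2.1) p.2.2)
    (momentFilter (Ioo 0 1)) (𝓝 0) := by
  have hgap := h₀.ratioGap_pos
  have hc := h₀.c_pos
  set A := 2 * Real.exp K / ratioGap c K + 1 / c
  have hA : 0 < A := by positivity
  refine tendsto_zero_iff_norm_tendsto_zero.2 (tendsto_order.2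
    ⟨fun ε hε ↦ Eventually.of_forall fun _ ↦ hε.trans_le (norm_nonneg _), fun ε hε ↦ ?_⟩)
  have hδ : 0 < ε / A := by positivity
  have hinterior := (tendsto_zero_iff_norm_tendsto_zero.1
    (h₀.tendsto_mul_cov_deviation_sub_of_pos h₁ hδ)).eventually_lt_const hε
  refine eventually_momentFilter.2 ?_
  filter_upwards [eventually_momentFilter.1 hinterior, eventually_ge_atTop 1] with
    N hinterior hN t ht x hx
  by_cases hxδ : x ∈ Icc (ε / A) (1 - ε / A)
  · have hlt := hinterior t ht x hxδ
    rwa [momentCov_deviation] at hlt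
  have hmin : min x (1 - x) < ε / A := by
    by_contra! hle
    obtain ⟨hle₀, hle₁⟩ := le_min_iff.1 hle
    exact hxδ ⟨hle₀, by linarith⟩
  have hcov := h₀.mul_momentCov_div_le h₁ hN ht hx
  have hpath := h₀.isAdmissible_linearPath h₁ ht
  have hhess := hpath.one_div_symplecticHessian_le hx
  have hhess0 := one_div_pos.2 (hpath.symplecticHessian_pos hx)
  have hcov0 := mul_nonneg (N.cast_nonneg (α := ℝ))
    ((isPositiveWeight_momentWeight f₀ f₁ N t x).weightedCov_self_nonneg fun k ↦ (k : ℝ) / N)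
  calc _ ≤ A * min x (1 - x) := by
        rw [Real.norm_eq_abs, add_mul]
        refine abs_le.2 ⟨?_, ?_⟩ <;> linarith
    _ < ε := by rwa [mul_comm, ← lt_div_iff₀ hA]

end IsAdmissible

end Boundary

section VelocityCovariance

variable {f₀ f₁ : ℝ → ℝ} {c K : ℝ}

theorem momentCov_velocity_left (f₀ f₁ : ℝ → ℝ) (N : ℕ) (t x : ℝ) (φ : ℕ → ℝ) :
    momentCov f₀ f₁ (N, t, x) (velocity f₀ f₁ N) φ = momentCov f₀ f₁ (N, t, x)
      (fun k ↦ velocityRemainder f₀ f₁ N x k + deriv (f₁ - f₀) x * (k / N)) φ := by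
  have hsplit : velocity f₀ f₁ N = fun k ↦
      (velocityRemainder f₀ f₁ N x k + deriv (f₁ - f₀) x * (k / N)) -
        (deriv (f₁ - f₀) x * x - (f₁ - f₀) x) := by
    ext k
    rw [velocityRemainder, deviation]
    ring
  have hshift := (isPositiveWeight_momentWeight f₀ f₁ N t x).weightedCov_sub_const
    (fun k ↦ velocityRemainder f₀ f₁ N x k + deriv (f₁ - f₀) x * (k / N)) φ
    (deriv (f₁ - f₀) x * x - (f₁ - f₀) x) 0
  simp only [sub_zero] at hshift
  rw [hsplit]
  exact hshift

theorem momentCov_velocity_div (f₀ f₁ : ℝ → ℝ) (N : ℕ) (t x : ℝ) :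
    momentCov f₀ f₁ (N, t, x) (velocity f₀ f₁ N) (fun k ↦ (k : ℝ) / N) =
      momentCov f₀ f₁ (N, t, x) (velocityRemainder f₀ f₁ N x) (fun k ↦ (k : ℝ) / N) +
      deriv (f₁ - f₀) x *
        momentCov f₀ f₁ (N, t, x) (fun k ↦ (k : ℝ) / N) (fun k ↦ (k : ℝ) / N) := by
  rw [momentCov_velocity_left]
  simp only [weightedCov_add_left, weightedCov_const_mul_left]

theorem momentCov_velocity_self (f₀ f₁ : ℝ → ℝ) (N : ℕ) (t x : ℝ) :
    momentCov f₀ f₁ (N, t, x) (velocity f₀ f₁ N) (velocity f₀ f₁ N) =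
      momentCov f₀ f₁ (N, t, x) (velocityRemainder f₀ f₁ N x) (velocityRemainder f₀ f₁ N x) +
      2 * deriv (f₁ - f₀) x *
        momentCov f₀ f₁ (N, t, x) (velocityRemainder f₀ f₁ N x) (fun k ↦ (k : ℝ) / N) +
      deriv (f₁ - f₀) x ^ 2 *
        momentCov f₀ f₁ (N, t, x) (fun k ↦ (k : ℝ) / N) (fun k ↦ (k : ℝ) / N) := by
  rw [momentCov_velocity_left]
  refine (weightedCov_comm.trans (momentCov_velocity_left f₀ f₁ N t x _)).trans ?_
  exact weightedCov_add_const_mul_self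

namespace IsAdmissible

variable (h₀ : IsAdmissible f₀ c K) (h₁ : IsAdmissible f₁ c K)
include h₀ h₁

theorem tendsto_mean_div_sub : Tendsto
    (fun p ↦ (momentMean f₀ f₁ p fun k ↦ (k : ℝ) / p.1) - p.2.2)
    (momentFilter (Ioo 0 1)) (𝓝 0) := by
  refine squeeze_zero_norm (fun p ↦ ?_) (h₀.tendsto_mean_abs_deviation h₁)
  have hw := isPositiveWeight_momentWeight f₀ f₁ p.1 p.2.1 p.2.2
  have hmean := hw.abs_weightedMean_le (φ := deviation p.1 p.2.2) fun _ _ ↦ le_rfl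
  unfold deviation at hmean
  rwa [weightedMean_sub, hw.weightedMean_const] at hmean

theorem tendsto_mul_cov_velocityRemainder : Tendsto
    (fun p ↦ p.1 * momentCov f₀ f₁ p (velocityRemainder f₀ f₁ p.1 p.2.2)
      (velocityRemainder f₀ f₁ p.1 p.2.2))
    (momentFilter (Ioo 0 1)) (𝓝 0) := by
  refine squeeze_zero (fun p ↦ ?_) (fun p ↦ ?_) (h₀.tendsto_mul_mean_velocityRemainder_sq h₁)
  · exact mul_nonneg p.1.cast_nonneg
      ((isPositiveWeight_momentWeight f₀ f₁ _ _ _).weightedCov_self_nonneg _)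
  · have hle := (isPositiveWeight_momentWeight f₀ f₁ p.1 p.2.1 p.2.2).weightedCov_self_le
      (velocityRemainder f₀ f₁ p.1 p.2.2) 0
    simp only [sub_zero] at hle
    exact mul_le_mul_of_nonneg_left hle p.1.cast_nonneg

-- Cauchy–Schwarz.
theorem tendsto_mul_cov_velocityRemainder_div : Tendsto
    (fun p ↦ p.1 * momentCov f₀ f₁ p (velocityRemainder f₀ f₁ p.1 p.2.2)
      (fun k ↦ (k : ℝ) / p.1))
    (momentFilter (Ioo 0 1)) (𝓝 0) := by
  have hgap := h₀.ratioGap_pos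
  set A := 2 * Real.exp K / ratioGap c K
  have hA : 0 < A := by positivity
  have hbound := ((h₀.tendsto_mul_cov_velocityRemainder h₁).mul_const A).sqrt
  rw [zero_mul, Real.sqrt_zero] at hbound
  refine squeeze_zero_norm' ?_ hbound
  filter_upwards [eventually_mem_momentFilter _] with ⟨N, t, x⟩ ⟨hN, ht, hx⟩
  have hw := isPositiveWeight_momentWeight f₀ f₁ N t x
  have hvar : N * momentCov f₀ f₁ (N, t, x) (fun k ↦ (k : ℝ) / N) (fun k ↦ (k : ℝ) / N) ≤ A :=
    (h₀.mul_momentCov_div_le h₁ hN ht hx).trans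
      (mul_le_of_le_one_right hA.le ((min_le_left _ _).trans hx.2.le))
  refine Real.abs_le_sqrt ?_
  calc _ = (N : ℝ) ^ 2 * momentCov f₀ f₁ (N, t, x) (velocityRemainder f₀ f₁ N x)
        (fun k ↦ (k : ℝ) / N) ^ 2 := mul_pow _ _ _
    _ ≤ (N : ℝ) ^ 2 * _ := mul_le_mul_of_nonneg_left (hw.weightedCov_sq_le _ _) (sq_nonneg _)
    _ = (N * momentCov f₀ f₁ (N, t, x) (velocityRemainder f₀ f₁ N x)
          (velocityRemainder f₀ f₁ N x)) *
        (N * momentCov f₀ f₁ (N, t, x) (fun k ↦ (k : ℝ) / N) (fun k ↦ (k : ℝ) / N)) := by ring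
    _ ≤ _ := mul_le_mul_of_nonneg_left hvar
        (mul_nonneg N.cast_nonneg (hw.weightedCov_self_nonneg _))

theorem eventually_abs_deriv_sub_le :
    ∀ᶠ p in momentFilter (Ioo 0 1), |deriv (f₁ - f₀) p.2.2| ≤ 2 * K :=
  (eventually_mem_momentFilter (Ioo 0 1)).mono fun _ hp ↦
    h₀.abs_deriv_sub_le h₁ (Ioo_subset_Icc_self hp.2.2)

theorem tendsto_mul_cov_velocity_div_sub : Tendsto
    (fun p ↦ p.1 * momentCov f₀ f₁ p (velocity f₀ f₁ p.1) (fun k ↦ (k : ℝ) / p.1) -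
      deriv (f₁ - f₀) p.2.2 / symplecticHessian (linearPath f₀ f₁ p.2.1) p.2.2)
    (momentFilter (Ioo 0 1)) (𝓝 0) := by
  have hlim := (h₀.tendsto_mul_cov_velocityRemainder_div h₁).add
    (bdd_le_mul_tendsto_zero' (2 * K) (h₀.eventually_abs_deriv_sub_le h₁)
      (h₀.tendsto_mul_cov_div_sub h₁))
  rw [add_zero] at hlim
  refine hlim.congr fun ⟨N, t, x⟩ ↦ ?_
  rw [momentCov_velocity_div]
  ring

theorem tendsto_mul_cov_velocity_self_sub : Tendsto
    (fun p ↦ p.1 * momentCov f₀ f₁ p (velocity f₀ f₁ p.1) (velocity f₀ f₁ p.1) -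
      deriv (f₁ - f₀) p.2.2 ^ 2 / symplecticHessian (linearPath f₀ f₁ p.2.1) p.2.2)
    (momentFilter (Ioo 0 1)) (𝓝 0) := by
  have hbdd := h₀.eventually_abs_deriv_sub_le h₁
  have hcross := bdd_le_mul_tendsto_zero' (2 * K) hbdd
    (h₀.tendsto_mul_cov_velocityRemainder_div h₁)
  have hmain := bdd_le_mul_tendsto_zero' (2 * K) hbdd
    (bdd_le_mul_tendsto_zero' (2 * K) hbdd (h₀.tendsto_mul_cov_div_sub h₁))
  have hlim := ((h₀.tendsto_mul_cov_velocityRemainder h₁).add (hcross.const_mul 2)).add hmain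
  simp only [mul_zero, add_zero] at hlim
  refine hlim.congr fun ⟨N, t, x⟩ ↦ ?_
  rw [momentCov_velocity_self]
  ring

end IsAdmissible

end VelocityCovariance

/-! ### Legendre duality -/

/-- The inverse `ρ ↦ x` of the gradient map `x ↦ (G_P + f)'(x)` on `(0, 1)`. -/
noncomputable def momentPoint (f : ℝ → ℝ) (ρ : ℝ) : ℝ :=
  Function.invFunOn (symplecticGradient f) (Ioo 0 1) ρ

/-- The real times `t` at which `G_P + f_t` is uniformly convex. They form a neighbourhood of
`[0, 1]`, so that the two-sided derivatives in `t` make sense at the endpoints. -/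
def convexTimes (f₀ f₁ : ℝ → ℝ) : Set ℝ :=
  {t | ∀ x ∈ Icc (0 : ℝ) 1, 0 < hessRatio (linearPath f₀ f₁ t) x}

section LegendreDuality

variable {f f₀ f₁ : ℝ → ℝ} {c c' K K' t x : ℝ}

theorem exists_isAdmissible (hf : ContDiff ℝ ∞ f) (hpos : ∀ x ∈ Icc (0 : ℝ) 1, 0 < hessRatio f x) :
    ∃ c K, IsAdmissible f c K := by
  have hbound : ∀ {g : ℝ → ℝ}, ContDiff ℝ ∞ g → ∃ B, 0 < B ∧ ∀ x ∈ Icc (0 : ℝ) 1, |g x| ≤ B :=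
    fun hg ↦ exists_pos_bound_of_continuousOn_Icc hg.continuous.continuousOn
  obtain ⟨y, hy, hmin⟩ := isCompact_Icc.exists_isMinOn (nonempty_Icc.2 zero_le_one)
    (contDiff_hessRatio hf).continuous.continuousOn
  obtain ⟨B₁, hB₁, bound₁⟩ := hbound (contDiff_deriv hf)
  obtain ⟨B₂, hB₂, bound₂⟩ := hbound (contDiff_deriv (contDiff_deriv hf))
  obtain ⟨B₃, hB₃, bound₃⟩ := hbound (contDiff_deriv (contDiff_deriv (contDiff_deriv hf)))
  exact ⟨hessRatio f y, 1 + B₁ + B₂ + B₃, hf, hpos y hy, by linarith, fun x hx ↦ hmin hx,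
    fun x hx ↦ by linarith [bound₁ x hx], fun x hx ↦ by linarith [bound₂ x hx],
    fun x hx ↦ by linarith [bound₃ x hx]⟩

theorem hessRatio_pos_of_iteratedDeriv_pos (hf : ContDiff ℝ ∞ f)
    (hG : ∀ x ∈ Ioo (0 : ℝ) 1, 0 < iteratedDeriv 2 (symplecticPotential f) x) :
    ∀ x ∈ Icc (0 : ℝ) 1, 0 < hessRatio f x := by
  intro x hx
  rcases eq_or_lt_of_le hx.1 with rfl | hx₀
  · simp [hessRatio]
  rcases eq_or_lt_of_le hx.2 with rfl | hx₁
  · simp [hessRatio]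
  have hgradient : deriv (symplecticPotential f) =ᶠ[𝓝 x] symplecticGradient f := by
    filter_upwards [isOpen_Ioo.mem_nhds ⟨hx₀, hx₁⟩] with y hy
    exact (hasDerivAt_symplecticPotential hf hy).deriv
  have hpos := hG x ⟨hx₀, hx₁⟩
  rw [iteratedDeriv_succ, iteratedDeriv_one, hgradient.deriv_eq,
    (hasDerivAt_symplecticGradient hf ⟨hx₀, hx₁⟩).deriv] at hpos
  exact (div_pos_iff_of_pos_right (mul_pos hx₀ (sub_pos.2 hx₁))).1 hpos

theorem symplecticGradient_sigmoid (f : ℝ → ℝ) (a : ℝ) :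
    symplecticGradient f (Real.sigmoid a) = a + deriv f (Real.sigmoid a) := by
  have hodds : 1 - Real.sigmoid a = Real.exp (-a) * Real.sigmoid a := by
    rw [Real.sigmoid]
    field_simp
    ring
  rw [symplecticGradient, hodds, Real.log_mul (Real.exp_pos _).ne' (Real.sigmoid_pos a).ne',
    Real.log_exp]
  ring

namespace IsAdmissible

variable (h : IsAdmissible f c K)
include h

theorem mono (hc' : 0 < c') (hc : c' ≤ c) (hK : K ≤ K') : IsAdmissible f c' K' :=
  ⟨h.contDiff, hc', h.one_le_K.trans hK, fun x hx ↦ hc.trans (h.le_hessRatio x hx),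
    fun x hx ↦ (h.abs_deriv_le x hx).trans hK, fun x hx ↦ (h.abs_deriv2_le x hx).trans hK,
    fun x hx ↦ (h.abs_deriv3_le x hx).trans hK⟩

theorem injOn_symplecticGradient : InjOn (symplecticGradient f) (Ioo 0 1) := by
  refine (strictMonoOn_of_deriv_pos (convex_Ioo 0 1) (fun x hx ↦ (hasDerivAt_symplecticGradient
    h.contDiff hx).continuousAt.continuousWithinAt) fun x hx ↦ ?_).injOn
  rw [interior_Ioo] at hx
  rw [(hasDerivAt_symplecticGradient h.contDiff hx).deriv]
  exact h.symplecticHessian_pos hx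

theorem surjOn_symplecticGradient : SurjOn (symplecticGradient f) (Ioo 0 1) univ := by
  intro ρ _
  have hmem : ∀ a, Real.sigmoid a ∈ Ioo (0 : ℝ) 1 := fun a ↦
    ⟨Real.sigmoid_pos a, Real.sigmoid_lt_one a⟩
  have hderiv : ∀ a, |deriv f (Real.sigmoid a)| ≤ K := fun a ↦
    h.abs_deriv_le _ (Ioo_subset_Icc_self (hmem a))
  refine isPreconnected_Ioo.intermediate_value (hmem (ρ - K)) (hmem (ρ + K)) (fun x hx ↦
    (hasDerivAt_symplecticGradient h.contDiff hx).continuousAt.continuousWithinAt) ?_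
  rw [symplecticGradient_sigmoid, symplecticGradient_sigmoid]
  exact ⟨by linarith [(abs_le.1 (hderiv (ρ - K))).2], by linarith [(abs_le.1 (hderiv (ρ + K))).1]⟩

theorem momentPoint_mem (ρ : ℝ) : momentPoint f ρ ∈ Ioo (0 : ℝ) 1 :=
  Function.invFunOn_mem (h.surjOn_symplecticGradient (mem_univ ρ))

theorem symplecticGradient_momentPoint (ρ : ℝ) : symplecticGradient f (momentPoint f ρ) = ρ :=
  Function.invFunOn_eq (h.surjOn_symplecticGradient (mem_univ ρ))

theorem momentPoint_symplecticGradient (hx : x ∈ Ioo (0 : ℝ) 1) :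
    momentPoint f (symplecticGradient f x) = x :=
  h.injOn_symplecticGradient (h.momentPoint_mem _) hx (h.symplecticGradient_momentPoint _)

theorem Leg_symplecticGradient (hx : x ∈ Ioo (0 : ℝ) 1) :
    Leg (symplecticPotential f) (Icc 0 1) (symplecticGradient f x) = legendreValue f x := by
  refine IsGreatest.csSup_eq ⟨⟨x, Ioo_subset_Icc_self hx, rfl⟩, ?_⟩
  rintro _ ⟨α, hα, rfl⟩
  have hphase := h.Phase_nonneg hα hx
  rw [Phase_symplecticPotential h.contDiff α hx] at hphase
  rw [legendreValue]
  linarith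

end IsAdmissible

section ConvexTimes

variable (hf₀ : ContDiff ℝ ∞ f₀) (hf₁ : ContDiff ℝ ∞ f₁)
include hf₀ hf₁

theorem isOpen_convexTimes : IsOpen (convexTimes f₀ f₁) := by
  refine isOpen_iff_eventually.2 fun t ht ↦
    isCompact_Icc.eventually_forall_of_forall_eventually fun x hx ↦ ?_
  have hcont : Continuous fun z : ℝ × ℝ ↦ hessRatio (linearPath f₀ f₁ z.1) z.2 := by
    have := (contDiff_hessRatio hf₀).continuous
    have := (contDiff_hessRatio hf₁).continuous
    simp only [hessRatio_linearPath hf₀ hf₁]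
    fun_prop
  exact hcont.continuousAt.eventually_const_lt (ht x hx)

theorem exists_isAdmissible_of_mem_convexTimes (ht : t ∈ convexTimes f₀ f₁) :
    ∃ c K, IsAdmissible (linearPath f₀ f₁ t) c K :=
  exists_isAdmissible (contDiff_linearPath hf₀ hf₁ t) ht

end ConvexTimes

theorem IsAdmissible.mem_convexTimes (h₀ : IsAdmissible f₀ c K) (h₁ : IsAdmissible f₁ c K)
    (ht : t ∈ Icc (0 : ℝ) 1) : t ∈ convexTimes f₀ f₁ :=
  fun _ ↦ (h₀.isAdmissible_linearPath h₁ ht).hessRatio_pos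

end LegendreDuality

/-! ### The Monge–Ampère geodesic -/

/-- The point `x ∈ (0, 1)` at which `G_t'(x) = ρ`, for `G_t = G_P + f_t`. -/
noncomputable def momentPath (f₀ f₁ : ℝ → ℝ) (t ρ : ℝ) : ℝ := momentPoint (linearPath f₀ f₁ t) ρ

/-- The Monge–Ampère geodesic potential `φ_t`, that is, the Legendre transform `U_t` of `G_t`. -/
noncomputable def geodesicPotential (f₀ f₁ : ℝ → ℝ) (t ρ : ℝ) : ℝ :=
  Leg (symplecticPotential (linearPath f₀ f₁ t)) (Icc 0 1) ρ

section Geodesic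

theorem isInvertible_of_apply_one_ne_zero {L : ℝ →L[ℝ] ℝ} (hL : L 1 ≠ 0) : L.IsInvertible :=
  ⟨ContinuousLinearEquiv.unitsEquivAut ℝ (Units.mk0 (L 1) hL), by ext; simp⟩

variable {f₀ f₁ : ℝ → ℝ} {t : ℝ}

theorem symplecticHessian_linearPath_pos (ht : t ∈ convexTimes f₀ f₁) {x : ℝ}
    (hx : x ∈ Ioo (0 : ℝ) 1) : 0 < symplecticHessian (linearPath f₀ f₁ t) x :=
  div_pos (ht x (Ioo_subset_Icc_self hx)) (mul_pos hx.1 (sub_pos.2 hx.2))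

variable (hf₀ : ContDiff ℝ ∞ f₀) (hf₁ : ContDiff ℝ ∞ f₁)
include hf₀ hf₁

theorem contDiffAt_symplecticGradient_linearPath_sub {u : (ℝ × ℝ) × ℝ}
    (hu : u.2 ∈ Ioo (0 : ℝ) 1) : ContDiffAt ℝ ∞
      (fun v : (ℝ × ℝ) × ℝ ↦ symplecticGradient (linearPath f₀ f₁ v.1.1) v.2 - v.1.2) u := by
  have hcomp : ∀ {f : ℝ → ℝ}, ContDiff ℝ ∞ f →
      ContDiffAt ℝ ∞ (fun v : (ℝ × ℝ) × ℝ ↦ symplecticGradient f v.2) u := fun hf ↦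
    (contDiffAt_symplecticGradient hf hu).comp u contDiffAt_snd
  have := hcomp hf₀
  have := hcomp hf₁
  simp only [symplecticGradient_linearPath hf₀ hf₁]
  fun_prop

theorem symplecticGradient_sub_symplecticGradient (x : ℝ) :
    symplecticGradient f₁ x - symplecticGradient f₀ x = deriv (f₁ - f₀) x := by
  rw [((hasDerivAt_of_contDiff hf₁ x).sub (hasDerivAt_of_contDiff hf₀ x)).deriv]
  simp only [symplecticGradient]
  ring

theorem hasDerivAt_symplecticPotential_linearPath {X : ℝ → ℝ} {D : ℝ} (hX : HasDerivAt X D t)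
    (hmem : X t ∈ Ioo (0 : ℝ) 1) :
    HasDerivAt (fun s ↦ symplecticPotential (linearPath f₀ f₁ s) (X s))
      ((f₁ - f₀) (X t) + symplecticGradient (linearPath f₀ f₁ t) (X t) * D) t := by
  simp only [symplecticPotential_linearPath, symplecticGradient_linearPath hf₀ hf₁]
  refine ((((hasDerivAt_id t).const_sub 1).fun_mul
    ((hasDerivAt_symplecticPotential hf₀ hmem).comp t hX)).fun_add
    ((hasDerivAt_id t).fun_mul
      ((hasDerivAt_symplecticPotential hf₁ hmem).comp t hX))).congr_deriv ?_
  simp only [id, Function.comp_apply, symplecticPotential, Pi.sub_apply]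
  ring

theorem hasDerivAt_symplecticGradient_linearPath {X : ℝ → ℝ} {D : ℝ} (hX : HasDerivAt X D t)
    (hmem : X t ∈ Ioo (0 : ℝ) 1) :
    HasDerivAt (fun s ↦ symplecticGradient (linearPath f₀ f₁ s) (X s))
      (deriv (f₁ - f₀) (X t) + symplecticHessian (linearPath f₀ f₁ t) (X t) * D) t := by
  simp only [symplecticGradient_linearPath hf₀ hf₁, symplecticHessian_linearPath hf₀ hf₁,
    ← symplecticGradient_sub_symplecticGradient hf₀ hf₁]
  refine ((((hasDerivAt_id t).const_sub 1).fun_mul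
    ((hasDerivAt_symplecticGradient hf₀ hmem).comp t hX)).fun_add
    ((hasDerivAt_id t).fun_mul
      ((hasDerivAt_symplecticGradient hf₁ hmem).comp t hX))).congr_deriv ?_
  simp only [id, Function.comp_apply]
  ring

variable (ht : t ∈ convexTimes f₀ f₁)
include ht

theorem momentPath_mem (ρ : ℝ) : momentPath f₀ f₁ t ρ ∈ Ioo (0 : ℝ) 1 := by
  obtain ⟨c, K, h⟩ := exists_isAdmissible_of_mem_convexTimes hf₀ hf₁ ht
  exact h.momentPoint_mem ρ

theorem symplecticGradient_momentPath (ρ : ℝ) :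
    symplecticGradient (linearPath f₀ f₁ t) (momentPath f₀ f₁ t ρ) = ρ := by
  obtain ⟨c, K, h⟩ := exists_isAdmissible_of_mem_convexTimes hf₀ hf₁ ht
  exact h.symplecticGradient_momentPoint ρ

theorem momentPath_symplecticGradient {x : ℝ} (hx : x ∈ Ioo (0 : ℝ) 1) :
    momentPath f₀ f₁ t (symplecticGradient (linearPath f₀ f₁ t) x) = x := by
  obtain ⟨c, K, h⟩ := exists_isAdmissible_of_mem_convexTimes hf₀ hf₁ ht
  exact h.momentPoint_symplecticGradient hx

theorem contDiffAt_momentPath (ρ : ℝ) :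
    ContDiffAt ℝ ∞ (fun q : ℝ × ℝ ↦ momentPath f₀ f₁ q.1 q.2) (t, ρ) := by
  have hmem := momentPath_mem hf₀ hf₁ ht ρ
  set x := momentPath f₀ f₁ t ρ
  set F : (ℝ × ℝ) × ℝ → ℝ := fun v ↦ symplecticGradient (linearPath f₀ f₁ v.1.1) v.2 - v.1.2
  have hF : ContDiffAt ℝ ∞ F ((t, ρ), x) :=
    contDiffAt_symplecticGradient_linearPath_sub hf₀ hf₁ hmem
  have htop : (∞ : WithTop ℕ∞) ≠ 0 := by simp
  have hpartial : (fderiv ℝ F ((t, ρ), x) ∘L .inr ℝ (ℝ × ℝ) ℝ).IsInvertible := by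
    have hcomp := (hF.differentiableAt htop).hasFDerivAt.comp_hasDerivAt x
      ((hasDerivAt_const x (t, ρ)).prodMk (hasDerivAt_id x))
    have hderiv := hcomp.unique ((hasDerivAt_symplecticGradient
      (contDiff_linearPath hf₀ hf₁ t) hmem).sub_const ρ)
    exact isInvertible_of_apply_one_ne_zero
      (hderiv.trans_ne (symplecticHessian_linearPath_pos ht hmem).ne')
  have hself := hF.implicitFunction_apply_self htop hpartial
  have hmem_near : ∀ᶠ q in 𝓝 (t, ρ), hF.implicitFunction htop hpartial q ∈ Ioo (0 : ℝ) 1 :=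
    (hF.contDiffAt_implicitFunction htop hpartial).continuousAt.eventually_mem
      (isOpen_Ioo.mem_nhds (by rw [hself]; exact hmem))
  have hnhds := ((isOpen_convexTimes hf₀ hf₁).preimage continuous_fst).mem_nhds
    (show (t, ρ) ∈ Prod.fst ⁻¹' convexTimes f₀ f₁ from ht)
  refine (hF.contDiffAt_implicitFunction htop hpartial).congr_of_eventuallyEq ?_
  filter_upwards [hF.eventually_apply_implicitFunction htop hpartial, hnhds,
    hmem_near] with q hq hq_time hq_mem
  have hzero : F ((t, ρ), x) = 0 := sub_eq_zero.2 (symplecticGradient_momentPath hf₀ hf₁ ht ρ)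
  rw [hzero] at hq
  rw [← momentPath_symplecticGradient hf₀ hf₁ hq_time hq_mem, sub_eq_zero.1 hq]

theorem hasDerivAt_momentPath_slope (ρ : ℝ) :
    HasDerivAt (fun r ↦ momentPath f₀ f₁ t r)
      (1 / symplecticHessian (linearPath f₀ f₁ t) (momentPath f₀ f₁ t ρ)) ρ := by
  have hmem := momentPath_mem hf₀ hf₁ ht ρ
  have hX := (((contDiffAt_momentPath hf₀ hf₁ ht ρ).differentiableAt (by simp)).comp ρ
    ((differentiableAt_const t).prodMk differentiableAt_id)).hasDerivAt
  have hchain := (hasDerivAt_symplecticGradient (contDiff_linearPath hf₀ hf₁ t) hmem).comp ρ hX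
  have hid : (symplecticGradient (linearPath f₀ f₁ t) ∘ fun r ↦ momentPath f₀ f₁ t r) = id :=
    funext (symplecticGradient_momentPath hf₀ hf₁ ht)
  refine hX.congr_deriv (eq_one_div_of_mul_eq_one_right ?_)
  exact (hid ▸ hchain).unique (hasDerivAt_id ρ)

theorem hasDerivAt_momentPath_time (ρ : ℝ) :
    HasDerivAt (fun s ↦ momentPath f₀ f₁ s ρ)
      (-(deriv (f₁ - f₀) (momentPath f₀ f₁ t ρ) /
        symplecticHessian (linearPath f₀ f₁ t) (momentPath f₀ f₁ t ρ))) t := by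
  have hmem := momentPath_mem hf₀ hf₁ ht ρ
  have hpos := symplecticHessian_linearPath_pos ht hmem
  have hX : DifferentiableAt ℝ (fun s ↦ momentPath f₀ f₁ s ρ) t :=
    ((contDiffAt_momentPath hf₀ hf₁ ht ρ).differentiableAt (by simp)).comp (f := fun s ↦ (s, ρ)) t
      (differentiableAt_id.prodMk (differentiableAt_const ρ))
  have hchain := hasDerivAt_symplecticGradient_linearPath hf₀ hf₁ hX.hasDerivAt hmem
  have hconst : (fun _ ↦ ρ) =ᶠ[𝓝 t]
      fun s ↦ symplecticGradient (linearPath f₀ f₁ s) (momentPath f₀ f₁ s ρ) := by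
    filter_upwards [(isOpen_convexTimes hf₀ hf₁).mem_nhds ht] with s hs
    exact (symplecticGradient_momentPath hf₀ hf₁ hs ρ).symm
  have hzero := (hchain.congr_of_eventuallyEq hconst).unique (hasDerivAt_const t ρ)
  refine hX.hasDerivAt.congr_deriv ?_
  rw [← neg_div, eq_div_iff hpos.ne']
  linarith

theorem geodesicPotential_symplecticGradient {x : ℝ} (hx : x ∈ Ioo (0 : ℝ) 1) :
    geodesicPotential f₀ f₁ t (symplecticGradient (linearPath f₀ f₁ t) x) =
      legendreValue (linearPath f₀ f₁ t) x := by
  obtain ⟨c, K, h⟩ := exists_isAdmissible_of_mem_convexTimes hf₀ hf₁ ht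
  exact h.Leg_symplecticGradient hx

theorem geodesicPotential_eq (ρ : ℝ) : geodesicPotential f₀ f₁ t ρ = momentPath f₀ f₁ t ρ * ρ -
    symplecticPotential (linearPath f₀ f₁ t) (momentPath f₀ f₁ t ρ) := by
  have hvalue := geodesicPotential_symplecticGradient hf₀ hf₁ ht (momentPath_mem hf₀ hf₁ ht ρ)
  rwa [legendreValue, symplecticGradient_momentPath hf₀ hf₁ ht] at hvalue

theorem contDiffAt_geodesicPotential (ρ : ℝ) :
    ContDiffAt ℝ ∞ (fun q : ℝ × ℝ ↦ geodesicPotential f₀ f₁ q.1 q.2) (t, ρ) := by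
  have hX := contDiffAt_momentPath hf₀ hf₁ ht ρ
  have hmem := momentPath_mem hf₀ hf₁ ht ρ
  have hcomp : ∀ {f : ℝ → ℝ}, ContDiff ℝ ∞ f → ContDiffAt ℝ ∞
      (fun q : ℝ × ℝ ↦ symplecticPotential f (momentPath f₀ f₁ q.1 q.2)) (t, ρ) := fun hf ↦
    ContDiffAt.comp (t, ρ) (contDiffAt_symplecticPotential hf hmem) hX
  have := hcomp hf₀
  have := hcomp hf₁
  have hformula : ContDiffAt ℝ ∞ (fun q : ℝ × ℝ ↦ momentPath f₀ f₁ q.1 q.2 * q.2 -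
      symplecticPotential (linearPath f₀ f₁ q.1) (momentPath f₀ f₁ q.1 q.2)) (t, ρ) := by
    simp only [symplecticPotential_linearPath]
    fun_prop
  refine hformula.congr_of_eventuallyEq ?_
  filter_upwards [continuousAt_fst.eventually ((isOpen_convexTimes hf₀ hf₁).mem_nhds ht)] with q hq
  exact geodesicPotential_eq hf₀ hf₁ hq q.2

theorem hasDerivAt_geodesicPotential_slope (ρ : ℝ) :
    HasDerivAt (fun r ↦ geodesicPotential f₀ f₁ t r) (momentPath f₀ f₁ t ρ) ρ := by
  have hX := hasDerivAt_momentPath_slope hf₀ hf₁ ht ρ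
  have hG := (hasDerivAt_symplecticPotential (contDiff_linearPath hf₀ hf₁ t)
    (momentPath_mem hf₀ hf₁ ht ρ)).comp ρ hX
  rw [symplecticGradient_momentPath hf₀ hf₁ ht] at hG
  simp only [geodesicPotential_eq hf₀ hf₁ ht]
  refine ((hX.fun_mul (hasDerivAt_id ρ)).fun_sub hG).congr_deriv ?_
  simp only [id]
  ring

theorem hasDerivAt_geodesicPotential_time (ρ : ℝ) :
    HasDerivAt (fun s ↦ geodesicPotential f₀ f₁ s ρ) (-(f₁ - f₀) (momentPath f₀ f₁ t ρ)) t := by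
  have hX := hasDerivAt_momentPath_time hf₀ hf₁ ht ρ
  have hG := hasDerivAt_symplecticPotential_linearPath hf₀ hf₁ hX (momentPath_mem hf₀ hf₁ ht ρ)
  rw [symplecticGradient_momentPath hf₀ hf₁ ht] at hG
  refine (((hX.mul_const ρ).fun_sub hG).congr_deriv (by ring)).congr_of_eventuallyEq ?_
  filter_upwards [(isOpen_convexTimes hf₀ hf₁).mem_nhds ht] with s hs
  exact geodesicPotential_eq hf₀ hf₁ hs ρ

end Geodesic

/-! ### Derivatives of the Bergman sums -/

/-- The mean of `φ` for the weights `bergmanWeight`. -/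
noncomputable abbrev bergmanMean (f₀ f₁ : ℝ → ℝ) (N : ℕ) (t ρ : ℝ) (φ : ℕ → ℝ) : ℝ :=
  weightedMean (Finset.range (N + 1)) (bergmanWeight f₀ f₁ N t ρ) φ

/-- The covariance of `φ` and `ψ` for the weights `bergmanWeight`. -/
noncomputable abbrev bergmanCov (f₀ f₁ : ℝ → ℝ) (N : ℕ) (t ρ : ℝ) (φ ψ : ℕ → ℝ) : ℝ :=
  weightedCov (Finset.range (N + 1)) (bergmanWeight f₀ f₁ N t ρ) φ ψ

section BergmanDerivatives

variable (f₀ f₁ : ℝ → ℝ) {N : ℕ}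

theorem hasDerivAt_bergmanWeight_slope (t ρ : ℝ) (k : ℕ) :
    HasDerivAt (fun r ↦ bergmanWeight f₀ f₁ N t r k) (bergmanWeight f₀ f₁ N t ρ k * k) ρ :=
  ((((hasDerivAt_id ρ).const_mul (k : ℝ)).sub_const _).exp).congr_deriv (by rw [mul_one]; rfl)

theorem hasDerivAt_bergmanWeight_time (hN : 1 ≤ N) (t ρ : ℝ) (k : ℕ) :
    HasDerivAt (fun s ↦ bergmanWeight f₀ f₁ N s ρ k)
      (bergmanWeight f₀ f₁ N t ρ k * (-N * velocity f₀ f₁ N k)) t := by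
  have hexponent := (((hasDerivAt_id t).const_sub 1).mul_const
    (Real.log (weightMass f₀ N k))).add ((hasDerivAt_id t).mul_const (Real.log (weightMass f₁ N k)))
  refine (hexponent.const_sub (k * ρ)).exp.congr_deriv ?_
  have : (N : ℝ) ≠ 0 := by positivity
  simp only [velocity, neg_mul, mul_div_cancel₀ _ this, bergmanWeight, Pi.add_apply, id]
  ring

theorem contDiff_log_sum_bergmanWeight (N : ℕ) : ContDiff ℝ ∞ fun q : ℝ × ℝ ↦
    Real.log (∑ k ∈ Finset.range (N + 1), bergmanWeight f₀ f₁ N q.1 q.2 k) := by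
  refine ContDiff.log ?_ fun q ↦ (isPositiveWeight_bergmanWeight f₀ f₁ N q.1 q.2).sum_pos.ne'
  simp only [bergmanWeight]
  fun_prop

theorem hasDerivAt_log_sum_bergmanWeight_slope (t ρ : ℝ) :
    HasDerivAt (fun r ↦ Real.log (∑ k ∈ Finset.range (N + 1), bergmanWeight f₀ f₁ N t r k))
      (bergmanMean f₀ f₁ N t ρ fun k ↦ (k : ℝ)) ρ :=
  hasDerivAt_log_sum (isPositiveWeight_bergmanWeight f₀ f₁ N t ρ)
    (hasDerivAt_bergmanWeight_slope f₀ f₁ t ρ)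

theorem hasDerivAt_log_sum_bergmanWeight_time (hN : 1 ≤ N) (t ρ : ℝ) :
    HasDerivAt (fun s ↦ Real.log (∑ k ∈ Finset.range (N + 1), bergmanWeight f₀ f₁ N s ρ k))
      (-N * bergmanMean f₀ f₁ N t ρ (velocity f₀ f₁ N)) t :=
  (hasDerivAt_log_sum (w := fun s ↦ bergmanWeight f₀ f₁ N s ρ)
    (isPositiveWeight_bergmanWeight f₀ f₁ N t ρ)
    (hasDerivAt_bergmanWeight_time f₀ f₁ hN t ρ)).congr_deriv weightedMean_const_mul

theorem hasDerivAt_bergmanMean_slope (t ρ : ℝ) (φ : ℕ → ℝ) :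
    HasDerivAt (fun r ↦ bergmanMean f₀ f₁ N t r φ)
      (bergmanCov f₀ f₁ N t ρ (fun k ↦ (k : ℝ)) φ) ρ :=
  hasDerivAt_weightedMean (isPositiveWeight_bergmanWeight f₀ f₁ N t ρ)
    (hasDerivAt_bergmanWeight_slope f₀ f₁ t ρ) φ

theorem hasDerivAt_bergmanMean_time (hN : 1 ≤ N) (t ρ : ℝ) (φ : ℕ → ℝ) :
    HasDerivAt (fun s ↦ bergmanMean f₀ f₁ N s ρ φ)
      (-N * bergmanCov f₀ f₁ N t ρ (velocity f₀ f₁ N) φ) t :=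
  (hasDerivAt_weightedMean (w := fun s ↦ bergmanWeight f₀ f₁ N s ρ)
    (isPositiveWeight_bergmanWeight f₀ f₁ N t ρ)
    (hasDerivAt_bergmanWeight_time f₀ f₁ hN t ρ) φ).congr_deriv weightedCov_const_mul_left

end BergmanDerivatives

/-- The difference `φ_N - φ_t = (1 / N) log E_N` of the Bergman and the Monge–Ampère geodesic
potentials. -/
noncomputable def potentialDifference (f₀ f₁ : ℝ → ℝ) (N : ℕ) (t ρ : ℝ) : ℝ :=
  1 / N * Real.log (Ecal f₀ f₁ N t ρ)

theorem Gt_zero (f₀ f₁ : ℝ → ℝ) : Gt f₀ f₁ 0 = symplecticPotential f₀ := by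
  ext x
  simp [Gt, symplecticPotential]

theorem Gt_one (f₀ f₁ : ℝ → ℝ) : Gt f₀ f₁ 1 = symplecticPotential f₁ := by
  ext x
  simp [Gt, symplecticPotential]

section PotentialDifference

variable {f₀ f₁ : ℝ → ℝ} {N : ℕ} (hf₀ : ContDiff ℝ ∞ f₀) (hf₁ : ContDiff ℝ ∞ f₁) (hN : 1 ≤ N)
include hf₀ hf₁ hN

theorem QQ_rpow_mul_QQ_rpow {k : ℕ} (hk : k ≤ N) (t : ℝ) :
    QQ (Gt f₀ f₁ 0) N (k / N) ^ (1 - t) * QQ (Gt f₀ f₁ 1) N (k / N) ^ t =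
      2 * Real.pi * Real.exp
        ((1 - t) * Real.log (weightMass f₀ N k) + t * Real.log (weightMass f₁ N k)) := by
  have hpi : (0 : ℝ) < 2 * Real.pi := by positivity
  have hm₀ := weightMass_pos hf₀ N k
  have hm₁ := weightMass_pos hf₁ N k
  rw [Gt_zero, Gt_one, QQ_symplecticPotential hf₀ hN hk, QQ_symplecticPotential hf₁ hN hk,
    Real.mul_rpow hpi.le hm₀.le, Real.mul_rpow hpi.le hm₁.le, mul_mul_mul_comm,
    ← Real.rpow_add hpi, sub_add_cancel, Real.rpow_one, Real.rpow_def_of_pos hm₀,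
    Real.rpow_def_of_pos hm₁, ← Real.exp_add, mul_comm (1 - t), mul_comm t]

theorem Ecal_eq (t ρ : ℝ) : Ecal f₀ f₁ N t ρ =
    Real.exp (-(N * geodesicPotential f₀ f₁ t ρ)) / (2 * Real.pi) *
      ∑ k ∈ Finset.range (N + 1), bergmanWeight f₀ f₁ N t ρ k := by
  rw [Ecal, Finset.mul_sum]
  refine Finset.sum_congr rfl fun k hk ↦ ?_
  have : (N : ℝ) ≠ 0 := by positivity
  have hexponent : (N : ℝ) * (k / N * ρ - Leg (Gt f₀ f₁ t) (Icc 0 1) ρ) =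
      -(N * geodesicPotential f₀ f₁ t ρ) + k * ρ := by
    rw [show Leg (Gt f₀ f₁ t) (Icc 0 1) ρ = geodesicPotential f₀ f₁ t ρ from rfl]
    field_simp
    ring
  rw [QQ_rpow_mul_QQ_rpow hf₀ hf₁ hN (Nat.lt_succ_iff.1 (Finset.mem_range.1 hk)), hexponent,
    bergmanWeight, Real.exp_add, Real.exp_sub (k * ρ)]
  field_simp

theorem potentialDifference_eq (t ρ : ℝ) : potentialDifference f₀ f₁ N t ρ =
    (Real.log (∑ k ∈ Finset.range (N + 1), bergmanWeight f₀ f₁ N t ρ k) -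
      Real.log (2 * Real.pi)) / N - geodesicPotential f₀ f₁ t ρ := by
  have hsum := (isPositiveWeight_bergmanWeight f₀ f₁ N t ρ).sum_pos.ne'
  have : (N : ℝ) ≠ 0 := by positivity
  rw [potentialDifference, Ecal_eq hf₀ hf₁ hN, Real.log_mul (by positivity) hsum,
    Real.log_div (by positivity) (by positivity), Real.log_exp]
  field_simp
  ring

variable {t : ℝ} (ht : t ∈ convexTimes f₀ f₁)
include ht

theorem contDiffAt_potentialDifference (ρ : ℝ) :
    ContDiffAt ℝ ∞ (fun q : ℝ × ℝ ↦ potentialDifference f₀ f₁ N q.1 q.2) (t, ρ) := by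
  simp only [potentialDifference_eq hf₀ hf₁ hN]
  exact (((contDiff_log_sum_bergmanWeight f₀ f₁ N).contDiffAt.sub contDiffAt_const).div_const
    _).sub (contDiffAt_geodesicPotential hf₀ hf₁ ht ρ)

theorem hasDerivAt_potentialDifference_slope (ρ : ℝ) :
    HasDerivAt (fun r ↦ potentialDifference f₀ f₁ N t r)
      (bergmanMean f₀ f₁ N t ρ (fun k ↦ (k : ℝ) / N) - momentPath f₀ f₁ t ρ) ρ := by
  simp only [potentialDifference_eq hf₀ hf₁ hN]
  refine ((((hasDerivAt_log_sum_bergmanWeight_slope f₀ f₁ t ρ).sub_const _).div_const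
    (N : ℝ)).fun_sub (hasDerivAt_geodesicPotential_slope hf₀ hf₁ ht ρ)).congr_deriv ?_
  simp only [bergmanMean, div_eq_inv_mul, weightedMean_const_mul]

theorem hasDerivAt_potentialDifference_time (ρ : ℝ) :
    HasDerivAt (fun s ↦ potentialDifference f₀ f₁ N s ρ)
      (-(bergmanMean f₀ f₁ N t ρ (velocity f₀ f₁ N) - (f₁ - f₀) (momentPath f₀ f₁ t ρ))) t := by
  have : (N : ℝ) ≠ 0 := by positivity
  simp only [potentialDifference_eq hf₀ hf₁ hN]
  refine ((((hasDerivAt_log_sum_bergmanWeight_time f₀ f₁ hN t ρ).sub_const _).div_const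
    (N : ℝ)).fun_sub (hasDerivAt_geodesicPotential_time hf₀ hf₁ ht ρ)).congr_deriv ?_
  field_simp
  ring

theorem hasDerivAt_deriv_potentialDifference_slope (ρ : ℝ) :
    HasDerivAt (fun r ↦ deriv (fun u ↦ potentialDifference f₀ f₁ N t u) r)
      (N * bergmanCov f₀ f₁ N t ρ (fun k ↦ (k : ℝ) / N) (fun k ↦ (k : ℝ) / N) -
        1 / symplecticHessian (linearPath f₀ f₁ t) (momentPath f₀ f₁ t ρ)) ρ := by
  simp only [fun r ↦ (hasDerivAt_potentialDifference_slope hf₀ hf₁ hN ht r).deriv]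
  refine ((hasDerivAt_bergmanMean_slope f₀ f₁ t ρ _).fun_sub
    (hasDerivAt_momentPath_slope hf₀ hf₁ ht ρ)).congr_deriv ?_
  have : (N : ℝ) ≠ 0 := by positivity
  rw [bergmanCov, ← weightedCov_const_mul_left]
  simp only [mul_div_cancel₀ _ this]

theorem hasDerivAt_deriv_potentialDifference_slope_time (ρ : ℝ) :
    HasDerivAt (fun s ↦ deriv (fun u ↦ potentialDifference f₀ f₁ N s u) ρ)
      (-(N * bergmanCov f₀ f₁ N t ρ (velocity f₀ f₁ N) (fun k ↦ (k : ℝ) / N) -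
        deriv (f₁ - f₀) (momentPath f₀ f₁ t ρ) /
          symplecticHessian (linearPath f₀ f₁ t) (momentPath f₀ f₁ t ρ))) t := by
  refine (((hasDerivAt_bergmanMean_time f₀ f₁ hN t ρ fun k ↦ (k : ℝ) / N).fun_sub
    (hasDerivAt_momentPath_time hf₀ hf₁ ht ρ)).congr_deriv ?_).congr_of_eventuallyEq ?_
  · ring
  · filter_upwards [(isOpen_convexTimes hf₀ hf₁).mem_nhds ht] with s hs
    exact (hasDerivAt_potentialDifference_slope hf₀ hf₁ hN hs ρ).deriv

theorem hasDerivAt_deriv_potentialDifference_time (ρ : ℝ) :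
    HasDerivAt (fun s ↦ deriv (fun u ↦ potentialDifference f₀ f₁ N u ρ) s)
      (N * bergmanCov f₀ f₁ N t ρ (velocity f₀ f₁ N) (velocity f₀ f₁ N) -
        deriv (f₁ - f₀) (momentPath f₀ f₁ t ρ) ^ 2 /
          symplecticHessian (linearPath f₀ f₁ t) (momentPath f₀ f₁ t ρ)) t := by
  have hdiff : ContDiff ℝ ∞ (f₁ - f₀) := hf₁.sub hf₀
  have hlimit := (hasDerivAt_of_contDiff hdiff _).comp t (hasDerivAt_momentPath_time hf₀ hf₁ ht ρ)
  refine (((hasDerivAt_bergmanMean_time f₀ f₁ hN t ρ (velocity f₀ f₁ N)).fun_sub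
    hlimit).fun_neg.congr_deriv ?_).congr_of_eventuallyEq ?_
  · ring
  · filter_upwards [(isOpen_convexTimes hf₀ hf₁).mem_nhds ht] with s hs
    exact (hasDerivAt_potentialDifference_time hf₀ hf₁ hN hs ρ).deriv

end PotentialDifference

/-! ### Convergence of the potentials -/

namespace IsAdmissible

variable {f₀ f₁ : ℝ → ℝ} {c K : ℝ} (h₀ : IsAdmissible f₀ c K) (h₁ : IsAdmissible f₁ c K)
include h₀ h₁

theorem contDiffOn_potentialDifference {N : ℕ} (hN : 1 ≤ N) :
    ContDiffOn ℝ ∞ (fun q : ℝ × ℝ ↦ potentialDifference f₀ f₁ N q.1 q.2)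
      (Icc (0 : ℝ) 1 ×ˢ univ) := fun q hq ↦
  (contDiffAt_potentialDifference h₀.contDiff h₁.contDiff hN
    (h₀.mem_convexTimes h₁ hq.1) q.2).contDiffWithinAt

theorem momentWeight_momentPath {t : ℝ} (ht : t ∈ Icc (0 : ℝ) 1) (N : ℕ) (ρ : ℝ) :
    momentWeight f₀ f₁ N t (momentPath f₀ f₁ t ρ) = bergmanWeight f₀ f₁ N t ρ := by
  rw [momentWeight, symplecticGradient_momentPath h₀.contDiff h₁.contDiff
    (h₀.mem_convexTimes h₁ ht)]

theorem tendsto_comp_momentPath {F g : ℕ × ℝ × ℝ → ℝ}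
    (hg : Tendsto g (momentFilter (Ioo 0 1)) (𝓝 0))
    (hFg : ∀ N : ℕ, 1 ≤ N → ∀ t ∈ Icc (0 : ℝ) 1, ∀ ρ,
      F (N, t, ρ) = g (N, t, momentPath f₀ f₁ t ρ)) :
    Tendsto F (momentFilter univ) (𝓝 0) := by
  have hpath : Tendsto (fun p : ℕ × ℝ × ℝ ↦ (p.1, p.2.1, momentPath f₀ f₁ p.2.1 p.2.2))
      (momentFilter univ) (momentFilter (Ioo 0 1)) := fun s hs ↦
    eventually_momentFilter.2 ((eventually_momentFilter.1 hs).mono fun N hN t ht ρ _ ↦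
      hN t ht _ (momentPath_mem h₀.contDiff h₁.contDiff (h₀.mem_convexTimes h₁ ht) ρ))
  refine (hg.comp hpath).congr' ?_
  filter_upwards [eventually_mem_momentFilter univ] with p hp
  exact (hFg p.1 hp.1 p.2.1 hp.2.1 p.2.2).symm

theorem tendsto_potentialDifference :
    Tendsto (fun p : ℕ × ℝ × ℝ ↦ potentialDifference f₀ f₁ p.1 p.2.1 p.2.2)
      (momentFilter univ) (𝓝 0) := by
  have hconst : Tendsto (fun p : ℕ × ℝ × ℝ ↦ Real.log (2 * Real.pi) / p.1)
      (momentFilter (Ioo 0 1)) (𝓝 0) :=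
    tendsto_const_nhds.div_atTop (tendsto_natCast_atTop_atTop.comp tendsto_fst_momentFilter)
  refine h₀.tendsto_comp_momentPath h₁
    (by simpa only [sub_zero] using (h₀.tendsto_log_sum_momentWeight_sub h₁).sub hconst)
    fun N hN t ht ρ ↦ ?_
  have ht' := h₀.mem_convexTimes h₁ ht
  have hvalue := geodesicPotential_symplecticGradient h₀.contDiff h₁.contDiff ht'
    (momentPath_mem h₀.contDiff h₁.contDiff ht' ρ)
  rw [symplecticGradient_momentPath h₀.contDiff h₁.contDiff ht'] at hvalue
  have : (N : ℝ) ≠ 0 := by positivity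
  simp only [potentialDifference_eq h₀.contDiff h₁.contDiff hN, hvalue,
    h₀.momentWeight_momentPath h₁ ht]
  field_simp
  ring

theorem tendsto_deriv_potentialDifference_slope :
    Tendsto (fun p : ℕ × ℝ × ℝ ↦ deriv (fun r ↦ potentialDifference f₀ f₁ p.1 p.2.1 r) p.2.2)
      (momentFilter univ) (𝓝 0) :=
  h₀.tendsto_comp_momentPath h₁ (h₀.tendsto_mean_div_sub h₁) fun N hN t ht ρ ↦ by
    simp only [momentMean, h₀.momentWeight_momentPath h₁ ht]
    exact (hasDerivAt_potentialDifference_slope h₀.contDiff h₁.contDiff hN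
      (h₀.mem_convexTimes h₁ ht) ρ).deriv

theorem tendsto_deriv_potentialDifference_time :
    Tendsto (fun p : ℕ × ℝ × ℝ ↦ deriv (fun s ↦ potentialDifference f₀ f₁ p.1 s p.2.2) p.2.1)
      (momentFilter univ) (𝓝 0) := by
  refine h₀.tendsto_comp_momentPath h₁
    (by simpa only [neg_zero] using (h₀.tendsto_mean_velocity_sub h₁).neg) fun N hN t ht ρ ↦ ?_
  simp only [momentMean, h₀.momentWeight_momentPath h₁ ht]
  exact (hasDerivAt_potentialDifference_time h₀.contDiff h₁.contDiff hN
    (h₀.mem_convexTimes h₁ ht) ρ).deriv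

theorem tendsto_deriv_deriv_potentialDifference_slope :
    Tendsto (fun p : ℕ × ℝ × ℝ ↦
        deriv (fun r ↦ deriv (fun u ↦ potentialDifference f₀ f₁ p.1 p.2.1 u) r) p.2.2)
      (momentFilter univ) (𝓝 0) :=
  h₀.tendsto_comp_momentPath h₁ (h₀.tendsto_mul_cov_div_sub h₁) fun N hN t ht ρ ↦ by
    simp only [momentCov, h₀.momentWeight_momentPath h₁ ht]
    exact (hasDerivAt_deriv_potentialDifference_slope h₀.contDiff h₁.contDiff hN
      (h₀.mem_convexTimes h₁ ht) ρ).deriv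

theorem tendsto_deriv_deriv_potentialDifference_slope_time :
    Tendsto (fun p : ℕ × ℝ × ℝ ↦
        deriv (fun s ↦ deriv (fun u ↦ potentialDifference f₀ f₁ p.1 s u) p.2.2) p.2.1)
      (momentFilter univ) (𝓝 0) := by
  refine h₀.tendsto_comp_momentPath h₁
    (by simpa only [neg_zero] using (h₀.tendsto_mul_cov_velocity_div_sub h₁).neg)
    fun N hN t ht ρ ↦ ?_
  simp only [momentCov, h₀.momentWeight_momentPath h₁ ht]
  exact (hasDerivAt_deriv_potentialDifference_slope_time h₀.contDiff h₁.contDiff hN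
    (h₀.mem_convexTimes h₁ ht) ρ).deriv

theorem tendsto_deriv_deriv_potentialDifference_time :
    Tendsto (fun p : ℕ × ℝ × ℝ ↦
        deriv (fun s ↦ deriv (fun u ↦ potentialDifference f₀ f₁ p.1 u p.2.2) s) p.2.1)
      (momentFilter univ) (𝓝 0) :=
  h₀.tendsto_comp_momentPath h₁ (h₀.tendsto_mul_cov_velocity_self_sub h₁) fun N hN t ht ρ ↦ by
    simp only [momentCov, h₀.momentWeight_momentPath h₁ ht]
    exact (hasDerivAt_deriv_potentialDifference_time h₀.contDiff h₁.contDiff hN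
      (h₀.mem_convexTimes h₁ ht) ρ).deriv

theorem tendsto_iteratedDeriv_potentialDifference {a b : ℕ} (hab : a + b ≤ 2) :
    Tendsto (fun p : ℕ × ℝ × ℝ ↦ iteratedDeriv a
        (fun s ↦ iteratedDeriv b (potentialDifference f₀ f₁ p.1 s) p.2.2) p.2.1)
      (momentFilter univ) (𝓝 0) := by
  obtain ⟨rfl, rfl⟩ | ⟨rfl, rfl⟩ | ⟨rfl, rfl⟩ | ⟨rfl, rfl⟩ | ⟨rfl, rfl⟩ | ⟨rfl, rfl⟩ :
      a = 0 ∧ b = 0 ∨ a = 0 ∧ b = 1 ∨ a = 0 ∧ b = 2 ∨ a = 1 ∧ b = 0 ∨ a = 1 ∧ b = 1 ∨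
        a = 2 ∧ b = 0 := by omega
  all_goals simp only [iteratedDeriv_zero, iteratedDeriv_succ]
  exacts [h₀.tendsto_potentialDifference h₁, h₀.tendsto_deriv_potentialDifference_slope h₁,
    h₀.tendsto_deriv_deriv_potentialDifference_slope h₁,
    h₀.tendsto_deriv_potentialDifference_time h₁,
    h₀.tendsto_deriv_deriv_potentialDifference_slope_time h₁,
    h₀.tendsto_deriv_deriv_potentialDifference_time h₁]

end IsAdmissible

theorem exists_isAdmissible_of_iteratedDeriv_pos {f₀ f₁ : ℝ → ℝ} (hf₀ : ContDiff ℝ ∞ f₀)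
    (hf₁ : ContDiff ℝ ∞ f₁)
    (hG₀ : ∀ x ∈ Ioo (0 : ℝ) 1, 0 < iteratedDeriv 2 (symplecticPotential f₀) x)
    (hG₁ : ∀ x ∈ Ioo (0 : ℝ) 1, 0 < iteratedDeriv 2 (symplecticPotential f₁) x) :
    ∃ c K, IsAdmissible f₀ c K ∧ IsAdmissible f₁ c K := by
  obtain ⟨c₀, K₀, h₀⟩ := exists_isAdmissible hf₀ (hessRatio_pos_of_iteratedDeriv_pos hf₀ hG₀)
  obtain ⟨c₁, K₁, h₁⟩ := exists_isAdmissible hf₁ (hessRatio_pos_of_iteratedDeriv_pos hf₁ hG₁)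
  have hc : 0 < min c₀ c₁ := lt_min h₀.c_pos h₁.c_pos
  exact ⟨min c₀ c₁, max K₀ K₁, h₀.mono hc (min_le_left _ _) (le_max_left _ _),
    h₁.mono hc (min_le_right _ _) (le_max_right _ _)⟩

theorem bergman_cp1_C2_convergence
    (f0 f1 : ℝ → ℝ) (hf0 : ContDiff ℝ (⊤ : ℕ∞) f0) (hf1 : ContDiff ℝ (⊤ : ℕ∞) f1)
    (hG0 : ∀ x ∈ Set.Ioo (0:ℝ) 1, 0 < iteratedDeriv 2 (Gt f0 f1 0) x)
    (hG1 : ∀ x ∈ Set.Ioo (0:ℝ) 1, 0 < iteratedDeriv 2 (Gt f0 f1 1) x) :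
    (∀ N : ℕ, 1 ≤ N →
      ContDiffOn ℝ (⊤ : ℕ∞)
        (fun p : ℝ × ℝ => (1 / (N:ℝ)) * Real.log (Ecal f0 f1 N p.1 p.2))
        (Set.Icc (0:ℝ) 1 ×ˢ (Set.univ : Set ℝ))) ∧
    (∀ a b : ℕ, a + b ≤ 2 → ∀ ε : ℝ, 0 < ε → ∃ N₀ : ℕ, ∀ N : ℕ, N₀ ≤ N →
      ∀ t ∈ Set.Icc (0:ℝ) 1, ∀ ρ : ℝ,
        |iteratedDeriv a
            (fun s => iteratedDeriv b
              (fun r => (1 / (N:ℝ)) * Real.log (Ecal f0 f1 N s r)) ρ) t| < ε) := by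
  rw [Gt_zero] at hG0
  rw [Gt_one] at hG1
  obtain ⟨c, K, h₀, h₁⟩ := exists_isAdmissible_of_iteratedDeriv_pos hf0 hf1 hG0 hG1
  refine ⟨fun N hN ↦ h₀.contDiffOn_potentialDifference h₁ hN, fun a b hab ε hε ↦ ?_⟩
  have hsmall := Metric.tendsto_nhds.1 (h₀.tendsto_iteratedDeriv_potentialDifference h₁ hab) ε hε
  obtain ⟨N₀, hN₀⟩ := eventually_atTop.1 (eventually_momentFilter.1 hsmall)
  refine ⟨N₀, fun N hN t ht ρ ↦ ?_⟩
  have hbound := hN₀ N hN t ht ρ (mem_univ ρ)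
  rwa [Real.dist_0_eq_abs] at hbound
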